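/- arXiv:0709.2638 — 6 statements merged into one kernel-verified Lean document; each statement's English description precedes it below -/
import Mathlib

section
/- Let α ∈ (0,1) be irrational and x₀ ∈ [0,1), and let s be the Sturmian word with slope α and intercept x₀. Then s is a fixed point of some substitution φ over {0,1} different from the identity (i.e., φ(0) ≠ 0 or φ(1) ≠ 1 as words) if and only if the following three conditions hold: (i) α is a Sturm number; (ii) x₀ = p + qα for some rationals p, q; (iii) min(α′, 1−α′) ≤ p + qα′ ≤ max(α′, 1−α′), where α′ is the conjugate of α and p + qα′ is the conjugate x₀′ of x₀. -/
/-- The extension of a substitution `φ` to finite words, by concatenation. -/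
def substWord {A : Type*} (φ : A → List A) (w : List A) : List A := w.flatMap φ

/-- A right-infinite word `s : ℕ → A` is a fixed point of the substitution `φ`. -/
def IsFixedPointSubst {A : Type*} (φ : A → List A) (s : ℕ → A) : Prop :=
  ∃ k : ℕ → ℕ, StrictMono k ∧ k 0 = 0 ∧
    (∀ n, k (n + 1) = k n + (φ (s n)).length) ∧
    ∀ n, ∀ i, (h : i < (φ (s n)).length) → s (k n + i) = (φ (s n)).get ⟨i, h⟩

/-- The Sturmian word with slope `α` and intercept `x₀`:
`s n = ⌊(n+1)α + x₀⌋ − ⌊nα + x₀⌋ ∈ {0,1}`. -/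
noncomputable def sturmianWord (α x₀ : ℝ) (n : ℕ) : Fin 2 :=
  if ⌊((n : ℝ) + 1) * α + x₀⌋ - ⌊(n : ℝ) * α + x₀⌋ = 1 then 1 else 0

/-! Let `T` be the homothety centred at `x₀` whose ratio `μ` is the second eigenvalue of the
incidence matrix of `φ`. If `φ` fixes the Sturmian word `s`, then `T` takes the orbit point
`fract (n α + x₀)` to the orbit point at which the image of the `n`-th letter starts. Close to the
discontinuity `1 - α` of the coding, `s` reads `01` on one side and `10` on the other; as
`φ(01) ≠ φ(10)`, the map `T` must send `1 - α` to a lattice point `i - j α` with bounded `j`.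

With `β = α'`, the conjugate `i - j β` of a lattice point of `(0, 1)` never lies strictly between
`β` and `1 - β`, and the sign of `j` decides on which side it lies. Conjugating the equation
`T (1 - α) = i - j α` therefore confines `x₀'` to the interval between `β` and `1 - β`.

Conversely, a solution of Pell's equation yields a unimodular matrix with the eigenvectors `(1, α)`
and `(1, β)` whose homothety has lattice preimages of lattice points; then no discontinuity of a
block of length `|φ(l)|` falls into the `T`-image of the points coded by `l`, so that this block
depends on `l` only and defines `φ(l)`. -/

namespace SturmianSubstitution

open Set Filter Topology

section Words

variable {A : Type*}

theorem length_mul_count_of_append_comm [BEq A] (x : A) {u v : List A} (h : u ++ v = v ++ u) :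
    u.length * v.count x = v.length * u.count x := by
  induction hn : u.length + v.length using Nat.strong_induction_on generalizing u v with
  | _ N ih =>
    subst hn
    rcases u.eq_nil_or_concat with rfl | hu
    · simp
    rcases v.eq_nil_or_concat with rfl | hv
    · simp
    have hu : 0 < u.length := by grind
    have hv : 0 < v.length := by grind
    rcases List.append_eq_append_iff.1 h with ⟨w, rfl, hw⟩ | ⟨w, rfl, hw⟩
    · have hcomm : u.length * w.count x = w.length * u.count x :=
        ih _ (by simp only [List.length_append]; lia) hw rfl
      simp only [List.length_append, List.count_append]
      linarith
    · have hcomm : w.length * v.count x = v.length * w.count x :=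
        ih _ (by simp only [List.length_append]; lia) hw.symm rfl
      simp only [List.length_append, List.count_append]
      linarith

/-- The factor of length `m` of the right-infinite word `s` that starts at position `k`. -/
def factor (s : ℕ → A) (k m : ℕ) : List A := List.ofFn fun i : Fin m => s (k + i)

@[simp]
theorem length_factor (s : ℕ → A) (k m : ℕ) : (factor s k m).length = m := List.length_ofFn

theorem factor_congr {s t : ℕ → A} {k l m : ℕ} (h : ∀ i < m, s (k + i) = t (l + i)) :
    factor s k m = factor t l m :=
  congrArg List.ofFn (funext fun i => h i i.2)

theorem factor_add (s : ℕ → A) (k m m' : ℕ) :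
    factor s k (m + m') = factor s k m ++ factor s (k + m) m' := by
  simp [factor, List.ofFn_add, add_assoc]

/-- The position at which the image of the `n`-th letter of `s` starts in the image of `s`
under the substitution `φ`. -/
def blockStart (φ : A → List A) (s : ℕ → A) (n : ℕ) : ℕ :=
  ∑ i ∈ Finset.range n, (φ (s i)).length

theorem blockStart_succ (φ : A → List A) (s : ℕ → A) (n : ℕ) :
    blockStart φ s (n + 1) = blockStart φ s n + (φ (s n)).length :=
  Finset.sum_range_succ _ n

theorem factor_blockStart {φ : A → List A} {s : ℕ → A} (h : IsFixedPointSubst φ s) (n : ℕ) :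
    factor s (blockStart φ s n) (φ (s n)).length = φ (s n) := by
  obtain ⟨k, -, hk0, hk, hs⟩ := h
  have hk_eq : k = blockStart φ s := by
    ext n
    induction n with
    | zero => simp [hk0, blockStart]
    | succ n ih => rw [hk, ih, blockStart_succ]
  exact List.ext_get (length_factor ..) fun i _ hi => by simpa [factor, hk_eq] using hs n i hi

theorem isFixedPointSubst_of_factor_blockStart {φ : A → List A} {s : ℕ → A}
    (hφ : ∀ a, φ a ≠ [])
    (h : ∀ n, factor s (blockStart φ s n) (φ (s n)).length = φ (s n)) :
    IsFixedPointSubst φ s := by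
  refine ⟨blockStart φ s, strictMono_nat_of_lt_succ fun n => ?_, rfl, blockStart_succ φ s,
    fun n i hi => ?_⟩
  · rw [blockStart_succ]
    exact Nat.lt_add_of_pos_right (List.length_pos_iff.2 (hφ _))
  · have hget := List.getElem_of_eq (h n) (by simpa using hi)
    simpa [factor] using hget

end Words

section SturmianWords

variable {α x : ℝ}

theorem floor_succ_mul_add (hα : α ∈ Ioo (0 : ℝ) 1) (x : ℝ) (n : ℕ) :
    ⌊((n + 1 : ℕ) : ℝ) * α + x⌋ = ⌊(n : ℝ) * α + x⌋ + (sturmianWord α x n : ℕ) := by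
  have hle : ⌊(n : ℝ) * α + x⌋ ≤ ⌊((n : ℝ) + 1) * α + x⌋ :=
    Int.floor_le_floor (by linarith [hα.1])
  have hge : ⌊((n : ℝ) + 1) * α + x⌋ ≤ ⌊(n : ℝ) * α + x⌋ + 1 := by
    rw [← Int.floor_add_one]
    exact Int.floor_le_floor (by linarith [hα.2])
  unfold sturmianWord
  push_cast
  split_ifs with h <;> simp only [Fin.val_one, Fin.val_zero, Nat.cast_one, Nat.cast_zero] <;> lia

theorem fract_succ_mul_add (hα : α ∈ Ioo (0 : ℝ) 1) (x : ℝ) (n : ℕ) :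
    Int.fract (((n + 1 : ℕ) : ℝ) * α + x) =
      Int.fract ((n : ℝ) * α + x) + (α - (sturmianWord α x n : ℕ)) := by
  simp only [← Int.self_sub_floor, floor_succ_mul_add hα]
  push_cast
  ring

theorem sturmianWord_eq_zero (hα : α ∈ Ioo (0 : ℝ) 1) {n : ℕ}
    (h : Int.fract ((n : ℝ) * α + x) < 1 - α) : sturmianWord α x n = 0 := by
  by_contra h0
  have h1 : sturmianWord α x n = 1 := by lia
  have hfract := fract_succ_mul_add hα x n
  rw [h1, Fin.val_one, Nat.cast_one] at hfract
  linarith [Int.fract_nonneg (((n + 1 : ℕ) : ℝ) * α + x)]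

theorem sturmianWord_eq_one (hα : α ∈ Ioo (0 : ℝ) 1) {n : ℕ}
    (h : 1 - α ≤ Int.fract ((n : ℝ) * α + x)) : sturmianWord α x n = 1 := by
  by_contra h1
  have h0 : sturmianWord α x n = 0 := by lia
  have hfract := fract_succ_mul_add hα x n
  rw [h0, Fin.val_zero, Nat.cast_zero] at hfract
  linarith [Int.fract_lt_one (((n + 1 : ℕ) : ℝ) * α + x)]

theorem sturmianWord_add (α x : ℝ) (k i : ℕ) :
    sturmianWord α x (k + i) = sturmianWord α (Int.fract ((k : ℝ) * α + x)) i := by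
  have hshift (t : ℝ) : ⌊(k + t) * α + x⌋ =
      ⌊t * α + Int.fract ((k : ℝ) * α + x)⌋ + ⌊(k : ℝ) * α + x⌋ := by
    rw [← Int.floor_add_intCast, ← Int.self_sub_floor]
    ring_nf
  simp only [sturmianWord, Nat.cast_add, add_assoc, hshift, add_sub_add_right_eq_sub]

theorem factor_sturmianWord_congr {u v : ℝ} {m : ℕ}
    (h : ∀ j ≤ m, ⌊(j : ℝ) * α + u⌋ = ⌊(j : ℝ) * α + v⌋) :
    factor (sturmianWord α u) 0 m = factor (sturmianWord α v) 0 m :=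
  factor_congr fun i hi => by
    have hsucc := h (i + 1) hi
    push_cast at hsucc
    simp only [sturmianWord, zero_add, h i hi.le, hsucc]

theorem factor_sturmianWord (α x : ℝ) (k m : ℕ) :
    factor (sturmianWord α x) k m =
      factor (sturmianWord α (Int.fract ((k : ℝ) * α + x))) 0 m :=
  factor_congr fun i _ => by rw [sturmianWord_add, zero_add]

theorem floor_add_factor (hα : α ∈ Ioo (0 : ℝ) 1) (x : ℝ) (k m : ℕ) :
    ⌊((k + m : ℕ) : ℝ) * α + x⌋ =
      ⌊(k : ℝ) * α + x⌋ + (factor (sturmianWord α x) k m).count 1 := by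
  induction m with
  | zero => simp [factor]
  | succ m ih =>
    have hletter : ∀ l : Fin 2, [l].count 1 = (l : ℕ) := by decide
    rw [← add_assoc, floor_succ_mul_add hα, ih, factor_add, List.count_append, add_assoc]
    simp [factor, hletter]

theorem eventually_factor_sturmianWord_eq {t : ℝ} {m : ℕ}
    (h : ∀ j ≤ m, ∀ i : ℤ, (j : ℝ) * α + t ≠ i) :
    ∀ᶠ u in 𝓝 t, factor (sturmianWord α u) 0 m = factor (sturmianWord α t) 0 m := by
  have hfloor : ∀ j ∈ Finset.range (m + 1),
      ∀ᶠ u in 𝓝 t, ⌊(j : ℝ) * α + u⌋ = ⌊(j : ℝ) * α + t⌋ := fun j hj => by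
    have hlt : (⌊(j : ℝ) * α + t⌋ : ℝ) < j * α + t :=
      (Int.floor_le _).lt_of_ne (h j (Finset.mem_range_succ_iff.1 hj) _).symm
    have hcont : Tendsto (fun u : ℝ => (j : ℝ) * α + u) (𝓝 t) (𝓝 (j * α + t)) :=
      tendsto_const_nhds.add tendsto_id
    filter_upwards [hcont.eventually (Ioo_mem_nhds hlt (Int.lt_floor_add_one _))] with u hu
    exact Int.floor_eq_iff.2 ⟨hu.1.le, hu.2⟩
  filter_upwards [(Filter.eventually_all_finset _).2 hfloor] with u hu
  exact factor_sturmianWord_congr fun j hj => hu j (Finset.mem_range_succ_iff.2 hj)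

theorem exists_fract_mem_Ioo (hirr : Irrational α) (x : ℝ) {u v : ℝ} (hu : 0 ≤ u) (huv : u < v)
    (hv : v ≤ 1) : ∃ n : ℕ, Int.fract ((n : ℝ) * α + x) ∈ Ioo u v := by
  have hdense : DenseRange fun n : ℕ => n • (α : AddCircle (1 : ℝ)) := by
    rw [← denseRange_zsmul_iff_nsmul, AddCircle.denseRange_zsmul_coe_iff]
    simpa using hirr
  have hopen : IsOpen ((fun z : ℝ => (z : AddCircle (1 : ℝ))) '' Ioo (u - x) (v - x)) :=
    QuotientAddGroup.isOpenMap_coe _ isOpen_Ioo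
  obtain ⟨n, z, hz, hnz⟩ := hdense.exists_mem_open hopen ((nonempty_Ioo.2 (by linarith)).image _)
  obtain ⟨N, hN⟩ : ∃ N : ℤ, N • (1 : ℝ) = z - n • α := by
    rwa [← AddCircle.coe_eq_zero_iff, AddCircle.coe_sub, sub_eq_zero, AddCircle.coe_nsmul]
  simp only [nsmul_eq_mul, zsmul_eq_mul, mul_one] at hN
  have hfract : Int.fract ((n : ℝ) * α + x) = z + x :=
    Int.fract_eq_iff.2 ⟨by linarith [hz.1], by linarith [hz.2], -N, by push_cast; linarith⟩
  exact ⟨n, by rw [hfract]; constructor <;> linarith [hz.1, hz.2]⟩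

theorem exists_fract_of_eventually_nhdsLT (hirr : Irrational α) (x : ℝ) {t : ℝ}
    (ht : t ∈ Ioc (0 : ℝ) 1) {P : ℝ → Prop} (hP : ∀ᶠ y in 𝓝[<] t, P y) :
    ∃ n : ℕ, P (Int.fract ((n : ℝ) * α + x)) := by
  obtain ⟨l, hlt, hl⟩ := mem_nhdsLT_iff_exists_Ioo_subset.1 hP
  obtain ⟨n, hn⟩ :=
    exists_fract_mem_Ioo hirr x (le_max_left 0 l) (max_lt ht.1 hlt) ht.2
  exact ⟨n, hl ⟨(le_max_right 0 l).trans_lt hn.1, hn.2⟩⟩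

theorem exists_fract_of_eventually_nhdsGT (hirr : Irrational α) (x : ℝ) {t : ℝ}
    (ht : t ∈ Ico (0 : ℝ) 1) {P : ℝ → Prop} (hP : ∀ᶠ y in 𝓝[>] t, P y) :
    ∃ n : ℕ, P (Int.fract ((n : ℝ) * α + x)) := by
  obtain ⟨r, htr, hr⟩ := mem_nhdsGT_iff_exists_Ioo_subset.1 hP
  obtain ⟨n, hn⟩ :=
    exists_fract_mem_Ioo hirr x ht.1 (lt_min ht.2 htr) (min_le_left 1 r)
  exact ⟨n, hr ⟨hn.1, hn.2.trans_le (min_le_right 1 r)⟩⟩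

theorem Icc_subset_closure_range_fract (hirr : Irrational α) (x : ℝ) :
    Icc (0 : ℝ) 1 ⊆ closure (range fun n : ℕ => Int.fract ((n : ℝ) * α + x)) := by
  rw [← closure_Ioo zero_ne_one]
  refine closure_minimal (fun z hz => mem_closure_iff_nhds.2 fun U hU => ?_) isClosed_closure
  obtain ⟨n, hn⟩ := exists_fract_of_eventually_nhdsLT hirr x ⟨hz.1, hz.2.le⟩
    (mem_nhdsWithin_of_mem_nhds hU)
  exact ⟨_, hn, n, rfl⟩

theorem exists_sturmianWord_zero_one_near (hirr : Irrational α) (hα : α ∈ Ioo (0 : ℝ) 1) (x : ℝ)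
    {P : ℝ → Prop} (hP : ∀ᶠ y in 𝓝 (1 - α), P y) :
    ∃ n : ℕ, P (Int.fract ((n : ℝ) * α + x)) ∧
      sturmianWord α x n = 0 ∧ sturmianWord α x (n + 1) = 1 := by
  have hlarge : ∀ᶠ y in 𝓝 (1 - α), 1 - 2 * α < y := eventually_gt_nhds (by linarith [hα.1])
  obtain ⟨n, ⟨hPn, hn⟩, hlt⟩ := exists_fract_of_eventually_nhdsLT hirr x
    ⟨by linarith [hα.2], by linarith [hα.1]⟩
    (((hP.and hlarge).filter_mono nhdsWithin_le_nhds).and self_mem_nhdsWithin)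
  have h0 : sturmianWord α x n = 0 := sturmianWord_eq_zero hα hlt
  refine ⟨n, hPn, h0, sturmianWord_eq_one hα ?_⟩
  rw [fract_succ_mul_add hα, h0, Fin.val_zero, Nat.cast_zero]
  linarith

theorem exists_sturmianWord_one_zero_near (hirr : Irrational α) (hα : α ∈ Ioo (0 : ℝ) 1) (x : ℝ)
    {P : ℝ → Prop} (hP : ∀ᶠ y in 𝓝 (1 - α), P y) :
    ∃ n : ℕ, P (Int.fract ((n : ℝ) * α + x)) ∧
      sturmianWord α x n = 1 ∧ sturmianWord α x (n + 1) = 0 := by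
  have hsmall : ∀ᶠ y in 𝓝 (1 - α), y < 2 - 2 * α := eventually_lt_nhds (by linarith [hα.2])
  obtain ⟨n, ⟨hPn, hn⟩, hgt⟩ := exists_fract_of_eventually_nhdsGT hirr x
    ⟨by linarith [hα.2], by linarith [hα.1]⟩
    (((hP.and hsmall).filter_mono nhdsWithin_le_nhds).and self_mem_nhdsWithin)
  have h1 : sturmianWord α x n = 1 := sturmianWord_eq_one hα (mem_Ioi.1 hgt).le
  refine ⟨n, hPn, h1, sturmianWord_eq_zero hα ?_⟩
  rw [fract_succ_mul_add hα, h1, Fin.val_one, Nat.cast_one]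
  linarith

end SturmianWords

section Homothety

variable {x μ : ℝ}

theorem homothety_real_apply (x μ z : ℝ) : AffineMap.homothety x μ z = x + μ * (z - x) := by
  simp only [AffineMap.homothety_apply, vsub_eq_sub, smul_eq_mul, vadd_eq_add, add_comm]

theorem homothety_real_add (x μ z t : ℝ) :
    AffineMap.homothety x μ (z + t) = AffineMap.homothety x μ z + μ * t := by
  simp only [homothety_real_apply]
  ring

theorem abs_le_one_of_mapsTo_homothety
    (h : MapsTo (AffineMap.homothety x μ) (Icc (0 : ℝ) 1) (Icc 0 1)) : |μ| ≤ 1 := by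
  have h0 := h (left_mem_Icc.2 zero_le_one)
  have h1 := h (right_mem_Icc.2 zero_le_one)
  rw [homothety_real_apply, mem_Icc] at h0 h1
  rw [abs_le]
  constructor <;> linarith

theorem mapsTo_homothety_Ioo (hμ : μ ≠ 0)
    (h : MapsTo (AffineMap.homothety x μ) (Icc (0 : ℝ) 1) (Icc 0 1)) :
    MapsTo (AffineMap.homothety x μ) (Ioo (0 : ℝ) 1) (Ioo 0 1) := by
  intro z hz
  have h0 := h (left_mem_Icc.2 zero_le_one)
  have h1 := h (right_mem_Icc.2 zero_le_one)
  rw [homothety_real_apply, mem_Icc] at h0 h1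
  rw [homothety_real_apply, mem_Ioo]
  rcases lt_or_gt_of_ne hμ with hμ | hμ
  · have := mul_neg_of_neg_of_pos hμ hz.1
    have := mul_neg_of_neg_of_pos hμ (sub_pos.2 hz.2)
    constructor <;> linarith
  · have := mul_pos hμ hz.1
    have := mul_pos hμ (sub_pos.2 hz.2)
    constructor <;> linarith

theorem mapsTo_homothety_of_convex {S : Set ℝ} (hS : Convex ℝ S) (hx : x ∈ S)
    (hμ : μ ∈ Icc (0 : ℝ) 1) : MapsTo (AffineMap.homothety x μ) S S := fun z hz => by
  rw [AffineMap.homothety_eq_lineMap]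
  exact hS.lineMap_mem hx hz hμ

end Homothety

section Conjugates

variable {α β : ℝ}

-- The factor `1 - 2 * β` orients the interval between `β` and `1 - β`, so that the cases `β < 0`
-- and `1 < β` need not be told apart below.
theorem one_sub_two_mul_pos (hβ : β ∉ Icc (0 : ℝ) 1) :
    0 < (1 - 2 * β) * -β ∧ 0 < (1 - 2 * β) * (1 - β) := by
  rcases lt_or_ge β 0 with h0 | h0
  · constructor <;> nlinarith
  · have h1 : 1 < β := lt_of_not_ge fun h1 => hβ ⟨h0, h1⟩
    constructor <;> nlinarith

theorem conj_nonneg_of_pos (hα : α ∈ Ioo (0 : ℝ) 1) (hβ : β ∉ Icc (0 : ℝ) 1) {i j : ℤ}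
    (hz : (i : ℝ) - j * α ∈ Ioo (0 : ℝ) 1) (hj : 0 < j) :
    0 ≤ (1 - 2 * β) * (i - j * β - (1 - β)) := by
  obtain ⟨hβ0, hβ1⟩ := one_sub_two_mul_pos hβ
  have hj' : (1 : ℝ) ≤ j := by exact_mod_cast hj
  have hi : (1 : ℝ) ≤ i := by
    have hpos : (0 : ℝ) < i := by nlinarith [hz.1, hα.1]
    exact_mod_cast hpos
  have hij : (i : ℝ) ≤ j := by
    have hlt : (i : ℝ) < j + 1 := by nlinarith [hz.2, hα.2]
    exact_mod_cast Int.lt_add_one_iff.1 (by exact_mod_cast hlt)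
  calc 0 ≤ (i - 1) * ((1 - 2 * β) * (1 - β)) + (j - i) * ((1 - 2 * β) * -β) :=
        add_nonneg (mul_nonneg (by linarith) hβ1.le) (mul_nonneg (by linarith) hβ0.le)
    _ = (1 - 2 * β) * (i - j * β - (1 - β)) := by ring

theorem conj_nonneg_of_neg (hα : α ∈ Ioo (0 : ℝ) 1) (hβ : β ∉ Icc (0 : ℝ) 1) {i j : ℤ}
    (hz : (i : ℝ) - j * α ∈ Ioo (0 : ℝ) 1) (hj : j < 0) :
    0 ≤ (1 - 2 * β) * (β - (i - j * β)) := by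
  have hreflect := conj_nonneg_of_pos (i := 1 - i) (j := -j) hα hβ
    (by push_cast; constructor <;> linarith [hz.1, hz.2]) (by lia)
  push_cast at hreflect
  linarith

theorem index_ne_zero {i j : ℤ} (hz : (i : ℝ) - j * α ∈ Ioo (0 : ℝ) 1) : j ≠ 0 := by
  rintro rfl
  rw [Int.cast_zero, zero_mul, sub_zero] at hz
  have h0 : 0 < i := by exact_mod_cast hz.1
  have h1 : i < 1 := by exact_mod_cast hz.2
  lia

theorem index_pos (hα : α ∈ Ioo (0 : ℝ) 1) (hβ : β ∉ Icc (0 : ℝ) 1) {i j : ℤ}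
    (hz : (i : ℝ) - j * α ∈ Ioo (0 : ℝ) 1) (h : 0 < (1 - 2 * β) * (i - j * β - β)) : 0 < j := by
  refine (index_ne_zero hz).lt_or_gt.resolve_left fun hj => ?_
  linarith [conj_nonneg_of_neg hα hβ hz hj]

theorem index_neg (hα : α ∈ Ioo (0 : ℝ) 1) (hβ : β ∉ Icc (0 : ℝ) 1) {i j : ℤ}
    (hz : (i : ℝ) - j * α ∈ Ioo (0 : ℝ) 1) (h : 0 < (1 - 2 * β) * (1 - β - (i - j * β))) :
    j < 0 := by
  refine (index_ne_zero hz).lt_or_gt.resolve_right fun hj => ?_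
  linarith [conj_nonneg_of_pos hα hβ hz hj]

theorem mem_uIcc_iff_mul_nonneg {u v y : ℝ} (huv : u ≠ v) :
    y ∈ uIcc u v ↔ 0 ≤ (v - u) * (y - u) ∧ 0 ≤ (v - u) * (v - y) := by
  rcases lt_or_gt_of_ne huv with h | h
  · have h' := sub_pos.2 h
    rw [uIcc_of_le h.le, mul_nonneg_iff_of_pos_left h', mul_nonneg_iff_of_pos_left h', sub_nonneg,
      sub_nonneg, mem_Icc]
  · have h' := sub_pos.2 h
    rw [uIcc_of_ge h.le, ← neg_mul_neg (v - u) (y - u), ← neg_mul_neg (v - u) (v - y), neg_sub,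
      neg_sub, neg_sub, mul_nonneg_iff_of_pos_left h', mul_nonneg_iff_of_pos_left h', sub_nonneg,
      sub_nonneg, mem_Icc, and_comm]

theorem mem_uIcc_conj_iff (hβ : β ∉ Icc (0 : ℝ) 1) {y : ℝ} :
    y ∈ uIcc β (1 - β) ↔
      0 ≤ (1 - 2 * β) * (y - β) ∧ 0 ≤ (1 - 2 * β) * (1 - β - y) := by
  have hne : β ≠ 1 - β := fun h => hβ (by constructor <;> linarith)
  rw [mem_uIcc_iff_mul_nonneg hne, show 1 - β - β = 1 - 2 * β by ring]

theorem exists_rat_conj_div {σ π : ℚ} (hadd : α + β = σ) (hmul : α * β = π) {s t u v : ℤ}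
    (hα : (u : ℝ) + v * α ≠ 0) (hβ : (u : ℝ) + v * β ≠ 0) :
    ∃ p q : ℚ, (p + q * α) * (u + v * α) = s + t * α ∧
      (p + q * β) * (u + v * β) = s + t * β := by
  set N : ℚ := u ^ 2 + u * v * σ + v ^ 2 * π with hN
  have hnorm : (N : ℝ) = (u + v * α) * (u + v * β) := by
    push_cast [hN]
    rw [← hadd, ← hmul]
    ring
  have hN0 : (N : ℝ) ≠ 0 := hnorm ▸ mul_ne_zero hα hβ
  refine ⟨(s * (u + v * σ) + t * v * π) / N, (t * u - s * v) / N, ?_, ?_⟩ <;>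
  · push_cast
    field_simp
    rw [hnorm, ← hadd, ← hmul]
    ring

end Conjugates


section EigenSlopes

/-- The integer matrix `!![a, b; c, d]` has the eigenvectors `(1, α)` and `(1, β)`, that is, `α`
and `β` are the two roots of `b X² + (a - d) X - c`. The eigenvalue belonging to `α` is
`a + b α = d - b β`. -/
structure EigenSlopes (a b c d : ℤ) (α β : ℝ) : Prop where
  add : b * (α + β) = d - a
  mul : b * (α * β) = -c

variable {a b c d : ℤ} {α β : ℝ}

theorem one_lt_eigenvalue (hα : α ∈ Ioo (0 : ℝ) 1) (hb : b ≠ 0)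
    (ha : 0 < a) (hab : 0 < a + b) : 1 < a + b * α := by
  rw [show (a : ℝ) + b * α = a * (1 - α) + (a + b) * α by ring]
  have h1α : 0 < 1 - α := sub_pos.2 hα.2
  have ha' : (1 : ℝ) ≤ a := by exact_mod_cast ha
  have hab' : (1 : ℝ) ≤ a + b := by exact_mod_cast hab
  rcases (by lia : 1 < a ∨ 1 < a + b) with h2 | h2
  · have h2' : (1 : ℝ) < a := by exact_mod_cast h2
    nlinarith [hα.1]
  · have h2' : (1 : ℝ) < a + b := by exact_mod_cast h2
    nlinarith [hα.1]

namespace EigenSlopes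

theorem symm (h : EigenSlopes a b c d α β) : EigenSlopes a b c d β α :=
  ⟨add_comm α β ▸ h.add, mul_comm α β ▸ h.mul⟩

theorem of_eigenvector (hb : b ≠ 0) (h : (a + b * α) * α = c + d * α) :
    EigenSlopes a b c d α (-((a - d : ℤ) : ℝ) / b - α) := by
  have hb' : (b : ℝ) ≠ 0 := by exact_mod_cast hb
  constructor <;> push_cast <;> field_simp <;> linarith

theorem conj_eq (h : EigenSlopes a b c d α β) (hb : b ≠ 0) :
    β = -((a - d : ℤ) : ℝ) / b - α := by
  have hb' : (b : ℝ) ≠ 0 := by exact_mod_cast hb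
  push_cast
  field_simp
  linarith [h.add]

theorem eigenvalue_eq (h : EigenSlopes a b c d α β) : a + b * α = d - b * β := by
  linarith [h.add]

theorem eigenvector (h : EigenSlopes a b c d α β) : (a + b * α) * α = c + d * α := by
  linear_combination α * h.add - h.mul

theorem sub_eq (h : EigenSlopes a b c d α β) (l : ℝ) :
    (a + b * l) * α - (c + d * l) = (d - b * α) * (α - l) := by
  linear_combination h.eigenvector

theorem eigenvalue_mul (h : EigenSlopes a b c d α β) (i j : ℤ) :
    (a + b * α) * (i - j * α) = (a * i - c * j : ℤ) - (d * j - b * i : ℤ) * α := by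
  push_cast
  linear_combination -j * h.eigenvector

theorem pos (h : EigenSlopes a b c d α β) (hα : α ∈ Ioo (0 : ℝ) 1) (hβ : β ∉ Icc (0 : ℝ) 1)
    (hμ : d - b * α ∈ Ioo (0 : ℝ) 1) (hpos : 0 < a + b * α) : 0 < a ∧ 0 < a + b := by
  obtain ⟨hβ0, hβ1⟩ := one_sub_two_mul_pos hβ
  have hpos' : 0 < d - b * β := h.eigenvalue_eq ▸ hpos
  constructor
  · refine index_pos (i := c + 1) hα hβ ?_ ?_ <;> push_cast
    · have hμα := mul_pos hμ.1 hα.1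
      have hμα_lt := mul_lt_one_of_nonneg_of_lt_one_left hμ.1.le hμ.2 hα.2.le
      constructor <;> linarith [h.sub_eq 0]
    · linear_combination mul_pos hpos' hβ0 + hβ1 + (1 - 2 * β) * h.symm.sub_eq 0
  · refine index_pos (i := c + d) hα hβ ?_ ?_ <;> push_cast
    · have hμα := mul_pos hμ.1 (sub_pos.2 hα.2)
      have hμα_lt := mul_lt_one_of_nonneg_of_lt_one_left hμ.1.le hμ.2 (sub_le_self 1 hα.1.le)
      constructor <;> linarith [h.sub_eq 1]
    · linear_combination mul_pos hpos' hβ1 + hβ0 + (1 - 2 * β) * h.symm.sub_eq 1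

theorem notMem_Icc (h : EigenSlopes a b c d α β) (ha : 0 < a) (hab : 0 < a + b)
    (hlt : d - b * α < 1) : β ∉ Icc (0 : ℝ) 1 := by
  intro hβ
  have ha' : (1 : ℝ) ≤ a := by exact_mod_cast ha
  have hab' : (1 : ℝ) ≤ a + b := by exact_mod_cast hab
  have h0 := mul_le_mul_of_nonneg_right ha' (sub_nonneg.2 hβ.2)
  have h1 := mul_le_mul_of_nonneg_right hab' hβ.1
  linarith [h.symm.eigenvalue_eq]

theorem det_ne (h : EigenSlopes a b c d α β) (hirr : Irrational α) (hb : b ≠ 0) :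
    a * d ≠ b * c := by
  intro hdet
  have hdet' : (a : ℝ) * d = b * c := by exact_mod_cast hdet
  have hprod : (a + b * α) * (d - b * α) = 0 := by
    linear_combination hdet' - b * h.eigenvector
  exact mul_ne_zero ((hirr.intCast_mul hb).intCast_add a).ne_zero
    ((hirr.intCast_mul hb).intCast_sub d).ne_zero hprod

theorem exists_rat_homothety {x : ℝ} (h : EigenSlopes a b c d α β) (hb : b ≠ 0)
    (hμ : d - b * α ≠ 1) (hν : d - b * β ≠ 1) {i j : ℤ}
    (hx : AffineMap.homothety x (d - b * α) (1 - α) = i - j * α) :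
    ∃ p q : ℚ, x = p + q * α ∧
      AffineMap.homothety (p + q * β : ℝ) (d - b * β) (1 - β) = i - j * β := by
  have hb' : (b : ℝ) ≠ 0 := by exact_mod_cast hb
  have hα : ((1 - d : ℤ) : ℝ) + b * α ≠ 0 := fun h0 => hμ (by push_cast at h0; linarith)
  have hβ : ((1 - d : ℤ) : ℝ) + b * β ≠ 0 := fun h0 => hν (by push_cast at h0; linarith)
  obtain ⟨p, q, hpα, hpβ⟩ := exists_rat_conj_div
    (σ := (d - a) / b) (π := -c / b) (s := i - c - d) (t := a + b - j)
    (by push_cast; rw [← h.add]; field_simp) (by push_cast; rw [← h.mul]; field_simp) hα hβ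
  refine ⟨p, q, mul_right_cancel₀ hα ?_, ?_⟩
  · rw [hpα]
    rw [homothety_real_apply] at hx
    push_cast
    linear_combination hx - h.eigenvector
  · rw [homothety_real_apply]
    push_cast at hpβ
    linear_combination hpβ + h.symm.eigenvector

theorem homothety_add_sub {x w : ℝ} (h : EigenSlopes a b c d α β) {i j : ℤ}
    (hw : AffineMap.homothety x (d - b * α) w = i - j * α) (l : ℤ) :
    AffineMap.homothety x (d - b * α) (w + (α - l)) =
      ((i - (c + d * l) : ℤ) : ℝ) - (j - (a + b * l) : ℤ) * α := by
  rw [homothety_real_add, hw, ← h.sub_eq]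
  push_cast
  ring

theorem exists_lattice_preimage {x x' : ℝ} (h : EigenSlopes a b c d α β)
    (hunit : (a + b * α) * (d - b * α) = 1) {g k : ℤ} (hg : x * (1 - (a + b * α)) = g + k * α)
    (hg' : x' * (1 - (a + b * β)) = g + k * β) {i j : ℤ} {w : ℝ}
    (hw : AffineMap.homothety x (d - b * α) w = i - j * α) :
    ∃ i' j' : ℤ, w = i' - j' * α ∧
      AffineMap.homothety x' (d - b * α) (i - j * β : ℝ) = i' - j' * β := by
  refine ⟨g + (a * i - c * j), d * j - b * i - k, ?_, ?_⟩
  · rw [homothety_real_apply] at hw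
    have hmul := h.eigenvalue_mul i j
    push_cast at hmul ⊢
    linear_combination hg + (a + b * α) * hw + (x - w) * hunit + hmul
  · rw [homothety_real_apply]
    have hmul := h.symm.eigenvalue_mul i j
    push_cast at hmul ⊢
    linear_combination hg' + hmul - (i - j * β - x') * h.symm.eigenvalue_eq

theorem mem_uIcc_of_homothety {x' : ℝ} (h : EigenSlopes a b c d α β) (hα : α ∈ Ioo (0 : ℝ) 1)
    (hβ : β ∉ Icc (0 : ℝ) 1) (hlt : 1 < a + b * α) {i j : ℤ} (hj : 0 < j) (hj' : j < 2 * a + b)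
    (hz : (i : ℝ) - j * α ∈ Ioo (0 : ℝ) 1)
    (hz' : ((i - (2 * c + d) : ℤ) : ℝ) - (j - (2 * a + b) : ℤ) * α ∈ Ioo (0 : ℝ) 1)
    (hx' : AffineMap.homothety x' (d - b * β) (1 - β) = i - j * β) : x' ∈ uIcc β (1 - β) := by
  have hpos := conj_nonneg_of_pos hα hβ hz hj
  have hneg := conj_nonneg_of_neg hα hβ hz' (by lia)
  rw [← h.eigenvalue_eq, homothety_real_apply] at hx'
  rw [mem_uIcc_conj_iff hβ]
  have hlt' := sub_pos.2 hlt
  constructor <;> refine nonneg_of_mul_nonneg_right ?_ hlt'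
  · refine hneg.trans_eq ?_
    push_cast
    linear_combination (1 - 2 * β) *
      (hx' - 2 * h.symm.sub_eq (1 / 2) + (2 * β - 1) * h.eigenvalue_eq)
  · refine hpos.trans_eq ?_
    linear_combination -(1 - 2 * β) * hx'

end EigenSlopes

end EigenSlopes

section Incidence

variable {φ : Fin 2 → List (Fin 2)} {a b c d : ℤ} {α x : ℝ}

/-- The substitution `φ` has the incidence data `a, b, c, d`: the word `φ l` has length `a + b l`
and contains the letter `1` exactly `c + d l` times. In the coordinates (length, number of ones) the
incidence matrix of `φ` is thus `!![a, b; c, d]`. -/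
structure HasIncidence (φ : Fin 2 → List (Fin 2)) (a b c d : ℤ) : Prop where
  length : ∀ l : Fin 2, ((φ l).length : ℤ) = a + b * (l : ℕ)
  count_one : ∀ l : Fin 2, ((φ l).count 1 : ℤ) = c + d * (l : ℕ)

theorem exists_hasIncidence (φ : Fin 2 → List (Fin 2)) : ∃ a b c d : ℤ, HasIncidence φ a b c d :=
  ⟨(φ 0).length, (φ 1).length - (φ 0).length, (φ 0).count 1, (φ 1).count 1 - (φ 0).count 1,
    by constructor <;> simp [Fin.forall_fin_two]⟩

theorem HasIncidence.pos (h : HasIncidence φ a b c d) (hφ : ∀ l, φ l ≠ []) : 0 < a ∧ 0 < a + b := by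
  have h0 := h.length 0
  have h1 := h.length 1
  have hpos0 := List.length_pos_iff.2 (hφ 0)
  have hpos1 := List.length_pos_iff.2 (hφ 1)
  simp only [Fin.val_zero, Fin.val_one, Nat.cast_zero, Nat.cast_one, mul_zero, mul_one] at h0 h1
  lia

theorem HasIncidence.eq_singleton (h : HasIncidence φ 1 0 0 1) (l : Fin 2) : φ l = [l] := by
  have hlen := h.length l
  have hcount := h.count_one l
  obtain ⟨m, hm⟩ := List.length_eq_one_iff.1 (by simpa using hlen)
  rw [hm] at hcount ⊢
  fin_cases l <;> fin_cases m <;> simp_all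

theorem ne_id_of_length (hlen : ∀ l : Fin 2, ((φ l).length : ℤ) = a + b * (l : ℕ)) (hb : b ≠ 0) :
    φ 0 ≠ [0] ∨ φ 1 ≠ [1] := by
  by_contra! hid
  have h0 := hlen 0
  have h1 := hlen 1
  simp only [hid.1, hid.2, List.length_singleton, Fin.val_zero, Fin.val_one, Nat.cast_zero,
    Nat.cast_one, mul_zero, mul_one] at h0 h1
  lia

theorem HasIncidence.append_ne_append (h : HasIncidence φ a b c d) (hdet : a * d ≠ b * c) :
    φ 0 ++ φ 1 ≠ φ 1 ++ φ 0 := fun hcomm => by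
  have hcount : ((φ 0).length : ℤ) * (φ 1).count 1 = (φ 1).length * (φ 0).count 1 := by
    exact_mod_cast length_mul_count_of_append_comm 1 hcomm
  simp only [h.length, h.count_one, Fin.val_zero, Fin.val_one, Nat.cast_zero, Nat.cast_one]
    at hcount
  exact hdet (by linarith)

theorem blockStart_sturmianWord (hα : α ∈ Ioo (0 : ℝ) 1) (hx : x ∈ Ico (0 : ℝ) 1)
    (hlen : ∀ l : Fin 2, ((φ l).length : ℤ) = a + b * (l : ℕ)) (n : ℕ) :
    (blockStart φ (sturmianWord α x) n : ℤ) = a * n + b * ⌊(n : ℝ) * α + x⌋ := by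
  induction n with
  | zero => simp [blockStart, Int.floor_eq_zero_iff.2 hx]
  | succ n ih =>
    rw [blockStart_succ, Nat.cast_add, ih, hlen, floor_succ_mul_add hα]
    push_cast
    ring

theorem blockStart_mul_add (hα : α ∈ Ioo (0 : ℝ) 1) (hx : x ∈ Ico (0 : ℝ) 1)
    (hlen : ∀ l : Fin 2, ((φ l).length : ℤ) = a + b * (l : ℕ)) (n : ℕ) :
    (blockStart φ (sturmianWord α x) n : ℝ) * α + x =
      AffineMap.homothety x (d - b * α) (Int.fract ((n : ℝ) * α + x)) +
        ((c * n + d * ⌊(n : ℝ) * α + x⌋ : ℤ) : ℝ) +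
        n * ((a + b * α) * α - (c + d * α)) := by
  have hstart : (blockStart φ (sturmianWord α x) n : ℝ) = a * n + b * ⌊(n : ℝ) * α + x⌋ := by
    exact_mod_cast blockStart_sturmianWord hα hx hlen n
  rw [hstart, homothety_real_apply, ← Int.self_sub_floor]
  push_cast
  ring

end Incidence

section Necessity

variable {φ : Fin 2 → List (Fin 2)} {a b c d : ℤ} {α x : ℝ}

theorem floor_blockStart (hα : α ∈ Ioo (0 : ℝ) 1) (hx : x ∈ Ico (0 : ℝ) 1)
    (hinc : HasIncidence φ a b c d) (hfix : IsFixedPointSubst φ (sturmianWord α x)) (n : ℕ) :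
    ⌊(blockStart φ (sturmianWord α x) n : ℝ) * α + x⌋ = c * n + d * ⌊(n : ℝ) * α + x⌋ := by
  induction n with
  | zero => simp [blockStart, Int.floor_eq_zero_iff.2 hx]
  | succ n ih =>
    rw [blockStart_succ, floor_add_factor hα, ih, factor_blockStart hfix, hinc.count_one,
      floor_succ_mul_add hα]
    push_cast
    ring

theorem fract_blockStart_eq_add (hα : α ∈ Ioo (0 : ℝ) 1) (hx : x ∈ Ico (0 : ℝ) 1)
    (hinc : HasIncidence φ a b c d) (hfix : IsFixedPointSubst φ (sturmianWord α x)) (n : ℕ) :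
    Int.fract ((blockStart φ (sturmianWord α x) n : ℝ) * α + x) =
      AffineMap.homothety x (d - b * α) (Int.fract ((n : ℝ) * α + x)) +
        n * ((a + b * α) * α - (c + d * α)) := by
  rw [← Int.self_sub_floor, floor_blockStart hα hx hinc hfix,
    blockStart_mul_add (c := c) (d := d) hα hx hinc.length]
  ring

theorem eigenvector_of_isFixedPointSubst (hα : α ∈ Ioo (0 : ℝ) 1) (hx : x ∈ Ico (0 : ℝ) 1)
    (hinc : HasIncidence φ a b c d) (hfix : IsFixedPointSubst φ (sturmianWord α x)) :
    (a + b * α) * α = c + d * α := by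
  by_contra hne
  set X : ℝ := (a + b * α) * α - (c + d * α) with hX
  have hbound (n : ℕ) : n * |X| ≤ 1 + |d - b * α| := by
    have hfract := fract_blockStart_eq_add hα hx hinc hfix n
    have hu := Int.fract_nonneg ((n : ℝ) * α + x)
    have hu' := Int.fract_lt_one ((n : ℝ) * α + x)
    have hv := Int.fract_nonneg ((blockStart φ (sturmianWord α x) n : ℝ) * α + x)
    have hv' := Int.fract_lt_one ((blockStart φ (sturmianWord α x) n : ℝ) * α + x)
    rw [homothety_real_apply, ← hX] at hfract
    generalize Int.fract ((n : ℝ) * α + x) = u at *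
    generalize Int.fract ((blockStart φ (sturmianWord α x) n : ℝ) * α + x) = v at *
    calc (n : ℝ) * |X| = |(v - x) - (d - b * α) * (u - x)| := by
          rw [← Nat.abs_cast n, ← abs_mul, hfract]
          ring_nf
      _ ≤ |v - x| + |d - b * α| * |u - x| := by
          rw [← abs_mul]
          exact abs_sub _ _
      _ ≤ 1 + |d - b * α| * 1 := by
          gcongr <;> rw [abs_le] <;> constructor <;> linarith [hx.1, hx.2]
      _ = 1 + |d - b * α| := by rw [mul_one]
  obtain ⟨n, hn⟩ := exists_lt_nsmul (abs_pos.2 (sub_ne_zero.2 hne)) (1 + |d - b * α|)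
  rw [nsmul_eq_mul] at hn
  exact (hbound n).not_gt hn

theorem fract_blockStart (hα : α ∈ Ioo (0 : ℝ) 1) (hx : x ∈ Ico (0 : ℝ) 1)
    (hinc : HasIncidence φ a b c d) (hfix : IsFixedPointSubst φ (sturmianWord α x)) (n : ℕ) :
    Int.fract ((blockStart φ (sturmianWord α x) n : ℝ) * α + x) =
      AffineMap.homothety x (d - b * α) (Int.fract ((n : ℝ) * α + x)) := by
  rw [fract_blockStart_eq_add hα hx hinc hfix,
    eigenvector_of_isFixedPointSubst hα hx hinc hfix, sub_self, mul_zero, add_zero]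

theorem mapsTo_homothety_Icc (hirr : Irrational α) (hα : α ∈ Ioo (0 : ℝ) 1)
    (hx : x ∈ Ico (0 : ℝ) 1) (hinc : HasIncidence φ a b c d)
    (hfix : IsFixedPointSubst φ (sturmianWord α x)) :
    MapsTo (AffineMap.homothety x (d - b * α)) (Icc (0 : ℝ) 1) (Icc 0 1) := by
  have horbit : MapsTo (AffineMap.homothety x (d - b * α))
      (range fun n : ℕ => Int.fract ((n : ℝ) * α + x)) (Icc 0 1) := by
    rintro _ ⟨n, rfl⟩
    rw [← fract_blockStart hα hx hinc hfix]
    exact ⟨Int.fract_nonneg _, (Int.fract_lt_one _).le⟩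
  have hclosure := horbit.closure (AffineMap.homothety_continuous x _)
  rw [isClosed_Icc.closure_eq] at hclosure
  exact hclosure.mono_left (Icc_subset_closure_range_fract hirr x)

theorem ne_zero_of_ne_id (hirr : Irrational α) (hinc : HasIncidence φ a b c d)
    (hφ : ∀ l, φ l ≠ []) (hid : φ 0 ≠ [0] ∨ φ 1 ≠ [1]) (heig : (a + b * α) * α = c + d * α)
    (hμ : |d - b * α| ≤ 1) : b ≠ 0 := by
  rintro rfl
  have had : a = d := by
    by_contra hne
    refine (hirr.intCast_mul (sub_ne_zero.2 hne)).ne_int c ?_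
    push_cast at heig ⊢
    linarith
  subst had
  have hc : c = 0 := by
    have hc' : (c : ℝ) = 0 := by push_cast at heig; linarith
    exact_mod_cast hc'
  have ha : a = 1 := by
    have ha' : (a : ℝ) ≤ 1 := by simpa using (le_abs_self _).trans hμ
    have ha'' : a ≤ 1 := by exact_mod_cast ha'
    linarith [(hinc.pos hφ).1]
  subst ha hc
  exact hid.elim (· (hinc.eq_singleton 0)) (· (hinc.eq_singleton 1))

theorem exists_homothety_one_sub_eq (hirr : Irrational α) (hα : α ∈ Ioo (0 : ℝ) 1)
    (hx : x ∈ Ico (0 : ℝ) 1) (hinc : HasIncidence φ a b c d)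
    (hfix : IsFixedPointSubst φ (sturmianWord α x)) (hdet : a * d ≠ b * c) :
    ∃ i j : ℤ, 0 ≤ j ∧ j ≤ 2 * a + b ∧
      AffineMap.homothety x (d - b * α) (1 - α) = i - j * α := by
  by_contra! hne
  set m := (φ 0).length + (φ 1).length with hm_def
  have hm : (m : ℤ) = 2 * a + b := by
    rw [hm_def, Nat.cast_add, hinc.length, hinc.length]
    simp only [Fin.val_zero, Fin.val_one, Nat.cast_zero, Nat.cast_one]
    ring
  have hconst := ((AffineMap.homothety_continuous x (d - b * α)).tendsto (1 - α)).eventually <|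
    eventually_factor_sturmianWord_eq (α := α) (m := m) fun j hj i h =>
      hne i j (by positivity) (by lia) (by push_cast; linarith)
  have hblocks (n : ℕ) : factor (sturmianWord α (AffineMap.homothety x (d - b * α)
      (Int.fract ((n : ℝ) * α + x)))) 0
        ((φ (sturmianWord α x n)).length + (φ (sturmianWord α x (n + 1))).length) =
      φ (sturmianWord α x n) ++ φ (sturmianWord α x (n + 1)) := by
    rw [← fract_blockStart hα hx hinc hfix, ← factor_sturmianWord, factor_add,
      factor_blockStart hfix, ← blockStart_succ, factor_blockStart hfix]
  -- Approaching `1 - α` from both sides would give `φ(01) = φ(10)`.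
  obtain ⟨n, hn, hn0, hn1⟩ := exists_sturmianWord_zero_one_near hirr hα x hconst
  obtain ⟨k, hk, hk1, hk0⟩ := exists_sturmianWord_one_zero_near hirr hα x hconst
  have hblocks01 := hblocks n
  have hblocks10 := hblocks k
  rw [hn0, hn1, hn] at hblocks01
  rw [hk1, hk0, add_comm (φ 1).length, hk] at hblocks10
  exact hinc.append_ne_append hdet (hblocks01.symm.trans hblocks10)

theorem exists_conj_mem_uIcc (hirr : Irrational α) (hα : α ∈ Ioo (0 : ℝ) 1)
    (hx : x ∈ Ico (0 : ℝ) 1) (hφ : ∀ l, φ l ≠ []) (hid : φ 0 ≠ [0] ∨ φ 1 ≠ [1])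
    (hfix : IsFixedPointSubst φ (sturmianWord α x)) :
    ∃ (a b c d : ℤ) (β : ℝ) (p q : ℚ), b ≠ 0 ∧ EigenSlopes a b c d α β ∧ β ∉ Icc (0 : ℝ) 1 ∧
      x = p + q * α ∧ (p + q * β : ℝ) ∈ uIcc β (1 - β) := by
  obtain ⟨a, b, c, d, hinc⟩ := exists_hasIncidence φ
  obtain ⟨ha, hab⟩ := hinc.pos hφ
  have hmaps := mapsTo_homothety_Icc hirr hα hx hinc hfix
  have heig := eigenvector_of_isFixedPointSubst hα hx hinc hfix
  have hμ := abs_le_one_of_mapsTo_homothety hmaps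
  have hb : b ≠ 0 := ne_zero_of_ne_id hirr hinc hφ hid heig hμ
  have hμ_irr : Irrational (d - b * α) := (hirr.intCast_mul hb).intCast_sub d
  have hμ_lt : d - b * α < 1 := ((le_abs_self _).trans hμ).lt_of_ne (by simpa using hμ_irr.ne_int 1)
  have hslopes : EigenSlopes a b c d α _ := .of_eigenvector hb heig
  have hβ := hslopes.notMem_Icc ha hab hμ_lt
  have hlt := one_lt_eigenvalue hα hb ha hab
  have hmaps' := mapsTo_homothety_Ioo hμ_irr.ne_zero hmaps
  have hz := hmaps' (x := 1 - α) ⟨by linarith [hα.2], by linarith [hα.1]⟩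
  have hz' := hmaps' hα
  obtain ⟨i, j, hj0, hjL, hT⟩ := exists_homothety_one_sub_eq hirr hα hx hinc hfix
    (hslopes.det_ne hirr hb)
  obtain ⟨p, q, hxpq, hT'⟩ := hslopes.exists_rat_homothety hb hμ_lt.ne
    (hslopes.eigenvalue_eq ▸ hlt.ne') hT
  have hreturn : AffineMap.homothety x (d - b * α) α =
      ((i - (2 * c + d) : ℤ) : ℝ) - (j - (2 * a + b) : ℤ) * α := by
    rw [homothety_real_apply] at hT ⊢
    push_cast
    linear_combination hT - 2 * hslopes.sub_eq (1 / 2)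
  rw [hT] at hz
  rw [hreturn] at hz'
  have hj := index_ne_zero hz
  have hj' := index_ne_zero hz'
  exact ⟨a, b, c, d, _, p, q, hb, hslopes, hβ, hxpq,
    hslopes.mem_uIcc_of_homothety hα hβ hlt (by lia) (by lia) hz hz' hT'⟩

end Necessity

section Sufficiency

variable {a b c d : ℤ} {α β x x' : ℝ}

theorem exists_pell_solution {s : ℝ} (hs : Irrational s) {Δ N : ℤ} (hΔ : s ^ 2 = Δ) (hN : 0 < N) :
    ∃ e w : ℤ, 0 < e ∧ 0 < w * s ∧ (1 + N * e) ^ 2 - (N * w * s) ^ 2 = 1 := by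
  have hΔ_pos : 0 < Δ := by
    have hsq : 0 < s ^ 2 := sq_pos_of_ne_zero hs.ne_zero
    rw [hΔ] at hsq
    exact_mod_cast hsq
  have hnonsquare : ¬IsSquare (Δ * N ^ 2) := by
    rintro ⟨k, hk⟩
    have hk' : (N * s) ^ 2 = (k : ℝ) ^ 2 := by
      rw [mul_pow, hΔ]
      exact_mod_cast (by linarith : N ^ 2 * Δ = k ^ 2)
    have hirr : Irrational (N * s) := hs.intCast_mul hN.ne'
    rcases sq_eq_sq_iff_eq_or_eq_neg.1 hk' with h | h
    · exact hirr.ne_int k h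
    · exact hirr.ne_int (-k) (by push_cast; exact h)
  obtain ⟨t, v, htv, hv⟩ := Pell.exists_of_not_isSquare (by positivity) hnonsquare
  have ht : t ≠ 0 := by
    rintro rfl
    have : 0 ≤ Δ * N ^ 2 * v ^ 2 := by positivity
    lia
  have htv' : (t : ℝ) ^ 2 - s ^ 2 * N ^ 2 * v ^ 2 = 1 := by rw [hΔ]; exact_mod_cast htv
  -- Squaring `t + v N s` makes it congruent to `1` modulo `N`.
  have hsol (w : ℤ) (hw : (w : ℝ) ^ 2 = (2 * t * v) ^ 2) :
      (1 + N * (2 * Δ * N * v ^ 2 : ℤ)) ^ 2 - (N * w * s) ^ 2 = 1 := by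
    push_cast
    rw [mul_pow, mul_pow, hw, ← hΔ]
    linear_combination -4 * s ^ 2 * N ^ 2 * v ^ 2 * htv'
  have hne : ((2 * t * v : ℤ) : ℝ) * s ≠ 0 :=
    mul_ne_zero (by exact_mod_cast (by positivity : 2 * t * v ≠ 0)) hs.ne_zero
  rcases hne.lt_or_gt with hneg | hpos
  · exact ⟨_, -(2 * t * v), by positivity, by push_cast at hneg ⊢; linarith,
      hsol _ (by push_cast; ring)⟩
  · exact ⟨_, 2 * t * v, by positivity, hpos, hsol _ (by push_cast; ring)⟩

theorem exists_eigenSlopes_unimodular {A B C P Q N : ℤ} (hirr : Irrational α) (hA : A ≠ 0)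
    (hadd : A * (α + β) = -B) (hmul : A * (α * β) = C) (hN : 0 < N) :
    ∃ a b c d g h : ℤ, b ≠ 0 ∧ EigenSlopes a b c d α β ∧ d - b * α ∈ Ioo (0 : ℝ) 1 ∧
      (a + b * α) * (d - b * α) = 1 ∧
      ((P + Q * α) / N) * (1 - (a + b * α)) = g + h * α ∧
      ((P + Q * β) / N) * (1 - (a + b * β)) = g + h * β := by
  have hs_irr : Irrational (2 * A * α + B) := by
    simpa using (hirr.intCast_mul (mul_ne_zero two_ne_zero hA)).add_intCast B
  have hroot : A * α ^ 2 + B * α + C = 0 := by linear_combination α * hadd - hmul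
  have hroot' : A * β ^ 2 + B * β + C = 0 := by linear_combination β * hadd - hmul
  have hdisc : (2 * A * α + B) ^ 2 = ((B ^ 2 - 4 * A * C : ℤ) : ℝ) := by
    push_cast
    linear_combination 4 * A * hroot
  obtain ⟨e, w, he, hw, hpell⟩ := exists_pell_solution hs_irr hdisc hN
  have hN' : (0 : ℝ) < N := by exact_mod_cast hN
  have he' : (0 : ℝ) < e := by exact_mod_cast he
  have hw0 : w ≠ 0 := by rintro rfl; simp at hw
  have hNe := mul_pos hN' he'
  have hNw := mul_pos hN' hw
  refine ⟨1 + N * e + N * w * B, 2 * N * w * A, -(2 * N * w * C), 1 + N * e - N * w * B,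
    2 * w * Q * C - P * (e + w * B), 2 * w * Q * B - 2 * w * A * P - Q * (e + w * B),
    mul_ne_zero (by positivity) hA, ⟨?_, ?_⟩, ⟨?_, ?_⟩, ?_, ?_, ?_⟩ <;> push_cast
  · linear_combination 2 * N * w * hadd
  · linear_combination 2 * N * w * hmul
  · nlinarith
  · nlinarith
  · linear_combination hpell
  · field_simp
    linear_combination -2 * N * w * Q * hroot
  · field_simp
    linear_combination -2 * N * w * Q * hroot'

theorem homothety_ne_lattice (h : EigenSlopes a b c d α β) (hα : α ∈ Ioo (0 : ℝ) 1)
    (hβ : β ∉ Icc (0 : ℝ) 1) (hμ : d - b * α ∈ Ioo (0 : ℝ) 1)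
    (hunit : (a + b * α) * (d - b * α) = 1) (hx : x ∈ Ico (0 : ℝ) 1) (hx' : x' ∈ uIcc β (1 - β))
    {g k : ℤ} (hg : x * (1 - (a + b * α)) = g + k * α) (hg' : x' * (1 - (a + b * β)) = g + k * β)
    {l : ℤ} {w : ℝ} (hw : w ∈ Ioo (0 : ℝ) 1) (hwl : w + (α - l) ∈ Ioo (0 : ℝ) 1)
    {i j : ℤ} (hj : 0 ≤ j) (hjl : j ≤ a + b * l) :
    AffineMap.homothety x (d - b * α) w ≠ i - j * α := by
  intro hz
  obtain ⟨hx'0, hx'1⟩ := (mem_uIcc_conj_iff hβ).1 hx'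
  have hmaps := mapsTo_homothety_Ioo hμ.1.ne' <|
    mapsTo_homothety_of_convex (convex_Icc 0 1) (Ico_subset_Icc_self hx) (Ioo_subset_Icc_self hμ)
  have hz_mem := hmaps hw
  have hzl_mem := hmaps hwl
  rw [hz] at hz_mem
  rw [h.homothety_add_sub hz l] at hzl_mem
  have hj0 := index_ne_zero hz_mem
  have hjl0 := index_ne_zero hzl_mem
  have hz_conj := conj_nonneg_of_pos hα hβ hz_mem (by lia)
  have hzl_conj := conj_nonneg_of_neg hα hβ hzl_mem (by lia)
  push_cast at hzl_conj
  obtain ⟨i', j', hw_eq, hw_conj⟩ := h.exists_lattice_preimage hunit hg hg' hz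
  rw [homothety_real_apply] at hw_conj
  have hκ : 0 < (d - b * α) * (1 - 2 * β) ^ 2 := by
    have := one_sub_two_mul_pos hβ
    exact mul_pos hμ.1 (by linarith)
  have hx'0_mul := mul_nonneg (sub_pos.2 hμ.2).le hx'0
  have hx'1_mul := mul_nonneg (sub_pos.2 hμ.2).le hx'1
  have hz_mul := mul_nonneg hμ.1.le hz_conj
  have hzl_mul := mul_nonneg hμ.1.le hzl_conj
  have hj'_pos : 0 < j' := index_pos hα hβ (hw_eq ▸ hw) <| by
    linear_combination hκ + hx'0_mul + hz_mul + (1 - 2 * β) * hw_conj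
  have hj'_neg : j' - 1 < 0 := by
    refine index_neg (i := i' - l) hα hβ ?_ ?_ <;> push_cast
    · constructor <;> linarith [hwl.1, hwl.2]
    · linear_combination hκ + hx'1_mul + hzl_mul - (1 - 2 * β) * hw_conj -
        (1 - 2 * β) * (d - b * α) * h.symm.sub_eq l -
        (1 - 2 * β) * (β - l) * (hunit - (d - b * α) * h.eigenvalue_eq)
  lia

theorem floor_homothety_eq (h : EigenSlopes a b c d α β) (hα : α ∈ Ioo (0 : ℝ) 1)
    (hβ : β ∉ Icc (0 : ℝ) 1) (hμ : d - b * α ∈ Ioo (0 : ℝ) 1)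
    (hunit : (a + b * α) * (d - b * α) = 1) (hx : x ∈ Ico (0 : ℝ) 1) (hx' : x' ∈ uIcc β (1 - β))
    {g k : ℤ} (hg : x * (1 - (a + b * α)) = g + k * α) (hg' : x' * (1 - (a + b * β)) = g + k * β)
    {l : ℤ} {y y' : ℝ} (hy : y ∈ Ico (0 : ℝ) 1) (hyl : y + (α - l) ∈ Ico (0 : ℝ) 1)
    (hy' : y' ∈ Ico (0 : ℝ) 1) (hyl' : y' + (α - l) ∈ Ico (0 : ℝ) 1)
    {j : ℕ} (hjl : j ≤ a + b * l) :
    ⌊j * α + AffineMap.homothety x (d - b * α) y⌋ =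
      ⌊j * α + AffineMap.homothety x (d - b * α) y'⌋ := by
  wlog hyy' : y ≤ y' generalizing y y'
  · exact (this hy' hyl' hy hyl (le_of_not_ge hyy')).symm
  have hmono : AffineMap.homothety x (d - b * α) y ≤ AffineMap.homothety x (d - b * α) y' := by
    rw [homothety_real_apply, homothety_real_apply]
    gcongr
    exact hμ.1.le
  by_contra hne
  -- Where the floor jumps, the homothety takes a value in the lattice `ℤ + ℤ α`.
  have hlt := (Int.floor_le_floor (add_le_add_right hmono (j * α))).lt_of_ne hne
  obtain ⟨w, hw, hz⟩ : (⌊j * α + AffineMap.homothety x (d - b * α) y'⌋ - j * α : ℝ) ∈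
      AffineMap.homothety x (d - b * α) '' Ioc y y' :=
    intermediate_value_Ioc hyy' (AffineMap.homothety_continuous x _).continuousOn
      ⟨by linarith [Int.floor_lt.1 hlt],
        by linarith [Int.floor_le (j * α + AffineMap.homothety x (d - b * α) y')]⟩
  rw [← Int.cast_natCast j] at hz
  exact homothety_ne_lattice h hα hβ hμ hunit hx hx' hg hg' (l := l)
    ⟨hy.1.trans_lt hw.1, hw.2.trans_lt hy'.2⟩
    ⟨by linarith [hyl.1, hw.1], by linarith [hyl'.2, hw.2]⟩ (Int.natCast_nonneg j) hjl hz

theorem exists_isFixedPointSubst (h : EigenSlopes a b c d α β) (hα : α ∈ Ioo (0 : ℝ) 1)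
    (hβ : β ∉ Icc (0 : ℝ) 1) (hb : b ≠ 0) (hμ : d - b * α ∈ Ioo (0 : ℝ) 1)
    (hunit : (a + b * α) * (d - b * α) = 1) (hx : x ∈ Ico (0 : ℝ) 1) (hx' : x' ∈ uIcc β (1 - β))
    {g k : ℤ} (hg : x * (1 - (a + b * α)) = g + k * α) (hg' : x' * (1 - (a + b * β)) = g + k * β) :
    ∃ φ : Fin 2 → List (Fin 2), (∀ l, φ l ≠ []) ∧ (φ 0 ≠ [0] ∨ φ 1 ≠ [1]) ∧
      IsFixedPointSubst φ (sturmianWord α x) := by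
  set T := AffineMap.homothety x (d - b * α)
  obtain ⟨ha, hab⟩ := h.pos hα hβ hμ (pos_of_mul_pos_left (hunit ▸ one_pos) hμ.1.le)
  have hpos : ∀ l : Fin 2, 0 < a + b * (l : ℕ) :=
    Fin.forall_fin_two.2 ⟨by simpa using ha, by simpa using hab⟩
  let φ (l : Fin 2) : List (Fin 2) :=
    factor (sturmianWord α (T ((l : ℕ) * (1 - α)))) 0 (a + b * (l : ℕ)).toNat
  have hlen (l : Fin 2) : ((φ l).length : ℤ) = a + b * (l : ℕ) := by
    rw [length_factor, Int.toNat_of_nonneg (hpos l).le]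
  have hφ (l : Fin 2) : φ l ≠ [] := by
    rw [← List.length_pos_iff, ← Int.natCast_pos, hlen]
    exact hpos l
  refine ⟨φ, hφ, ne_id_of_length hlen hb, isFixedPointSubst_of_factor_blockStart hφ fun n => ?_⟩
  have hfract : Int.fract ((blockStart φ (sturmianWord α x) n : ℝ) * α + x) =
      T (Int.fract ((n : ℝ) * α + x)) := by
    rw [blockStart_mul_add (c := c) (d := d) hα hx hlen, h.eigenvector, sub_self, mul_zero,
      add_zero, Int.fract_add_intCast, Int.fract_eq_self]
    exact mapsTo_homothety_of_convex (convex_Ico 0 1) hx (Ioo_subset_Icc_self hμ)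
      ⟨Int.fract_nonneg _, Int.fract_lt_one _⟩
  rw [factor_sturmianWord, hfract, length_factor]
  have hnext := fract_succ_mul_add hα x n
  have hn1 : Int.fract (((n + 1 : ℕ) : ℝ) * α + x) ∈ Ico (0 : ℝ) 1 :=
    ⟨Int.fract_nonneg _, Int.fract_lt_one _⟩
  rw [hnext] at hn1
  generalize sturmianWord α x n = l at *
  have hl : ((l : ℕ) : ℝ) = 0 ∨ ((l : ℕ) : ℝ) = 1 := by fin_cases l <;> simp
  refine factor_sturmianWord_congr fun j hj => floor_homothety_eq h hα hβ hμ hunit hx hx' hg hg'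
    (l := (l : ℕ)) ⟨Int.fract_nonneg _, Int.fract_lt_one _⟩ (by exact_mod_cast hn1) ?_ ?_ ?_
  · rcases hl with hl | hl <;> rw [hl] <;> constructor <;> linarith [hα.1, hα.2]
  · rw [Int.cast_natCast]
    rcases hl with hl | hl <;> rw [hl] <;> constructor <;> linarith [hα.1, hα.2]
  · rw [← hlen, length_factor]
    exact_mod_cast hj

theorem exists_isFixedPointSubst_of_conj_mem_uIcc {A B C : ℤ} {p q : ℚ} (hirr : Irrational α)
    (hα : α ∈ Ioo (0 : ℝ) 1) (hx : (p + q * α : ℝ) ∈ Ico (0 : ℝ) 1) (hA : A ≠ 0)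
    (hadd : A * (α + β) = -B) (hmul : A * (α * β) = C) (hβ : β ∉ Ioo (0 : ℝ) 1)
    (hconj : (p + q * β : ℝ) ∈ uIcc β (1 - β)) :
    ∃ φ : Fin 2 → List (Fin 2), (∀ l, φ l ≠ []) ∧ (φ 0 ≠ [0] ∨ φ 1 ≠ [1]) ∧
      IsFixedPointSubst φ (sturmianWord α (p + q * α)) := by
  have hA' : (A : ℝ) ≠ 0 := by exact_mod_cast hA
  have hβ_irr : Irrational β := by
    have hβ_eq : β = (-B / A : ℚ) - α := by
      push_cast
      field_simp
      linarith
    exact hβ_eq ▸ hirr.ratCast_sub _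
  have hβ' : β ∉ Icc (0 : ℝ) 1 := fun h =>
    hβ ⟨h.1.lt_of_ne hβ_irr.ne_zero.symm, h.2.lt_of_ne hβ_irr.ne_one⟩
  have hclear (t : ℝ) : ((p.num * q.den : ℤ) + (q.num * p.den : ℤ) * t) / (p.den * q.den : ℤ) =
      p + q * t := by
    rw [Rat.cast_def p, Rat.cast_def q]
    push_cast
    field_simp
  obtain ⟨a, b, c, d, g, k, hb, h, hμ, hunit, hg, hg'⟩ :=
    exists_eigenSlopes_unimodular (P := p.num * q.den) (Q := q.num * p.den)
      (N := p.den * q.den) hirr hA hadd hmul (by positivity)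
  rw [hclear] at hg hg'
  exact exists_isFixedPointSubst h hα hβ' hb hμ hunit hx hconj hg hg'

end Sufficiency

end SturmianSubstitution

theorem sturmian_substitution_invariance
    (α x₀ : ℝ) (hirr : Irrational α) (hα : α ∈ Set.Ioo (0 : ℝ) 1)
    (hx₀ : x₀ ∈ Set.Ico (0 : ℝ) 1) :
    (∃ φ : Fin 2 → List (Fin 2), (∀ a, φ a ≠ []) ∧ (φ 0 ≠ [0] ∨ φ 1 ≠ [1]) ∧
        IsFixedPointSubst φ (sturmianWord α x₀)) ↔
    (∃ (A B C : ℤ) (p q : ℚ),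
      A ≠ 0 ∧ (A : ℝ) * α ^ 2 + (B : ℝ) * α + (C : ℝ) = 0 ∧
      (-(B : ℝ) / (A : ℝ) - α) ∉ Set.Ioo (0 : ℝ) 1 ∧
      x₀ = (p : ℝ) + (q : ℝ) * α ∧
      min (-(B : ℝ) / (A : ℝ) - α) (1 - (-(B : ℝ) / (A : ℝ) - α))
        ≤ (p : ℝ) + (q : ℝ) * (-(B : ℝ) / (A : ℝ) - α) ∧
      (p : ℝ) + (q : ℝ) * (-(B : ℝ) / (A : ℝ) - α)
        ≤ max (-(B : ℝ) / (A : ℝ) - α) (1 - (-(B : ℝ) / (A : ℝ) - α))) := by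
  constructor
  · rintro ⟨φ, hφ, hid, hfix⟩
    obtain ⟨a, b, c, d, β, p, q, hb, h, hβ, hx, hconj⟩ :=
      SturmianSubstitution.exists_conj_mem_uIcc hirr hα hx₀ hφ hid hfix
    obtain rfl := h.conj_eq hb
    refine ⟨b, a - d, -c, p, q, hb, ?_, fun hmem => hβ (Set.Ioo_subset_Icc_self hmem), hx, hconj⟩
    push_cast
    linear_combination h.eigenvector
  · rintro ⟨A, B, C, p, q, hA, hroot, hβ, rfl, hconj⟩
    have hA' : (A : ℝ) ≠ 0 := by exact_mod_cast hA
    exact SturmianSubstitution.exists_isFixedPointSubst_of_conj_mem_uIcc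
      (B := B) (C := C) hirr hα hx₀ hA (by field_simp; ring)
      (by field_simp; linear_combination -hroot) hβ hconj
end

section
/- Let ε, η be irrational reals with ε ≠ −η and let l > 0. Then there exist Δ₁, Δ₂ ∈ ℤ + ηℤ with Δ₁ > 0, Δ₂ > 0, Δ₁* > 0, Δ₂* < 0 and Δ₁* − Δ₂* ≥ l > max(Δ₁*, −Δ₂*), such that for every c ∈ ℝ and every x ∈ Σ := Σ_{ε,η}([c, c+l)): the set Σ ∩ (x, ∞) has a least element y, and y = x + Δ₁ if x* ∈ [c, c+l−Δ₁*), y = x + Δ₁ + Δ₂ if x* ∈ [c+l−Δ₁*, c−Δ₂*), and y = x + Δ₂ if x* ∈ [c−Δ₂*, c+l). In particular Δ₁ and Δ₂ depend only on ε, η and the length l, not on c. -/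
/-- The cut-and-project set `Σ_{ε,η}(Ω) = {a + bη : a, b ∈ ℤ, a − bε ∈ Ω}`. -/
def cutProject (ε η : ℝ) (Ω : Set ℝ) : Set ℝ :=
  {x | ∃ a b : ℤ, x = (a : ℝ) + (b : ℝ) * η ∧ (a : ℝ) - (b : ℝ) * ε ∈ Ω}

/-!
Call a lattice vector a step if its physical coordinate is positive. Let `u` be the shortest step
whose star coordinate lies in `(0, l)`, and `v` the shortest one whose star coordinate lies in
`(-l, 0)`; steps of both kinds occur because the lattice is discrete in the plane while its star
projection is dense, and shortest ones by discreteness. Two points of `Σ` differ by a vector whose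
star coordinate lies in `(-l, l)`. If a step shorter than the claimed gap led to another point of
`Σ`, its difference with `u` or `v` would violate the minimality of `u` or `v`. Hence the successor
of a point is reached by `u` or by `v` whenever that stays inside the window, and by `u + v`
otherwise. Minimality refers only to `l`, so `u` and `v` do not depend on the position of the
window.
-/

open Filter Topology Set

section FunctionsOnDiscreteSets

variable {α H : Type*} [TopologicalSpace H]

theorem infinite_preimage_of_denseRange [T1Space H] [∀ x : H, NeBot (𝓝[≠] x)] {f : α → H}
    (hf : DenseRange f) {U : Set H} (hU : IsOpen U) (hne : U.Nonempty) :
    (f ⁻¹' U).Infinite := by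
  intro hfin
  obtain ⟨_, hxU, ⟨a, rfl⟩, ha⟩ :=
    (hf.sdiff_finite (hfin.image f)).inter_open_nonempty U hU hne
  exact ha (mem_image_of_mem f hxU)

theorem finite_abs_le_of_tendsto_cocompact {f : α → ℝ} {g : α → H}
    (hfg : Tendsto (fun a => (f a, g a)) cofinite (cocompact (ℝ × H))) (M : ℝ) {K : Set H}
    (hK : IsCompact K) : {a | |f a| ≤ M ∧ g a ∈ K}.Finite :=
  (tendsto_cofinite_cocompact_iff.1 hfg _ (isCompact_Icc.prod hK)).subset
    fun _ ha => ⟨abs_le.1 ha.1, ha.2⟩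

theorem exists_lt_abs_and_mem_of_denseRange [LocallyCompactSpace H] [T1Space H]
    [∀ x : H, NeBot (𝓝[≠] x)] {f : α → ℝ} {g : α → H}
    (hfg : Tendsto (fun a => (f a, g a)) cofinite (cocompact (ℝ × H))) (hg : DenseRange g)
    (M : ℝ) {U : Set H} (hU : IsOpen U) (hne : U.Nonempty) : ∃ a, M < |f a| ∧ g a ∈ U := by
  obtain ⟨x, hx⟩ := hne
  obtain ⟨K, hK, hxK, hKU⟩ := exists_compact_subset hU hx
  obtain ⟨a, haK, ha⟩ :=
    (infinite_preimage_of_denseRange hg isOpen_interior ⟨x, hxK⟩).exists_notMem_finite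
      (finite_abs_le_of_tendsto_cocompact hfg M hK)
  exact ⟨a, not_le.1 fun h => ha ⟨h, interior_subset haK⟩, hKU (interior_subset haK)⟩

end FunctionsOnDiscreteSets

section GeneralWindow

variable {G H : Type*} [AddCommGroup G] [AddCommGroup H] {π : G →+ ℝ} {σ : G →+ H} {Ω : Set H}

theorem map_ne_zero_of_map_pos {d : G} (hσ : Function.Injective σ) (hd : 0 < π d) :
    σ d ≠ 0 :=
  (map_ne_zero_iff σ hσ).2 fun h => hd.ne' (by rw [h, map_zero])

/-- `u` is a shortest step with star coordinate in `Ω`: among the elements of `G` with positive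
physical coordinate `π` and with star coordinate `σ` in `Ω`, it has the least `π`. -/
structure IsShortestStep (π : G →+ ℝ) (σ : G →+ H) (Ω : Set H) (u : G) : Prop where
  pos : 0 < π u
  mem : σ u ∈ Ω
  le_of_mem : ∀ d, 0 < π d → σ d ∈ Ω → π u ≤ π d

theorem IsShortestStep.le_of_sub_mem {u d : G} (hu : IsShortestStep π σ Ω u) (hd : 0 < π d)
    (hud : σ u - σ d ∈ Ω) : π u ≤ π d := by
  by_contra! hlt
  have := hu.le_of_mem (u - d) (by rwa [map_sub, sub_pos]) (by rwa [map_sub])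
  rw [map_sub] at this
  linarith

theorem isLeast_gt_of_forall_le {p d : G} (hd : 0 < π d) (hmem : σ p + σ d ∈ Ω)
    (hle : ∀ e, 0 < π e → σ p + σ e ∈ Ω → π d ≤ π e) :
    IsLeast {z ∈ π '' (σ ⁻¹' Ω) | π p < z} (π p + π d) := by
  refine ⟨⟨⟨p + d, by rwa [mem_preimage, map_add], map_add π p d⟩, by linarith⟩, ?_⟩
  rintro _ ⟨⟨q, hq, rfl⟩, hpq⟩
  have := hle (q - p) (by rwa [map_sub, sub_pos]) (by rwa [map_sub, add_sub_cancel])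
  rw [map_sub] at this
  linarith

variable [TopologicalSpace H]

theorem exists_isShortestStep
    (hπσ : Tendsto (fun g => (π g, σ g)) cofinite (cocompact (ℝ × H))) {K : Set H}
    (hK : IsCompact K) (hΩK : Ω ⊆ K) (hex : ∃ g, 0 < π g ∧ σ g ∈ Ω) :
    ∃ u, IsShortestStep π σ Ω u := by
  obtain ⟨g, hg, hgΩ⟩ := hex
  have hfin : {d | 0 < π d ∧ σ d ∈ Ω ∧ π d ≤ π g}.Finite :=
    (finite_abs_le_of_tendsto_cocompact hπσ (π g) hK).subset
      fun d ⟨hd, hdΩ, hdg⟩ => ⟨(abs_of_pos hd).trans_le hdg, hΩK hdΩ⟩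
  obtain ⟨u, ⟨hu, huΩ, hug⟩, hmin⟩ := exists_min_image _ π hfin ⟨g, hg, hgΩ, le_rfl⟩
  refine ⟨u, hu, huΩ, fun d hd hdΩ => ?_⟩
  rcases le_total (π d) (π g) with hdg | hgd
  · exact hmin d ⟨hd, hdΩ, hdg⟩
  · exact hug.trans hgd

theorem exists_pos_and_mem_of_denseRange [IsTopologicalAddGroup H] [LocallyCompactSpace H]
    [T1Space H] [∀ x : H, NeBot (𝓝[≠] x)]
    (hπσ : Tendsto (fun g => (π g, σ g)) cofinite (cocompact (ℝ × H))) (hσ : DenseRange σ)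
    (hΩ : IsOpen Ω) (hne : Ω.Nonempty) : ∃ g, 0 < π g ∧ σ g ∈ Ω := by
  obtain ⟨r, hr⟩ := hσ.exists_mem_open hΩ hne
  let V : Set H := {x | σ r + x ∈ Ω ∧ σ r - x ∈ Ω}
  have hV : IsOpen V :=
    (hΩ.preimage (continuous_const_add (σ r))).inter (hΩ.preimage (continuous_sub_left (σ r)))
  have h0V : (0 : H) ∈ V := by simpa [V] using hr
  -- Both `r + q` and `r - q` have star coordinate in `Ω`, and one of them is positive.
  obtain ⟨q, hq, hadd, hsub⟩ := exists_lt_abs_and_mem_of_denseRange hπσ hσ (-π r) hV ⟨0, h0V⟩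
  rcases lt_abs.1 hq with hq | hq
  · exact ⟨r + q, by rw [map_add]; linarith, by rwa [map_add]⟩
  · exact ⟨r - q, by rw [map_sub]; linarith, by rwa [map_sub]⟩

end GeneralWindow

section IntervalWindow

variable {G : Type*} [AddCommGroup G] {π σ : G →+ ℝ} {l : ℝ} {u v d : G}

theorem IsShortestStep.le_of_sub_lt (hu : IsShortestStep π σ (Ioo 0 l) u) (hd : 0 < π d)
    (hne : σ d ≠ 0) (hlo : σ u - l < σ d) (hhi : σ d < l) : π u ≤ π d := by
  rcases hne.lt_or_gt with hneg | hpos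
  · exact hu.le_of_sub_mem hd ⟨by linarith [hu.mem.1], by linarith⟩
  · exact hu.le_of_mem d hd ⟨hpos, hhi⟩

theorem IsShortestStep.le_of_lt_add (hv : IsShortestStep π σ (Ioo (-l) 0) v) (hd : 0 < π d)
    (hne : σ d ≠ 0) (hlo : -l < σ d) (hhi : σ d < σ v + l) : π v ≤ π d := by
  rcases hne.lt_or_gt with hneg | hpos
  · exact hv.le_of_mem d hd ⟨hlo, hneg⟩
  · exact hv.le_of_sub_mem hd ⟨by linarith, by linarith [hv.mem.2]⟩

theorem IsShortestStep.le_sub (hπ : Function.Injective π)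
    (hu : IsShortestStep π σ (Ioo 0 l) u) (hv : IsShortestStep π σ (Ioo (-l) 0) v) :
    l ≤ σ u - σ v := by
  obtain ⟨hu0, -⟩ := hu.mem
  obtain ⟨-, hv0⟩ := hv.mem
  by_contra! hlt
  have huv : π u ≤ π v := hu.le_of_sub_mem hv.pos ⟨by linarith, hlt⟩
  have hvu : π v ≤ π u := hv.le_of_sub_mem hu.pos ⟨by linarith, by linarith⟩
  have : u = v := hπ (huv.antisymm hvu)
  subst this
  linarith

theorem IsShortestStep.add_le (hπ : Function.Injective π)
    (hu : IsShortestStep π σ (Ioo 0 l) u) (hv : IsShortestStep π σ (Ioo (-l) 0) v)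
    (hd : 0 < π d) (hne : σ d ≠ 0) (hlo : σ v < σ d) (hhi : σ d < σ u) :
    π u + π v ≤ π d := by
  obtain ⟨-, hul⟩ := hu.mem
  obtain ⟨hvl, -⟩ := hv.mem
  rcases hne.lt_or_gt with hneg | hpos
  · have hvd : π v < π d := (hv.le_of_mem d hd ⟨by linarith, hneg⟩).lt_of_ne
      (hπ.ne fun h => hlo.ne (congrArg σ h))
    have := hu.le_of_mem (d - v) (by rwa [map_sub, sub_pos])
      (by rw [map_sub]; exact ⟨by linarith, by linarith⟩)
    rw [map_sub] at this
    linarith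
  · have hud : π u < π d := (hu.le_of_mem d hd ⟨hpos, by linarith⟩).lt_of_ne
      (hπ.ne fun h => hhi.ne' (congrArg σ h))
    have := hv.le_of_mem (d - u) (by rwa [map_sub, sub_pos])
      (by rw [map_sub]; exact ⟨by linarith, by linarith⟩)
    rw [map_sub] at this
    linarith

variable {c : ℝ} {p : G}

theorem IsShortestStep.isLeast_gt_left (hσ : Function.Injective σ)
    (hu : IsShortestStep π σ (Ioo 0 l) u) (hp : σ p ∈ Ico c (c + l - σ u)) :
    IsLeast {z ∈ π '' (σ ⁻¹' Ico c (c + l)) | π p < z} (π p + π u) := by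
  refine isLeast_gt_of_forall_le hu.pos ⟨?_, ?_⟩ fun d hd hpd => ?_
  · linarith [hp.1, hu.mem.1]
  · linarith [hp.2]
  · exact hu.le_of_sub_lt hd (map_ne_zero_of_map_pos hσ hd) (by linarith [hp.2, hpd.1])
      (by linarith [hp.1, hpd.2])

theorem IsShortestStep.isLeast_gt_middle (hπ : Function.Injective π) (hσ : Function.Injective σ)
    (hu : IsShortestStep π σ (Ioo 0 l) u) (hv : IsShortestStep π σ (Ioo (-l) 0) v)
    (hp : σ p ∈ Ico (c + l - σ u) (c - σ v)) :
    IsLeast {z ∈ π '' (σ ⁻¹' Ico c (c + l)) | π p < z} (π p + π u + π v) := by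
  rw [add_assoc, ← map_add]
  refine isLeast_gt_of_forall_le ?_ ?_ fun d hd hpd => ?_
  · rw [map_add]
    exact add_pos hu.pos hv.pos
  · rw [map_add]
    exact ⟨by linarith [hp.1, hv.mem.1], by linarith [hp.2, hu.mem.2]⟩
  · rw [map_add]
    exact hu.add_le hπ hv hd (map_ne_zero_of_map_pos hσ hd) (by linarith [hp.2, hpd.1])
      (by linarith [hp.1, hpd.2])

theorem IsShortestStep.isLeast_gt_right (hσ : Function.Injective σ)
    (hv : IsShortestStep π σ (Ioo (-l) 0) v) (hp : σ p ∈ Ico (c - σ v) (c + l)) :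
    IsLeast {z ∈ π '' (σ ⁻¹' Ico c (c + l)) | π p < z} (π p + π v) := by
  refine isLeast_gt_of_forall_le hv.pos ⟨?_, ?_⟩ fun d hd hpd => ?_
  · linarith [hp.1]
  · linarith [hp.2, hv.mem.2]
  · exact hv.le_of_lt_add hd (map_ne_zero_of_map_pos hσ hd) (by linarith [hp.2, hpd.1])
      (by linarith [hp.1, hpd.2])

theorem IsShortestStep.exists_isLeast_gt (hπ : Function.Injective π) (hσ : Function.Injective σ)
    (hu : IsShortestStep π σ (Ioo 0 l) u) (hv : IsShortestStep π σ (Ioo (-l) 0) v)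
    (hp : σ p ∈ Ico c (c + l)) :
    ∃ y, IsLeast {z ∈ π '' (σ ⁻¹' Ico c (c + l)) | π p < z} y ∧
      (σ p ∈ Ico c (c + l - σ u) → y = π p + π u) ∧
      (σ p ∈ Ico (c + l - σ u) (c - σ v) → y = π p + π u + π v) ∧
      (σ p ∈ Ico (c - σ v) (c + l) → y = π p + π v) := by
  obtain ⟨y, hy⟩ : ∃ y, IsLeast {z ∈ π '' (σ ⁻¹' Ico c (c + l)) | π p < z} y := by
    rcases lt_or_ge (σ p) (c + l - σ u) with hleft | hleft
    · exact ⟨_, hu.isLeast_gt_left hσ ⟨hp.1, hleft⟩⟩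
    rcases lt_or_ge (σ p) (c - σ v) with hmid | hmid
    · exact ⟨_, hu.isLeast_gt_middle hπ hσ hv ⟨hleft, hmid⟩⟩
    · exact ⟨_, hv.isLeast_gt_right hσ ⟨hmid, hp.2⟩⟩
  exact ⟨y, hy, fun h => hy.unique (hu.isLeast_gt_left hσ h),
    fun h => hy.unique (hu.isLeast_gt_middle hπ hσ hv h),
    fun h => hy.unique (hv.isLeast_gt_right hσ h)⟩

end IntervalWindow

section Lattice

/-- The coordinate `(a, b) ↦ a + bθ` on `ℤ × ℤ`. The physical coordinate of the cut-and-project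
scheme is `latticeCoord η`, and the star coordinate `a - bε` is `latticeCoord (-ε)`. -/
noncomputable def latticeCoord (θ : ℝ) : ℤ × ℤ →+ ℝ where
  toFun p := p.1 + p.2 * θ
  map_zero' := by simp
  map_add' p q := by
    simp only [Prod.fst_add, Prod.snd_add, Int.cast_add]
    ring

theorem latticeCoord_apply (θ : ℝ) (a b : ℤ) : latticeCoord θ (a, b) = a + b * θ := rfl

theorem latticeCoord_neg_apply (ε : ℝ) (a b : ℤ) : latticeCoord (-ε) (a, b) = a - b * ε := by
  rw [latticeCoord_apply, mul_neg, sub_eq_add_neg]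

theorem cutProject_eq_image_preimage (ε η : ℝ) (Ω : Set ℝ) :
    cutProject ε η Ω = latticeCoord η '' (latticeCoord (-ε) ⁻¹' Ω) := by
  ext x
  simp only [cutProject, mem_ofPred_eq, mem_image, mem_preimage, Prod.exists,
    latticeCoord_neg_apply]
  simp only [latticeCoord_apply, eq_comm (a := x), and_comm]

theorem injective_latticeCoord {θ : ℝ} (hθ : Irrational θ) :
    Function.Injective (latticeCoord θ) := by
  refine (injective_iff_map_eq_zero _).2 fun ⟨a, b⟩ hab => ?_
  rw [latticeCoord_apply] at hab
  have hb : b = 0 := by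
    by_contra hne
    exact ((hθ.intCast_mul hne).intCast_add a).ne_zero hab
  have ha : a = 0 := by simpa [hb] using hab
  rw [ha, hb, Prod.mk_zero_zero]

theorem denseRange_latticeCoord {θ : ℝ} (hθ : Irrational θ) :
    DenseRange (latticeCoord θ) := by
  have hdense : Dense (AddSubgroup.closure {1, θ} : Set ℝ) := by
    rw [dense_addSubgroupClosure_pair_iff, one_div]
    exact hθ.inv
  refine hdense.mono fun x hx => ?_
  obtain ⟨a, b, rfl⟩ := AddSubgroup.mem_closure_pair.1 hx
  exact ⟨(a, b), by simp only [latticeCoord_apply, zsmul_eq_mul, mul_one]⟩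

theorem tendsto_latticeCoord_prodMk_cocompact {θ φ : ℝ} (h : θ ≠ φ) :
    Tendsto (fun p => (latticeCoord θ p, latticeCoord φ p)) cofinite (cocompact (ℝ × ℝ)) := by
  let L : ℝ × ℝ →ₗ[ℝ] ℝ × ℝ :=
    (LinearMap.fst ℝ ℝ ℝ + θ • LinearMap.snd ℝ ℝ ℝ).prod
      (LinearMap.fst ℝ ℝ ℝ + φ • LinearMap.snd ℝ ℝ ℝ)
  have hL (x y : ℝ) : L (x, y) = (x + y * θ, x + y * φ) := by
    simp [L, mul_comm]
  have hker : LinearMap.ker L = ⊥ := by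
    refine LinearMap.ker_eq_bot'.2 fun ⟨x, y⟩ hxy => ?_
    obtain ⟨hθ, hφ⟩ := Prod.mk_eq_zero.1 ((hL x y).symm.trans hxy)
    have hy : y = 0 := by
      have : y * (θ - φ) = 0 := by linarith
      exact (mul_eq_zero.1 this).resolve_right (sub_ne_zero.2 h)
    simp_all
  have hcast : Tendsto (Prod.map ((↑) : ℤ → ℝ) ((↑) : ℤ → ℝ)) cofinite (cocompact (ℝ × ℝ)) := by
    rw [← coprod_cofinite, ← coprod_cocompact]
    exact Int.tendsto_coe_cofinite.prodMap_coprod Int.tendsto_coe_cofinite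
  refine ((LinearMap.isClosedEmbedding_of_injective hker).tendsto_cocompact.comp hcast).congr ?_
  exact fun p => hL p.1 p.2

end Lattice

theorem cutProject_gaps (ε η l : ℝ) (hε : Irrational ε) (hη : Irrational η)
    (hne : ε ≠ -η) (hl : 0 < l) :
    ∃ a₁ b₁ a₂ b₂ : ℤ,
      -- Δ₁ = a₁ + b₁η ∈ ℤ + ηℤ,  Δ₂ = a₂ + b₂η ∈ ℤ + ηℤ, both positive
      (0 : ℝ) < (a₁ : ℝ) + (b₁ : ℝ) * η ∧ (0 : ℝ) < (a₂ : ℝ) + (b₂ : ℝ) * η ∧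
      -- Δ₁* > 0, Δ₂* < 0
      (0 : ℝ) < (a₁ : ℝ) - (b₁ : ℝ) * ε ∧ (a₂ : ℝ) - (b₂ : ℝ) * ε < 0 ∧
      -- Δ₁* − Δ₂* ≥ l > max(Δ₁*, −Δ₂*)
      l ≤ ((a₁ : ℝ) - (b₁ : ℝ) * ε) - ((a₂ : ℝ) - (b₂ : ℝ) * ε) ∧
      max ((a₁ : ℝ) - (b₁ : ℝ) * ε) (-((a₂ : ℝ) - (b₂ : ℝ) * ε)) < l ∧
      -- for every position c of the window and every point x = a + bη of Σ
      ∀ c : ℝ, ∀ a b : ℤ, (a : ℝ) - (b : ℝ) * ε ∈ Set.Ico c (c + l) →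
        ∃ y : ℝ,
          IsLeast {z ∈ cutProject ε η (Set.Ico c (c + l)) | (a : ℝ) + (b : ℝ) * η < z} y ∧
          ((a : ℝ) - (b : ℝ) * ε ∈ Set.Ico c (c + l - ((a₁ : ℝ) - (b₁ : ℝ) * ε)) →
            y = (a : ℝ) + (b : ℝ) * η + ((a₁ : ℝ) + (b₁ : ℝ) * η)) ∧
          ((a : ℝ) - (b : ℝ) * ε ∈
              Set.Ico (c + l - ((a₁ : ℝ) - (b₁ : ℝ) * ε)) (c - ((a₂ : ℝ) - (b₂ : ℝ) * ε)) →
            y = (a : ℝ) + (b : ℝ) * η + ((a₁ : ℝ) + (b₁ : ℝ) * η) + ((a₂ : ℝ) + (b₂ : ℝ) * η)) ∧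
          ((a : ℝ) - (b : ℝ) * ε ∈ Set.Ico (c - ((a₂ : ℝ) - (b₂ : ℝ) * ε)) (c + l) →
            y = (a : ℝ) + (b : ℝ) * η + ((a₂ : ℝ) + (b₂ : ℝ) * η)) := by
  have hproper : Tendsto (fun p => (latticeCoord η p, latticeCoord (-ε) p)) cofinite
      (cocompact (ℝ × ℝ)) :=
    tendsto_latticeCoord_prodMk_cocompact fun h => hne (by rw [h, neg_neg])
  have hstep (s t : ℝ) (hst : s < t) :
      ∃ u, IsShortestStep (latticeCoord η) (latticeCoord (-ε)) (Ioo s t) u :=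
    exists_isShortestStep hproper isCompact_Icc Ioo_subset_Icc_self
      (exists_pos_and_mem_of_denseRange hproper (denseRange_latticeCoord hε.neg) isOpen_Ioo
        (nonempty_Ioo.2 hst))
  obtain ⟨u, hu⟩ := hstep 0 l hl
  obtain ⟨v, hv⟩ := hstep (-l) 0 (neg_neg_of_pos hl)
  have hπ := injective_latticeCoord hη
  have hσ := injective_latticeCoord hε.neg
  refine ⟨u.1, u.2, v.1, v.2, ?_⟩
  simp only [← latticeCoord_apply, ← latticeCoord_neg_apply, cutProject_eq_image_preimage]
  exact ⟨hu.pos, hv.pos, hu.mem.1, hv.mem.2, hu.le_sub hπ hv,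
    max_lt hu.mem.2 (neg_lt.1 hv.mem.1),
    fun _ a b hp => hu.exists_isLeast_gt (p := (a, b)) hπ hσ hv hp⟩
end

section
/- Let ε ∈ (0,1) and η > 0 be irrational, let l satisfy max(1−ε, ε) < l ≤ 1, and let Ω = [c, c+l). Then for every x ∈ Σ := Σ_{ε,η}(Ω), the set Σ ∩ (x, ∞) has a least element y, and: y = x + 1 + η if x* ∈ [c, c+l−1+ε); y = x + 1 + 2η if x* ∈ [c+l−1+ε, c+ε); and y = x + η if x* ∈ [c+ε, c+l). (That is, for parameters satisfying these conditions one has Δ₁ = 1 + η and Δ₂ = η.) -/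
/-!
Translating `Σ(Ω)` by `-(a + bη)` translates the window by `-(a - bε)`, so the successor of
`a + bη` is governed by the least positive element `p + qη` of a cut-and-project set whose window
`Ω` contains `0`. Since `Ω` has length at most `1`, `q ≤ 0` would force `p ≤ 0`; hence `1 ≤ q`, and
then `0 ≤ p`. So the smallest candidates are `η`, `1 + η` and `1 + 2η`, and the position of `0` in
`Ω` decides which is the first whose star image `-ε`, `1 - ε` or `1 - 2ε` lies in `Ω`.
-/

section LatticeCoordinates

variable {ε η : ℝ} {p q : ℤ}

lemma one_le_of_star_lt_one (hε : 0 ≤ ε) (hη : 0 ≤ η) (hpos : 0 < (p : ℝ) + q * η)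
    (hstar : (p : ℝ) - q * ε < 1) : 1 ≤ q := by
  by_contra! hq
  have hq_nonpos : (q : ℝ) ≤ 0 := by exact_mod_cast Int.lt_add_one_iff.mp hq
  have hp_lt : (p : ℝ) < 1 := by linarith [mul_nonpos_of_nonpos_of_nonneg hq_nonpos hε]
  have hp_lt_int : p < 1 := by exact_mod_cast hp_lt
  have hp_nonpos : (p : ℝ) ≤ 0 := by exact_mod_cast Int.lt_add_one_iff.mp hp_lt_int
  linarith [mul_nonpos_of_nonpos_of_nonneg hq_nonpos hη]

lemma nonneg_of_neg_one_lt_star (hε : 0 ≤ ε) (hq : 1 ≤ q) (hstar : -1 < (p : ℝ) - q * ε) :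
    0 ≤ p := by
  have hq_nonneg : (0 : ℝ) ≤ q := by exact_mod_cast zero_le_one.trans hq
  have hp : (-1 : ℝ) < p := by linarith [mul_nonneg hq_nonneg hε]
  have hp_int : -1 < p := by exact_mod_cast hp
  omega

lemma one_le_of_neg_lt_star (hε : 0 ≤ ε) (hq : 1 ≤ q) (hstar : -ε < (p : ℝ) - q * ε) :
    1 ≤ p := by
  have hq_cast : (1 : ℝ) ≤ q := by exact_mod_cast hq
  have hp : (0 : ℝ) < p := by linarith [le_mul_of_one_le_left hε hq_cast]
  exact_mod_cast hp

end LatticeCoordinates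

section LeastPositive

variable {ε η : ℝ} {Ω : Set ℝ}

lemma isLeast_pos_cutProject_eta (hε : 0 ≤ ε) (hη : 0 < η) (hΩ : Ω ⊆ Set.Ioo (-1) 1)
    (hmem : -ε ∈ Ω) : IsLeast {z ∈ cutProject ε η Ω | 0 < z} η := by
  refine ⟨⟨⟨0, 1, by simp, by simpa using hmem⟩, hη⟩, ?_⟩
  rintro _ ⟨⟨p, q, rfl, hstar⟩, hpos⟩
  have hq : 1 ≤ q := one_le_of_star_lt_one hε hη.le hpos (hΩ hstar).2
  have hp : (0 : ℝ) ≤ p := by exact_mod_cast nonneg_of_neg_one_lt_star hε hq (hΩ hstar).1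
  have hq_cast : (1 : ℝ) ≤ q := by exact_mod_cast hq
  linarith [le_mul_of_one_le_left hη.le hq_cast]

lemma isLeast_pos_cutProject_one_add_eta (hε : 0 ≤ ε) (hη : 0 ≤ η) (hΩ : Ω ⊆ Set.Ioo (-ε) 1)
    (hmem : 1 - ε ∈ Ω) : IsLeast {z ∈ cutProject ε η Ω | 0 < z} (1 + η) := by
  refine ⟨⟨⟨1, 1, by simp, by simpa using hmem⟩, by positivity⟩, ?_⟩
  rintro _ ⟨⟨p, q, rfl, hstar⟩, hpos⟩
  have hq : 1 ≤ q := one_le_of_star_lt_one hε hη hpos (hΩ hstar).2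
  have hp : (1 : ℝ) ≤ p := by exact_mod_cast one_le_of_neg_lt_star hε hq (hΩ hstar).1
  have hq_cast : (1 : ℝ) ≤ q := by exact_mod_cast hq
  linarith [le_mul_of_one_le_left hη hq_cast]

lemma isLeast_pos_cutProject_one_add_two_mul_eta (hε : 0 ≤ ε) (hη : 0 ≤ η)
    (hΩ : Ω ⊆ Set.Ioo (-ε) (1 - ε)) (hmem : 1 - 2 * ε ∈ Ω) :
    IsLeast {z ∈ cutProject ε η Ω | 0 < z} (1 + 2 * η) := by
  refine ⟨⟨⟨1, 2, by simp, by simpa using hmem⟩, by positivity⟩, ?_⟩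
  rintro _ ⟨⟨p, q, rfl, hstar⟩, hpos⟩
  obtain ⟨hlower, hupper⟩ := hΩ hstar
  have hq : 1 ≤ q := one_le_of_star_lt_one hε hη hpos (by linarith)
  have hp : (1 : ℝ) ≤ p := by exact_mod_cast one_le_of_neg_lt_star hε hq hlower
  have hq_ne : q ≠ 1 := by
    rintro rfl
    rw [Int.cast_one, one_mul] at hupper
    linarith
  have hq_two : (2 : ℝ) ≤ q := by exact_mod_cast (show 2 ≤ q by omega)
  linarith [mul_le_mul_of_nonneg_right hq_two hη]

end LeastPositive

section Translation

variable {ε η : ℝ} {Ω : Set ℝ}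

lemma lattice_add_mem_cutProject_iff (a b : ℤ) (d : ℝ) :
    (a : ℝ) + b * η + d ∈ cutProject ε η Ω ↔
      d ∈ cutProject ε η (((a : ℝ) - b * ε + ·) ⁻¹' Ω) := by
  constructor
  · rintro ⟨a', b', heq, hstar⟩
    refine ⟨a' - a, b' - b, by push_cast; linarith, ?_⟩
    rw [Set.mem_preimage]
    convert hstar using 1
    push_cast
    ring
  · rintro ⟨p, q, rfl, hstar⟩
    refine ⟨a + p, b + q, by push_cast; ring, ?_⟩
    rw [Set.mem_preimage] at hstar
    convert hstar using 1
    push_cast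
    ring

lemma isLeast_cutProject_gt_of_isLeast_pos {a b : ℤ} {d : ℝ}
    (hd : IsLeast {z ∈ cutProject ε η (((a : ℝ) - b * ε + ·) ⁻¹' Ω) | 0 < z} d) :
    IsLeast {z ∈ cutProject ε η Ω | (a : ℝ) + b * η < z} (a + b * η + d) := by
  obtain ⟨⟨hmem, hpos⟩, hmin⟩ := hd
  refine ⟨⟨(lattice_add_mem_cutProject_iff a b d).mpr hmem, by linarith⟩, ?_⟩
  rintro z ⟨hz, hlt⟩
  rw [← add_sub_cancel ((a : ℝ) + b * η) z, lattice_add_mem_cutProject_iff] at hz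
  linarith [hmin ⟨hz, sub_pos.mpr hlt⟩]

end Translation

section Successor

variable {ε η l c : ℝ} {a b : ℤ}

lemma isLeast_cutProject_Ico_gt_one_add_eta (hε : ε ∈ Set.Icc 0 1) (hη : 0 ≤ η) (hl : l ≤ 1)
    (hstar : (a : ℝ) - b * ε ∈ Set.Ico c (c + l - 1 + ε)) :
    IsLeast {z ∈ cutProject ε η (Set.Ico c (c + l)) | (a : ℝ) + b * η < z}
      (a + b * η + (1 + η)) := by
  obtain ⟨hlower, hupper⟩ := hstar
  refine isLeast_cutProject_gt_of_isLeast_pos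
    (isLeast_pos_cutProject_one_add_eta hε.1 hη ?_ ⟨by linarith [hε.2], by linarith⟩)
  rintro w ⟨hw, hw'⟩
  constructor <;> linarith

lemma isLeast_cutProject_Ico_gt_one_add_two_mul_eta (hε : 0 ≤ ε) (hη : 0 ≤ η)
    (hl : max (1 - ε) ε ≤ l)
    (hstar : (a : ℝ) - b * ε ∈ Set.Ico (c + l - 1 + ε) (c + ε)) :
    IsLeast {z ∈ cutProject ε η (Set.Ico c (c + l)) | (a : ℝ) + b * η < z}
      (a + b * η + (1 + 2 * η)) := by
  obtain ⟨hlower, hupper⟩ := hstar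
  obtain ⟨hl_one_sub, hl_self⟩ := max_le_iff.mp hl
  refine isLeast_cutProject_gt_of_isLeast_pos
    (isLeast_pos_cutProject_one_add_two_mul_eta hε hη ?_ ⟨by linarith, by linarith⟩)
  rintro w ⟨hw, hw'⟩
  constructor <;> linarith

lemma isLeast_cutProject_Ico_gt_eta (hε : 0 ≤ ε) (hη : 0 < η) (hl : l ≤ 1)
    (hstar : (a : ℝ) - b * ε ∈ Set.Ico (c + ε) (c + l)) :
    IsLeast {z ∈ cutProject ε η (Set.Ico c (c + l)) | (a : ℝ) + b * η < z}
      (a + b * η + η) := by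
  obtain ⟨hlower, hupper⟩ := hstar
  refine isLeast_cutProject_gt_of_isLeast_pos
    (isLeast_pos_cutProject_eta hε hη ?_ ⟨by linarith, by linarith⟩)
  rintro w ⟨hw, hw'⟩
  constructor <;> linarith

end Successor

theorem cutProject_gaps_special_general (ε η l c : ℝ) (hη : 0 < η) (hl₁ : max (1 - ε) ε ≤ l)
    (hl₂ : l ≤ 1) (a b : ℤ) (hstar : (a : ℝ) - b * ε ∈ Set.Ico c (c + l)) :
    ∃ y : ℝ,
      IsLeast {z ∈ cutProject ε η (Set.Ico c (c + l)) | (a : ℝ) + b * η < z} y ∧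
      ((a : ℝ) - b * ε ∈ Set.Ico c (c + l - 1 + ε) → y = a + b * η + (1 + η)) ∧
      ((a : ℝ) - b * ε ∈ Set.Ico (c + l - 1 + ε) (c + ε) → y = a + b * η + (1 + 2 * η)) ∧
      ((a : ℝ) - b * ε ∈ Set.Ico (c + ε) (c + l) → y = a + b * η + η) := by
  have hε : ε ∈ Set.Icc 0 1 :=
    ⟨by linarith [le_max_left (1 - ε) ε], by linarith [le_max_right (1 - ε) ε]⟩
  rcases lt_or_ge ((a : ℝ) - b * ε) (c + l - 1 + ε) with hleft | hleft
  · exact ⟨_, isLeast_cutProject_Ico_gt_one_add_eta hε hη.le hl₂ ⟨hstar.1, hleft⟩,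
      fun _ ↦ rfl, fun h ↦ absurd h.1 hleft.not_ge, fun h ↦ by linarith [h.1]⟩
  rcases lt_or_ge ((a : ℝ) - b * ε) (c + ε) with hright | hright
  · exact ⟨_, isLeast_cutProject_Ico_gt_one_add_two_mul_eta hε.1 hη.le hl₁ ⟨hleft, hright⟩,
      fun h ↦ absurd h.2 hleft.not_gt, fun _ ↦ rfl, fun h ↦ absurd h.1 hright.not_ge⟩
  · exact ⟨_, isLeast_cutProject_Ico_gt_eta hε.1 hη hl₂ ⟨hright, hstar.2⟩,
      fun h ↦ absurd h.2 hleft.not_gt, fun h ↦ absurd h.2 hright.not_gt, fun _ ↦ rfl⟩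

theorem cutProject_gaps_special (ε η l c : ℝ) (hε : Irrational ε)
    (hεm : ε ∈ Set.Ioo (0 : ℝ) 1) (hη : Irrational η) (hηpos : 0 < η)
    (hl₁ : max (1 - ε) ε < l) (hl₂ : l ≤ 1) :
    -- for every point x = a + bη of Σ = Σ_{ε,η}([c, c+l)) :
    ∀ a b : ℤ, (a : ℝ) - (b : ℝ) * ε ∈ Set.Ico c (c + l) →
      ∃ y : ℝ,
        IsLeast {z ∈ cutProject ε η (Set.Ico c (c + l)) | (a : ℝ) + (b : ℝ) * η < z} y ∧
        -- Δ₁ = 1 + η :  y = x + 1 + η  if  x* ∈ [c, c+l−1+ε)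
        ((a : ℝ) - (b : ℝ) * ε ∈ Set.Ico c (c + l - 1 + ε) →
          y = (a : ℝ) + (b : ℝ) * η + (1 + η)) ∧
        -- y = x + 1 + 2η  if  x* ∈ [c+l−1+ε, c+ε)
        ((a : ℝ) - (b : ℝ) * ε ∈ Set.Ico (c + l - 1 + ε) (c + ε) →
          y = (a : ℝ) + (b : ℝ) * η + (1 + 2 * η)) ∧
        -- Δ₂ = η :  y = x + η  if  x* ∈ [c+ε, c+l)
        ((a : ℝ) - (b : ℝ) * ε ∈ Set.Ico (c + ε) (c + l) →
          y = (a : ℝ) + (b : ℝ) * η + η) :=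
  cutProject_gaps_special_general ε η l c hηpos hl₁.le hl₂
end

section
/- Let ε ∈ (0,1) be irrational, max(ε, 1−ε) < l < 1 and c ≤ 0 < c + l, and let T be the associated exchange of three intervals on [c, c+l). Let x₀ ∈ [c, c+l). Then there exists a two-sided trajectory t : ℤ → [c, c+l) with t(0) = x₀ and t(n+1) = T(t(n)) for all n ∈ ℤ, and for any such trajectory, {t(n) : n ∈ ℤ} = (x₀ + ℤ[ε]) ∩ [c, c+l). -/
/-- The set `ℤ[ε] = {a + bε : a, b ∈ ℤ}`. -/
def Zbr (ε : ℝ) : Set ℝ := {x | ∃ a b : ℤ, x = (a : ℝ) + (b : ℝ) * ε}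

/-- The exchange of three intervals on `[c, c+l)` with parameters `ε, l, c`
(̃permutation (321)): `T(x) = x+1−ε` on `[c, c+l−1+ε)`, `T(x) = x+1−2ε` on
`[c+l−1+ε, c+ε)`, and `T(x) = x−ε` on `[c+ε, c+l)`. -/
noncomputable def T3 (ε l c : ℝ) (x : ℝ) : ℝ :=
  if x < c + l - 1 + ε then x + 1 - ε
  else if x < c + ε then x + 1 - 2 * ε
  else x - ε

/-!
Modulo `1` all three branches of `T3 ε l c` are rotations: the outer two by `-ε`, the middle one by
`-2ε`. A point of the middle interval is one that the rotation by `-ε` throws into the gap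
`[c + l, c + 1)`, so `T3 ε l c` is the first-return map of this rotation to the arc `[c, c + l)`.
The orbits of a first-return map are the traces of the orbits of the ambient permutation, and the
rotation orbit of `x₀` lifts to `x₀ + ℤ[ε]`.
-/

open Set

section FirstReturn

variable {α : Type*} {f : Equiv.Perm α} {A : Set α} {x y : α}

/-- `y` is the first point of `A` on the forward `f`-orbit of `x`, not counting `x` itself. Stated
as a relation, so that it makes sense also when `x ∉ A` or `x` never returns to `A`. -/
def IsFirstReturn (f : Equiv.Perm α) (A : Set α) (x y : α) : Prop :=
  y ∈ A ∧ ∃ k : ℕ, 0 < k ∧ (f ^ k) x = y ∧ ∀ j, 0 < j → j < k → (f ^ j) x ∉ A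

theorem isFirstReturn_apply (h : f x ∈ A) : IsFirstReturn f A x (f x) :=
  ⟨h, 1, one_pos, by rw [pow_one], fun _ _ _ => by lia⟩

theorem isFirstReturn_apply_apply (h₁ : f x ∉ A) (h₂ : f (f x) ∈ A) :
    IsFirstReturn f A x (f (f x)) := by
  refine ⟨h₂, 2, two_pos, by rw [pow_two, Equiv.Perm.mul_apply], fun j hj₀ hj₂ => ?_⟩
  obtain rfl : j = 1 := by lia
  rwa [pow_one]

namespace IsFirstReturn

protected theorem inv (h : IsFirstReturn f A x y) (hx : x ∈ A) : IsFirstReturn f⁻¹ A y x := by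
  obtain ⟨-, k, hk, rfl, hA⟩ := h
  refine ⟨hx, k, hk, by rw [inv_pow, Equiv.Perm.inv_eq_iff_eq], fun j hj₀ hjk => ?_⟩
  have hsplit : (f ^ k) x = (f ^ j) ((f ^ (k - j)) x) := by
    rw [← Equiv.Perm.mul_apply, ← pow_add, Nat.add_sub_cancel' hjk.le]
  rw [inv_pow, Equiv.Perm.inv_eq_iff_eq.2 hsplit]
  exact hA (k - j) (by lia) (by lia)

theorem sameCycle (h : IsFirstReturn f A x y) : f.SameCycle x y := by
  obtain ⟨-, k, -, hk, -⟩ := h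
  exact ⟨k, by rwa [zpow_natCast]⟩

variable {t : ℤ → α}

theorem sameCycle_orbit (ht : ∀ n, IsFirstReturn f A (t n) (t (n + 1))) (n : ℤ) :
    f.SameCycle (t 0) (t n) := by
  induction n using Int.induction_on with
  | zero => exact .refl f (t 0)
  | succ n ih => exact ih.trans (ht n).sameCycle
  | pred n ih =>
    have hstep := (ht (-n - 1)).sameCycle
    rw [sub_add_cancel] at hstep
    exact ih.trans hstep.symm

theorem mem_range_of_pow_apply_eq (ht : ∀ n, IsFirstReturn f A (t n) (t (n + 1))) (hy : y ∈ A)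
    (m : ℕ) (n : ℤ) (h : (f ^ m) (t n) = y) : y ∈ range t := by
  induction m using Nat.strong_induction_on generalizing n with
  | _ m ih =>
    obtain rfl | hm := m.eq_zero_or_pos
    · exact ⟨n, h⟩
    obtain ⟨-, k, hk, hkt, hA⟩ := ht n
    have hkm : k ≤ m := by
      by_contra! hmk
      exact hA m hm hmk (h ▸ hy)
    refine ih (m - k) (by lia) (n + 1) ?_
    rw [← hkt, ← Equiv.Perm.mul_apply, ← pow_add, Nat.sub_add_cancel hkm, h]

theorem range_eq (ht : ∀ n, IsFirstReturn f A (t n) (t (n + 1))) :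
    range t = {y | f.SameCycle (t 0) y} ∩ A := by
  have htA (n : ℤ) : t n ∈ A := by simpa only [sub_add_cancel] using (ht (n - 1)).1
  refine Subset.antisymm (range_subset_iff.2 fun n => ⟨sameCycle_orbit ht n, htA n⟩) ?_
  rintro y ⟨⟨m, hm⟩, hy⟩
  obtain ⟨m, rfl | rfl⟩ := m.eq_nat_or_neg
  · exact mem_range_of_pow_apply_eq ht hy m 0 (by rwa [zpow_natCast] at hm)
  · -- The time-reversed trajectory is a first-return orbit of `f⁻¹`.
    have hrev (n : ℤ) : IsFirstReturn f⁻¹ A (t (-n)) (t (-(n + 1))) := by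
      have hstep := (ht (-(n + 1))).inv (htA _)
      rwa [show -(n + 1) + 1 = -n by ring] at hstep
    have hy' : y ∈ range fun n => t (-n) := by
      refine mem_range_of_pow_apply_eq hrev hy m 0 ?_
      rwa [zpow_neg, zpow_natCast, ← inv_pow] at hm
    exact (neg_surjective (G := ℤ)).range_comp t ▸ hy'

end IsFirstReturn

end FirstReturn

theorem exists_twoSided_orbit_of_bijOn {α : Type*} {s : Set α} {f : α → α} (hf : BijOn f s s)
    {x : α} (hx : x ∈ s) :
    ∃ t : ℤ → α, t 0 = x ∧ (∀ n, t n ∈ s) ∧ ∀ n, t (n + 1) = f (t n) := by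
  let e : Equiv.Perm s := hf.equiv f
  refine ⟨fun n => (e ^ n) ⟨x, hx⟩, rfl, fun n => Subtype.coe_prop _, fun n => ?_⟩
  have hstep : (e ^ (n + 1)) ⟨x, hx⟩ = e ((e ^ n) ⟨x, hx⟩) := by
    rw [add_comm, zpow_one_add, Equiv.Perm.mul_apply]
  exact congrArg Subtype.val hstep

section UnitCircle

theorem unitAddCircle_coe_add_intCast (x : ℝ) (n : ℤ) : ((x + n : ℝ) : UnitAddCircle) = x := by
  have hn : ((n : ℝ) : UnitAddCircle) = 0 := (AddCircle.coe_eq_zero_iff 1).2 ⟨n, zsmul_one n⟩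
  rw [AddCircle.coe_add, hn, add_zero]

theorem Zbr_neg (ε : ℝ) : Zbr (-ε) = Zbr ε := by
  ext x
  refine exists_congr fun a => (Equiv.neg ℤ).exists_congr fun b => ?_
  rw [Equiv.neg_apply, Int.cast_neg, neg_mul, mul_neg]

/-- The rotation by `α` of the circle `ℝ/ℤ`, with the angle taken in `ℝ`. -/
def circleRotation (α : ℝ) : Equiv.Perm UnitAddCircle := Equiv.addRight (α : UnitAddCircle)

theorem circleRotation_apply_coe (α x : ℝ) :
    circleRotation α x = ((x + α : ℝ) : UnitAddCircle) :=
  (AddCircle.coe_add 1 x α).symm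

theorem circleRotation_zpow_apply_coe (α x : ℝ) (k : ℤ) :
    (circleRotation α ^ k) x = ((x + k * α : ℝ) : UnitAddCircle) := by
  simp only [circleRotation, Equiv.zsmul_addRight, Equiv.coe_addRight, ← zsmul_eq_mul,
    AddCircle.coe_add, AddCircle.coe_zsmul]

theorem sameCycle_circleRotation_coe_iff {α x y : ℝ} :
    (circleRotation α).SameCycle x y ↔ ∃ z ∈ Zbr α, y = x + z := by
  constructor
  · rintro ⟨k, hk⟩
    rw [circleRotation_zpow_apply_coe, eq_comm, ← sub_eq_zero, ← AddCircle.coe_sub,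
      AddCircle.coe_eq_zero_iff] at hk
    obtain ⟨n, hn⟩ := hk
    rw [zsmul_one] at hn
    exact ⟨n + k * α, ⟨n, k, rfl⟩, by linarith⟩
  · rintro ⟨_, ⟨a, b, rfl⟩, rfl⟩
    refine ⟨b, ?_⟩
    rw [circleRotation_zpow_apply_coe, ← unitAddCircle_coe_add_intCast _ a]
    congr 1
    ring

variable {c l x : ℝ}

/-- The arc of the circle `ℝ/ℤ` covered by `[c, c + l)`. -/
def circleArc (c l : ℝ) : Set UnitAddCircle := (fun x : ℝ => (x : UnitAddCircle)) '' Ico c (c + l)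

theorem coe_mem_circleArc (hx : x ∈ Ico c (c + l)) : (x : UnitAddCircle) ∈ circleArc c l :=
  mem_image_of_mem _ hx

theorem injOn_unitAddCircle_coe_Ico (hl : l ≤ 1) :
    InjOn (fun x : ℝ => (x : UnitAddCircle)) (Ico c (c + l)) := by
  have hsub : Ico c (c + l) ⊆ Ico c (c + 1) := Ico_subset_Ico_right (by linarith)
  exact fun x hx y hy h => (AddCircle.coe_eq_coe_iff_of_mem_Ico (hsub hx) (hsub hy)).1 h

theorem coe_notMem_circleArc (hx : x ∈ Ico (c + l) (c + 1)) :
    (x : UnitAddCircle) ∉ circleArc c l := by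
  rintro ⟨y, hy, hyx⟩
  obtain ⟨hcy, hyl⟩ := hy
  obtain ⟨hlx, hx1⟩ := hx
  have hyx_eq : y = x :=
    injOn_unitAddCircle_coe_Ico le_rfl ⟨hcy, by linarith⟩ ⟨by linarith, hx1⟩ hyx
  linarith

end UnitCircle

section ThreeIntervalExchange

variable {ε l c : ℝ}

theorem mapsTo_T3 (hl₁ : max ε (1 - ε) ≤ l) (hl₂ : l ≤ 1) :
    MapsTo (T3 ε l c) (Ico c (c + l)) (Ico c (c + l)) := by
  obtain ⟨hε, hε'⟩ := max_le_iff.1 hl₁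
  rintro x ⟨hcx, hxl⟩
  unfold T3
  split_ifs <;> constructor <;> linarith

theorem leftInvOn_T3_one_sub (hl : l ≤ 1) :
    LeftInvOn (T3 (1 - ε) l c) (T3 ε l c) (Ico c (c + l)) := by
  rintro x ⟨hcx, hxl⟩
  unfold T3
  split_ifs <;> linarith

theorem bijOn_T3 (hl₁ : max ε (1 - ε) ≤ l) (hl₂ : l ≤ 1) :
    BijOn (T3 ε l c) (Ico c (c + l)) (Ico c (c + l)) := by
  have hright : LeftInvOn (T3 ε l c) (T3 (1 - ε) l c) (Ico c (c + l)) := by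
    simpa only [sub_sub_cancel] using leftInvOn_T3_one_sub (ε := 1 - ε) hl₂
  refine InvOn.bijOn ⟨leftInvOn_T3_one_sub hl₂, hright⟩ (mapsTo_T3 hl₁ hl₂) (mapsTo_T3 ?_ hl₂)
  rwa [sub_sub_cancel, max_comm]

theorem isFirstReturn_T3 (hl₁ : max ε (1 - ε) ≤ l) (hl₂ : l ≤ 1) {x : ℝ}
    (hx : x ∈ Ico c (c + l)) :
    IsFirstReturn (circleRotation (-ε)) (circleArc c l) x (T3 ε l c x) := by
  have hTx := coe_mem_circleArc (mapsTo_T3 hl₁ hl₂ hx)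
  have hR (y : ℝ) : circleRotation (-ε) y = ((y - ε : ℝ) : UnitAddCircle) :=
    circleRotation_apply_coe (-ε) y
  have hR' (y : ℝ) : circleRotation (-ε) y = ((y + 1 - ε : ℝ) : UnitAddCircle) := by
    rw [hR, ← unitAddCircle_coe_add_intCast _ 1, Int.cast_one, sub_add_eq_add_sub]
  have hRR : circleRotation (-ε) (circleRotation (-ε) x) =
      ((x + 1 - 2 * ε : ℝ) : UnitAddCircle) := by
    rw [hR', hR]
    congr 1
    ring
  unfold T3 at hTx ⊢
  split_ifs at hTx ⊢ with hleft hmid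
  · rw [← hR'] at hTx ⊢
    exact isFirstReturn_apply hTx
  · have hgap : circleRotation (-ε) x ∉ circleArc c l := by
      rw [hR']
      exact coe_notMem_circleArc ⟨by linarith, by linarith⟩
    rw [← hRR] at hTx ⊢
    exact isFirstReturn_apply_apply hgap hTx
  · rw [← hR] at hTx ⊢
    exact isFirstReturn_apply hTx

theorem range_eq_of_T3_orbit (hl₁ : max ε (1 - ε) ≤ l) (hl₂ : l ≤ 1) {t : ℤ → ℝ}
    (ht : ∀ n, t n ∈ Ico c (c + l)) (hT : ∀ n, t (n + 1) = T3 ε l c (t n)) :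
    range t = {y | ∃ z ∈ Zbr ε, y = t 0 + z} ∩ Ico c (c + l) := by
  have hreturn (n : ℤ) : IsFirstReturn (circleRotation (-ε)) (circleArc c l)
      (t n) (t (n + 1)) := hT n ▸ isFirstReturn_T3 hl₁ hl₂ (ht n)
  have hcircle := IsFirstReturn.range_eq (t := fun n => (t n : UnitAddCircle)) hreturn
  have hIco : range t ⊆ Ico c (c + l) := range_subset_iff.2 ht
  ext y
  suffices hlift : y ∈ Ico c (c + l) → (y ∈ range t ↔ ∃ z ∈ Zbr ε, y = t 0 + z) from
    ⟨fun hy => ⟨(hlift (hIco hy)).1 hy, hIco hy⟩, fun hy => (hlift hy.2).2 hy.1⟩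
  intro hy
  calc y ∈ range t
    _ ↔ (y : UnitAddCircle) ∈ range fun n => (t n : UnitAddCircle) :=
      exists_congr fun n => ((injOn_unitAddCircle_coe_Ico hl₂).eq_iff (ht n) hy).symm
    _ ↔ (circleRotation (-ε)).SameCycle (t 0) y := by
      rw [hcircle]
      exact and_iff_left (coe_mem_circleArc hy)
    _ ↔ ∃ z ∈ Zbr ε, y = t 0 + z := by
      rw [sameCycle_circleRotation_coe_iff, Zbr_neg]

end ThreeIntervalExchange

theorem threeIet_orbit_general (ε l c x₀ : ℝ) (hl₁ : max ε (1 - ε) ≤ l) (hl₂ : l ≤ 1)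
    (hx₀ : x₀ ∈ Set.Ico c (c + l)) :
    (∃ t : ℤ → ℝ, t 0 = x₀ ∧ (∀ n, t n ∈ Set.Ico c (c + l)) ∧
      (∀ n, t (n + 1) = T3 ε l c (t n))) ∧
    ∀ t : ℤ → ℝ, t 0 = x₀ → (∀ n, t n ∈ Set.Ico c (c + l)) →
      (∀ n, t (n + 1) = T3 ε l c (t n)) →
      Set.range t = {y | ∃ z ∈ Zbr ε, y = x₀ + z} ∩ Set.Ico c (c + l) := by
  refine ⟨exists_twoSided_orbit_of_bijOn (bijOn_T3 hl₁ hl₂) hx₀, ?_⟩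
  rintro t rfl ht hT
  exact range_eq_of_T3_orbit hl₁ hl₂ ht hT

theorem threeIet_orbit (ε l c x₀ : ℝ) (hε : Irrational ε) (hεm : ε ∈ Set.Ioo (0 : ℝ) 1)
    (hl₁ : max ε (1 - ε) < l) (hl₂ : l < 1) (hc₁ : c ≤ 0) (hc₂ : 0 < c + l)
    (hx₀ : x₀ ∈ Set.Ico c (c + l)) :
    (∃ t : ℤ → ℝ, t 0 = x₀ ∧ (∀ n, t n ∈ Set.Ico c (c + l)) ∧
      (∀ n, t (n + 1) = T3 ε l c (t n))) ∧
    ∀ t : ℤ → ℝ, t 0 = x₀ → (∀ n, t n ∈ Set.Ico c (c + l)) →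
      (∀ n, t (n + 1) = T3 ε l c (t n)) →
      Set.range t = {y | ∃ z ∈ Zbr ε, y = x₀ + z} ∩ Set.Ico c (c + l) := by
  exact threeIet_orbit_general ε l c x₀ hl₁.le hl₂.le hx₀
end

section
/- Let α₁, α₂, α₃ > 0 be such that α₁+α₂ and α₂+α₃ are linearly independent over ℚ, and let T̃ be the exchange of three intervals on I = [0, α₁+α₂+α₃) with permutation (321): T̃(x) = x + α₂ + α₃ for x ∈ [0, α₁), T̃(x) = x − α₁ + α₃ for x ∈ [α₁, α₁+α₂), T̃(x) = x − α₁ − α₂ for x ∈ [α₁+α₂, α₁+α₂+α₃). Let J = [ĉ, ĉ+l̂) ⊆ I with l̂ > 0. Then: (a) for every x ∈ J there exists n ≥ 1 with T̃ⁿ(x) ∈ J; and (b) denoting by r(x) the least such n and T_J(x) := T̃^{r(x)}(x), there exist points β₁, β₂ with ĉ ≤ β₁ ≤ β₂ ≤ ĉ+l̂ such that, setting λ₁ = β₁ − ĉ, λ₂ = β₂ − β₁, λ₃ = ĉ + l̂ − β₂, one has T_J(x) = x + λ₂ + λ₃ for all x ∈ [ĉ, β₁), T_J(x) = x + λ₃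 − λ₁ for all x ∈ [β₁, β₂), and T_J(x) = x − λ₁ − λ₂ for all x ∈ [β₂, ĉ+l̂). (Thus the first return map T_J is an exchange of three intervals with permutation (321), degenerating to an exchange of two intervals with permutation (21) when some λᵢ = 0.) -/
/-- The exchange of three intervals on `[0, α₁+α₂+α₃)` with permutation (321)
and interval lengths `α₁, α₂, α₃`. -/
noncomputable def Tiet (α₁ α₂ α₃ : ℝ) (x : ℝ) : ℝ :=
  if x < α₁ then x + α₂ + α₃
  else if x < α₁ + α₂ then x - α₁ + α₃
  else x - α₁ - α₂

/-!
With `θ = α₂ + α₃` and `L = (α₁ + α₂) + (α₂ + α₃)`, the map `Tiet α₁ α₂ α₃` is the first return map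
to `[0, α₁ + α₂ + α₃)` of the rotation by `θ` on the circle of length `L`: it is one step of the
rotation outside the middle interval, whose points leave `[0, α₁ + α₂ + α₃)` for exactly one step.
Hence its first return map to `J = [c, c + l)` is the first return map of the rotation to `J`.

For the rotation, let `n` be the least positive time at which it moves points forward by some
`a ∈ [0, l)`, and `m` the least positive time at which it moves them backward by some `b ∈ [0, l)`;
both exist since `θ` has finite order or a dense forward orbit. Points of `J` first return at time
`n` if `x + a ∈ J`, at time `m` if `x - b ∈ J`, and otherwise at time `n + m`, to `x + a - b`: the
difference between an earlier return and one of the two minimal moves would be a forward or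
backward move by less than `l` at a time smaller than `n` or `m`. Either `l ≤ a + b`, and these
cases are the three intervals, or `a = b = 0`, and the first return map is the identity.
-/

open Set Filter Topology Function

section Induced

variable {X Y : Type*}

/-- The positive times at which the orbit of `x` under `f` visits `s`. The first return time is the
least element of this set. -/
def returnTimes (f : X → X) (s : Set X) (x : X) : Set ℕ := {n | 0 < n ∧ f^[n] x ∈ s}

/-- `g` is the first return map of `f` to the set parametrized by `s` through `π`, and `k` is the
first return time. The coordinate `π` lets `g` act on real numbers while `f` acts on a circle. -/
structure IsInducedMap (f : Y → Y) (π : X → Y) (s : Set X) (g : X → X) (k : X → ℕ) : Prop where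
  injOn : InjOn π s
  mapsTo : MapsTo g s s
  isLeast_returnTimes : ∀ x ∈ s, IsLeast (returnTimes f (π '' s) (π x)) (k x)
  iterate_eq : ∀ x ∈ s, f^[k x] (π x) = π (g x)

namespace IsInducedMap

variable {f : Y → Y} {π : X → Y} {s t : Set X} {g : X → X} {k : X → ℕ} {x y : X} {N : ℕ}

theorem iterate_birkhoffSum (h : IsInducedMap f π s g k) (hx : x ∈ s) (n : ℕ) :
    f^[birkhoffSum g k n x] (π x) = π (g^[n] x) := by
  induction n with
  | zero => simp
  | succ n ih =>
    rw [birkhoffSum_succ, add_comm, iterate_add_apply, ih,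
      h.iterate_eq _ (h.mapsTo.iterate n hx), iterate_succ_apply']

theorem strictMono_birkhoffSum (h : IsInducedMap f π s g k) (hx : x ∈ s) :
    StrictMono (birkhoffSum g k · x) :=
  strictMono_nat_of_lt_succ fun n => by
    rw [birkhoffSum_succ]
    exact Nat.lt_add_of_pos_right (h.isLeast_returnTimes _ (h.mapsTo.iterate n hx)).1.1

theorem exists_birkhoffSum_eq (h : IsInducedMap f π s g k) (hx : x ∈ s)
    (hN : N ∈ returnTimes f (π '' s) (π x)) : ∃ n, birkhoffSum g k n x = N := by
  have hmono := h.strictMono_birkhoffSum hx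
  obtain ⟨n, hlt, hle⟩ :=
    hmono.exists_between_of_tendsto_atTop hmono.tendsto_atTop (x := N) (by simpa using hN.1)
  have hreturn : N - birkhoffSum g k n x ∈ returnTimes f (π '' s) (π (g^[n] x)) := by
    refine ⟨Nat.sub_pos_of_lt hlt, ?_⟩
    rw [← h.iterate_birkhoffSum hx, ← iterate_add_apply, Nat.sub_add_cancel hlt.le]
    exact hN.2
  have hk := (h.isLeast_returnTimes _ (h.mapsTo.iterate n hx)).2 hreturn
  rw [birkhoffSum_succ] at hle
  exact ⟨n + 1, by rw [birkhoffSum_succ]; omega⟩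

theorem image_birkhoffSum_returnTimes (h : IsInducedMap f π s g k) (hts : t ⊆ s) (hx : x ∈ s) :
    (birkhoffSum g k · x) '' returnTimes g t x = returnTimes f (π '' t) (π x) := by
  have hpos (n : ℕ) : 0 < birkhoffSum g k n x ↔ 0 < n := by
    simpa using (h.strictMono_birkhoffSum hx).lt_iff_lt (a := 0) (b := n)
  ext N
  constructor
  · rintro ⟨n, ⟨hn, hnt⟩, rfl⟩
    exact ⟨(hpos n).2 hn, _, hnt, (h.iterate_birkhoffSum hx n).symm⟩
  · rintro ⟨hN, hNt⟩
    obtain ⟨n, rfl⟩ := h.exists_birkhoffSum_eq hx ⟨hN, image_mono hts hNt⟩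
    rw [h.iterate_birkhoffSum hx, h.injOn.mem_image_iff hts (h.mapsTo.iterate n hx)] at hNt
    exact ⟨n, ⟨(hpos n).1 hN, hNt⟩, rfl⟩

theorem exists_isLeast_returnTimes (h : IsInducedMap f π s g k) (hts : t ⊆ s) (hx : x ∈ s)
    (hN : IsLeast (returnTimes f (π '' t) (π x)) N) (hy : y ∈ s) (hxy : f^[N] (π x) = π y) :
    ∃ r, IsLeast (returnTimes g t x) r ∧ g^[r] x = y := by
  rw [← h.image_birkhoffSum_returnTimes hts hx] at hN
  obtain ⟨⟨r, hr, rfl⟩, hleast⟩ := hN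
  refine ⟨r, ⟨hr, fun m hm => ?_⟩, ?_⟩
  · exact (h.strictMono_birkhoffSum hx).le_iff_le.1 (hleast (mem_image_of_mem _ hm))
  · exact h.injOn (h.mapsTo.iterate r hx) hy ((h.iterate_birkhoffSum hx r).symm.trans hxy)

end IsInducedMap

end Induced

section Rotation

variable {L l a b c t x : ℝ} {θ : AddCircle L} {m n N : ℕ}

theorem mem_returnTimes_add_right {s : Set ℝ} :
    N ∈ returnTimes (· + θ) ((↑) '' s) (x : AddCircle L) ↔
      0 < N ∧ ∃ t : ℝ, x + t ∈ s ∧ (t : AddCircle L) = N • θ := by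
  simp only [returnTimes, mem_ofPred_eq, add_right_iterate, mem_image]
  refine and_congr_right fun _ => ⟨?_, ?_⟩
  · rintro ⟨y, hy, hxy⟩
    exact ⟨y - x, by simpa using hy, by simp [hxy]⟩
  · rintro ⟨t, ht, htN⟩
    exact ⟨x + t, ht, by simp [htN]⟩

/-- `n` is the least positive time at which the rotation by `θ` moves points forward by less than
`l`, and `a` is the length of that move. Backward moves are the forward moves of `-θ`. -/
structure IsLeastAdvance (θ : AddCircle L) (l : ℝ) (n : ℕ) (a : ℝ) : Prop where
  pos : 0 < n
  mem_Ico : a ∈ Ico 0 l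
  coe_eq : (a : AddCircle L) = n • θ
  le : ∀ m, 0 < m → ∀ t ∈ Ico 0 l, (t : AddCircle L) = m • θ → n ≤ m

theorem exists_nsmul_eq_coe_mem_Ico [Fact (0 < L)] (θ : AddCircle L) (hl : 0 < l) :
    ∃ n : ℕ, 0 < n ∧ ∃ t ∈ Ico 0 l, (t : AddCircle L) = n • θ := by
  by_cases hθ : IsOfFinAddOrder θ
  · obtain ⟨n, hn, hnθ⟩ := isOfFinAddOrder_iff_nsmul_eq_zero.1 hθ
    exact ⟨n, hn, 0, ⟨le_rfl, hl⟩, by simp [hnθ]⟩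
  · have hdense : DenseRange (· • θ : ℤ → AddCircle L) :=
      AddCircle.denseRange_zsmul_iff.2 (by simpa using hθ)
    have hcluster : MapClusterPt ((l / 2 : ℝ) : AddCircle L) atTop (· • θ : ℕ → AddCircle L) :=
      mapClusterPt_atTop_nsmul_iff_mem_topologicalClosure_zmultiples.2 (hdense _)
    have hnhds : ((↑) '' Ioo 0 l : Set (AddCircle L)) ∈ 𝓝 ((l / 2 : ℝ) : AddCircle L) :=
      (QuotientAddGroup.isOpenMap_coe _ isOpen_Ioo).mem_nhds
        (mem_image_of_mem _ ⟨half_pos hl, half_lt_self hl⟩)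
    obtain ⟨n, hn, t, ht, htn⟩ := frequently_atTop.1 (hcluster.frequently hnhds) 1
    exact ⟨n, hn, t, Ioo_subset_Ico_self ht, htn⟩

theorem exists_isLeastAdvance [Fact (0 < L)] (θ : AddCircle L) (hl : 0 < l) :
    ∃ n a, IsLeastAdvance θ l n a := by
  classical
  have h := exists_nsmul_eq_coe_mem_Ico θ hl
  obtain ⟨hn, a, ha, haθ⟩ := Nat.find_spec h
  exact ⟨Nat.find h, a, hn, ha, haθ, fun m hm t ht htm => Nat.find_min' h ⟨hm, t, ht, htm⟩⟩

theorem coe_sub_eq_nsmul_sub (ht : (t : AddCircle L) = m • θ) (ha : (a : AddCircle L) = n • θ)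
    (hmn : m ≤ n) : ((a - t : ℝ) : AddCircle L) = (n - m) • θ := by
  rw [AddCircle.coe_sub, ha, ht, sub_nsmul _ hmn, sub_eq_add_neg]

theorem coe_neg_eq_nsmul_neg (ht : (t : AddCircle L) = n • θ) :
    ((-t : ℝ) : AddCircle L) = n • -θ := by
  rw [AddCircle.coe_neg, ht, smul_neg]

namespace IsLeastAdvance

theorem le_of_sub_lt (h : IsLeastAdvance θ l n a) (hN : 0 < N) (ht : (t : AddCircle L) = N • θ)
    (htl : t < l) (hat : a - t < l) : n ≤ N := by
  obtain ht₀ | ht₀ := le_total 0 t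
  · exact h.le N hN t ⟨ht₀, htl⟩ ht
  · by_contra! hNn
    have := h.le (n - N) (by omega) (a - t) ⟨by linarith [h.mem_Ico.1], hat⟩
      (coe_sub_eq_nsmul_sub ht h.coe_eq hNn.le)
    omega

theorem add_le_of_lt [Fact (0 < L)] (h : IsLeastAdvance θ l n a) (h' : IsLeastAdvance (-θ) l m b)
    (hlL : l ≤ L) (hN : 0 < N) (ht : (t : AddCircle L) = N • θ) (ht₀ : 0 ≤ t) (hta : t < a) :
    n + m ≤ N := by
  obtain ⟨ha₀, hal⟩ := h.mem_Ico
  have hnN : n ≤ N := h.le N hN t ⟨ht₀, hta.trans hal⟩ ht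
  have hne : n ≠ N := by
    rintro rfl
    have : t = a := (AddCircle.coe_eq_coe_iff_of_mem_Ico (a := 0) (p := L)
      ⟨ht₀, by linarith⟩ ⟨ha₀, by linarith⟩).1 (ht.trans h.coe_eq.symm)
    exact hta.ne this
  have := h'.le (N - n) (by omega) (a - t) ⟨by linarith, by linarith⟩
    (by simpa using coe_neg_eq_nsmul_neg (coe_sub_eq_nsmul_sub h.coe_eq ht hnN))
  omega

theorem le_add_or_eq_zero [Fact (0 < L)] (h : IsLeastAdvance θ l n a)
    (h' : IsLeastAdvance (-θ) l m b) (hlL : l ≤ L) : l ≤ a + b ∨ a = 0 ∧ b = 0 := by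
  obtain ⟨ha₀, -⟩ := h.mem_Ico
  obtain ⟨hb₀, -⟩ := h'.mem_Ico
  have hb : ((-b : ℝ) : AddCircle L) = m • θ := by simpa using coe_neg_eq_nsmul_neg h'.coe_eq
  refine or_iff_not_imp_left.2 fun hab => ?_
  push Not at hab
  have hnm : n ≤ m := h.le_of_sub_lt h'.pos hb (by linarith) (by linarith)
  have hmn : m ≤ n := h'.le_of_sub_lt h.pos (coe_neg_eq_nsmul_neg h.coe_eq) (by linarith)
    (by linarith)
  have hsum : ((a + b : ℝ) : AddCircle L) = 0 := by
    simp [h.coe_eq, h'.coe_eq, hnm.antisymm hmn]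
  have := (AddCircle.coe_eq_zero_iff_of_mem_Ico ⟨by linarith, by linarith⟩).1 hsum
  exact ⟨by linarith, by linarith⟩

theorem isLeast_returnTimes_left (h : IsLeastAdvance θ l n a) (hx : c ≤ x) (hxa : x < c + l - a) :
    IsLeast (returnTimes (· + θ) ((↑) '' Ico c (c + l)) (x : AddCircle L)) n := by
  refine ⟨mem_returnTimes_add_right.2 ⟨h.pos, a, ⟨?_, ?_⟩, h.coe_eq⟩, fun N hN => ?_⟩
  · linarith [h.mem_Ico.1]
  · linarith
  · obtain ⟨hN₀, t, ⟨ht₁, ht₂⟩, ht⟩ := mem_returnTimes_add_right.1 hN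
    exact h.le_of_sub_lt hN₀ ht (by linarith) (by linarith)

theorem isLeast_returnTimes_right (h : IsLeastAdvance (-θ) l m b) (hxb : c + b ≤ x)
    (hx : x < c + l) :
    IsLeast (returnTimes (· + θ) ((↑) '' Ico c (c + l)) (x : AddCircle L)) m := by
  refine ⟨mem_returnTimes_add_right.2 ⟨h.pos, -b, ⟨?_, ?_⟩, ?_⟩, fun N hN => ?_⟩
  · linarith
  · linarith [h.mem_Ico.1]
  · simpa using coe_neg_eq_nsmul_neg h.coe_eq
  · obtain ⟨hN₀, t, ⟨ht₁, ht₂⟩, ht⟩ := mem_returnTimes_add_right.1 hN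
    exact h.le_of_sub_lt hN₀ (coe_neg_eq_nsmul_neg ht) (by linarith) (by linarith)

theorem isLeast_returnTimes_middle [Fact (0 < L)] (h : IsLeastAdvance θ l n a)
    (h' : IsLeastAdvance (-θ) l m b) (hlL : l ≤ L) (hxa : c + l - a ≤ x) (hxb : x < c + b) :
    IsLeast (returnTimes (· + θ) ((↑) '' Ico c (c + l)) (x : AddCircle L)) (n + m) := by
  obtain ⟨-, hal⟩ := h.mem_Ico
  obtain ⟨-, hbl⟩ := h'.mem_Ico
  refine ⟨mem_returnTimes_add_right.2
    ⟨Nat.add_pos_left h.pos m, a - b, ⟨?_, ?_⟩, ?_⟩, fun N hN => ?_⟩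
  · linarith
  · linarith
  · simp [h.coe_eq, h'.coe_eq, add_nsmul]
  · obtain ⟨hN₀, t, ⟨ht₁, ht₂⟩, ht⟩ := mem_returnTimes_add_right.1 hN
    obtain ht₀ | ht₀ := le_total 0 t
    · exact h.add_le_of_lt h' hlL hN₀ ht ht₀ (by linarith)
    · rw [add_comm]
      exact h'.add_le_of_lt ((neg_neg θ).symm ▸ h) hlL hN₀ (coe_neg_eq_nsmul_neg ht)
        (by linarith) (by linarith)

end IsLeastAdvance

theorem exists_firstReturn_rotation_eq_Tiet [Fact (0 < L)] (θ : AddCircle L) (c : ℝ) (hl : 0 < l)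
    (hlL : l ≤ L) :
    ∃ γ₁ γ₂ γ₃ : ℝ, 0 ≤ γ₁ ∧ 0 ≤ γ₂ ∧ 0 ≤ γ₃ ∧ γ₁ + γ₂ + γ₃ = l ∧
      ∀ x ∈ Ico c (c + l), ∃ N,
        IsLeast (returnTimes (· + θ) ((↑) '' Ico c (c + l)) (x : AddCircle L)) N ∧
        (x + N • θ : AddCircle L) = (c + Tiet γ₁ γ₂ γ₃ (x - c) : ℝ) := by
  obtain ⟨n, a, h⟩ := exists_isLeastAdvance θ hl
  obtain ⟨m, b, h'⟩ := exists_isLeastAdvance (-θ) hl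
  have hb : m • θ = -(b : AddCircle L) := by simp [h'.coe_eq]
  obtain hab | ⟨rfl, rfl⟩ := h.le_add_or_eq_zero h' hlL
  · refine ⟨l - a, a + b - l, l - b, by linarith [h.mem_Ico.2], by linarith,
      by linarith [h'.mem_Ico.2], by ring, fun x hx => ?_⟩
    unfold Tiet
    split_ifs with hleft hmiddle
    · refine ⟨n, h.isLeast_returnTimes_left hx.1 (by linarith), ?_⟩
      rw [← h.coe_eq, ← AddCircle.coe_add]
      ring_nf
    · refine ⟨n + m, h.isLeast_returnTimes_middle h' hlL (by linarith) (by linarith), ?_⟩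
      rw [add_nsmul, ← h.coe_eq, hb, ← AddCircle.coe_neg, ← AddCircle.coe_add,
        ← AddCircle.coe_add]
      ring_nf
    · refine ⟨m, h'.isLeast_returnTimes_right (by linarith) hx.2, ?_⟩
      rw [hb, ← AddCircle.coe_neg, ← AddCircle.coe_add]
      ring_nf
  · refine ⟨0, l, 0, le_rfl, hl.le, le_rfl, by ring, fun x hx =>
      ⟨n, h.isLeast_returnTimes_left hx.1 (by linarith [hx.2]), ?_⟩⟩
    have hfix : Tiet 0 l 0 (x - c) = x - c := by
      simp [Tiet, not_lt.2 (sub_nonneg.2 hx.1), sub_lt_iff_lt_add'.2 hx.2]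
    simp [hfix, ← h.coe_eq]

end Rotation

section ThreeIntervals

variable {α₁ α₂ α₃ : ℝ}

theorem mapsTo_Tiet (h₁ : 0 ≤ α₁) (h₂ : 0 ≤ α₂) (h₃ : 0 ≤ α₃) :
    MapsTo (Tiet α₁ α₂ α₃) (Ico 0 (α₁ + α₂ + α₃)) (Ico 0 (α₁ + α₂ + α₃)) := by
  rintro x ⟨hx₀, hx⟩
  unfold Tiet
  split_ifs with hleft hmiddle <;> constructor <;> linarith

/-- The number of steps of the rotation by `α₂ + α₃` on the circle of length
`(α₁ + α₂) + (α₂ + α₃)` that make up one step of `Tiet α₁ α₂ α₃`. -/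
noncomputable def tietTime (α₁ α₂ x : ℝ) : ℕ := if x ∈ Ico α₁ (α₁ + α₂) then 2 else 1

theorem coe_Tiet (α₁ α₂ α₃ x : ℝ) :
    (Tiet α₁ α₂ α₃ x : AddCircle (α₁ + α₂ + (α₂ + α₃))) =
      x + tietTime α₁ α₂ x • ((α₂ + α₃ : ℝ) : AddCircle (α₁ + α₂ + (α₂ + α₃))) := by
  rw [← AddCircle.coe_nsmul, ← AddCircle.coe_add, nsmul_eq_mul]
  unfold Tiet tietTime
  split_ifs with hleft hmem hmiddle hmem hmem
  · exact absurd hleft (not_lt.2 hmem.1)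
  · ring_nf
  · rw [← AddCircle.coe_add_period]
    push_cast
    ring_nf
  · exact absurd ⟨not_lt.1 hleft, hmiddle⟩ hmem
  · exact absurd hmem.2 hmiddle
  · rw [← AddCircle.coe_add_period]
    push_cast
    ring_nf

theorem isLeast_returnTimes_tietTime [Fact (0 < α₁ + α₂ + (α₂ + α₃))]
    (h₁ : 0 ≤ α₁) (h₂ : 0 ≤ α₂) (h₃ : 0 ≤ α₃) {x : ℝ} (hx : x ∈ Ico 0 (α₁ + α₂ + α₃)) :
    IsLeast (returnTimes (· + ((α₂ + α₃ : ℝ) : AddCircle (α₁ + α₂ + (α₂ + α₃))))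
      ((↑) '' Ico 0 (α₁ + α₂ + α₃)) x) (tietTime α₁ α₂ x) := by
  have hpos : 0 < tietTime α₁ α₂ x := by unfold tietTime; split_ifs <;> norm_num
  refine ⟨⟨hpos, Tiet α₁ α₂ α₃ x, mapsTo_Tiet h₁ h₂ h₃ hx, ?_⟩, fun N hN => ?_⟩
  · rw [coe_Tiet, add_right_iterate_apply]
  unfold tietTime
  split_ifs with hmiddle
  · obtain ⟨hN₀, t, ⟨ht₀, ht⟩, htN⟩ := mem_returnTimes_add_right.1 hN
    have hN₁ : N ≠ 1 := by
      rintro rfl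
      have hxt : x + t = x + (α₂ + α₃) := (AddCircle.coe_eq_coe_iff_of_mem_Ico (a := 0)
        (p := α₁ + α₂ + (α₂ + α₃)) ⟨ht₀, by linarith⟩
        ⟨by linarith [hx.1], by linarith [hmiddle.2]⟩).1
        (by rw [AddCircle.coe_add, htN, one_nsmul, ← AddCircle.coe_add])
      linarith [hmiddle.1]
    omega
  · exact hN.1

theorem isInducedMap_Tiet [Fact (0 < α₁ + α₂ + (α₂ + α₃))]
    (h₁ : 0 ≤ α₁) (h₂ : 0 ≤ α₂) (h₃ : 0 ≤ α₃) :
    IsInducedMap (· + ((α₂ + α₃ : ℝ) : AddCircle (α₁ + α₂ + (α₂ + α₃)))) (↑)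
      (Ico 0 (α₁ + α₂ + α₃)) (Tiet α₁ α₂ α₃) (tietTime α₁ α₂) where
  injOn x hx y hy hxy := (AddCircle.coe_eq_coe_iff_of_mem_Ico (a := 0)
    ⟨hx.1, by linarith [hx.2]⟩ ⟨hy.1, by linarith [hy.2]⟩).1 hxy
  mapsTo := mapsTo_Tiet h₁ h₂ h₃
  isLeast_returnTimes _ := isLeast_returnTimes_tietTime h₁ h₂ h₃
  iterate_eq x _ := by rw [coe_Tiet, add_right_iterate_apply]

theorem exists_firstReturn_Tiet_eq_Tiet (h₁ : 0 ≤ α₁) (h₂ : 0 ≤ α₂) (h₃ : 0 ≤ α₃) {c l : ℝ}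
    (hl : 0 < l) (hc : 0 ≤ c) (hsub : c + l ≤ α₁ + α₂ + α₃) :
    ∃ γ₁ γ₂ γ₃ : ℝ, 0 ≤ γ₁ ∧ 0 ≤ γ₂ ∧ 0 ≤ γ₃ ∧ γ₁ + γ₂ + γ₃ = l ∧
      ∀ x ∈ Ico c (c + l), ∃ r, IsLeast (returnTimes (Tiet α₁ α₂ α₃) (Ico c (c + l)) x) r ∧
        (Tiet α₁ α₂ α₃)^[r] x = c + Tiet γ₁ γ₂ γ₃ (x - c) := by
  have : Fact (0 < α₁ + α₂ + (α₂ + α₃)) := ⟨by linarith⟩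
  have hJI : Ico c (c + l) ⊆ Ico 0 (α₁ + α₂ + α₃) := Ico_subset_Ico hc hsub
  obtain ⟨γ₁, γ₂, γ₃, hγ₁, hγ₂, hγ₃, rfl, hrot⟩ := exists_firstReturn_rotation_eq_Tiet
    ((α₂ + α₃ : ℝ) : AddCircle (α₁ + α₂ + (α₂ + α₃))) c hl (by linarith)
  refine ⟨γ₁, γ₂, γ₃, hγ₁, hγ₂, hγ₃, rfl, fun x hx => ?_⟩
  obtain ⟨N, hN, hxN⟩ := hrot x hx
  obtain ⟨hy₀, hy⟩ := mapsTo_Tiet hγ₁ hγ₂ hγ₃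
    (show x - c ∈ Ico 0 (γ₁ + γ₂ + γ₃) from ⟨by linarith [hx.1], by linarith [hx.2]⟩)
  exact (isInducedMap_Tiet h₁ h₂ h₃).exists_isLeast_returnTimes hJI (hJI hx) hN
    (hJI ⟨by linarith, by linarith⟩) (by rw [add_right_iterate_apply, hxN])

end ThreeIntervals

theorem firstReturn_threeIet_general (α₁ α₂ α₃ : ℝ) (h₁ : 0 ≤ α₁) (h₂ : 0 ≤ α₂) (h₃ : 0 ≤ α₃)
    (c l : ℝ) (hl : 0 < l) (hc : 0 ≤ c) (hsub : c + l ≤ α₁ + α₂ + α₃) :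
    (∀ x ∈ Set.Ico c (c + l), ∃ n : ℕ, 1 ≤ n ∧
        (Tiet α₁ α₂ α₃)^[n] x ∈ Set.Ico c (c + l)) ∧
    ∃ β₁ β₂ : ℝ, c ≤ β₁ ∧ β₁ ≤ β₂ ∧ β₂ ≤ c + l ∧
      ∀ x ∈ Set.Ico c (c + l), ∀ r : ℕ, 1 ≤ r →
        (Tiet α₁ α₂ α₃)^[r] x ∈ Set.Ico c (c + l) →
        (∀ m : ℕ, 1 ≤ m → m < r → (Tiet α₁ α₂ α₃)^[m] x ∉ Set.Ico c (c + l)) →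
        ((x < β₁ → (Tiet α₁ α₂ α₃)^[r] x = x + (β₂ - β₁) + (c + l - β₂)) ∧
         (β₁ ≤ x → x < β₂ →
            (Tiet α₁ α₂ α₃)^[r] x = x - (β₁ - c) + (c + l - β₂)) ∧
         (β₂ ≤ x → (Tiet α₁ α₂ α₃)^[r] x = x - (β₁ - c) - (β₂ - β₁))) := by
  obtain ⟨γ₁, γ₂, γ₃, hγ₁, hγ₂, hγ₃, rfl, hret⟩ :=
    exists_firstReturn_Tiet_eq_Tiet h₁ h₂ h₃ hl hc hsub
  refine ⟨fun x hx => ?_, c + γ₁, c + γ₁ + γ₂, by linarith, by linarith, by linarith, ?_⟩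
  · obtain ⟨r, hr, -⟩ := hret x hx
    exact ⟨r, hr.1⟩
  · intro x hx r hr hrJ hfirst
    obtain ⟨r', hr', hval⟩ := hret x hx
    have hleast : IsLeast (returnTimes (Tiet α₁ α₂ α₃) (Ico c (c + (γ₁ + γ₂ + γ₃))) x) r :=
      ⟨⟨hr, hrJ⟩, fun m hm => not_lt.1 fun hmr => hfirst m hm.1 hmr hm.2⟩
    obtain rfl := hleast.unique hr'
    rw [hval]
    unfold Tiet
    refine ⟨fun hβ₁ => ?_, fun hβ₁ hβ₂ => ?_, fun hβ₂ => ?_⟩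
    · rw [if_pos (by linarith)]; ring
    · rw [if_neg (by linarith), if_pos (by linarith)]; ring
    · rw [if_neg (by linarith), if_neg (by linarith)]; ring

theorem firstReturn_threeIet (α₁ α₂ α₃ : ℝ) (h₁ : 0 < α₁) (h₂ : 0 < α₂) (h₃ : 0 < α₃)
    (hind : ∀ p q : ℚ, (p : ℝ) * (α₁ + α₂) + (q : ℝ) * (α₂ + α₃) = 0 → p = 0 ∧ q = 0)
    (c l : ℝ) (hl : 0 < l) (hc : 0 ≤ c) (hsub : c + l ≤ α₁ + α₂ + α₃) :
    -- (a) every point of J = [c, c+l) returns to J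
    (∀ x ∈ Set.Ico c (c + l), ∃ n : ℕ, 1 ≤ n ∧
        (Tiet α₁ α₂ α₃)^[n] x ∈ Set.Ico c (c + l)) ∧
    -- (b) the first return map is a 3iet with permutation (321) (possibly degenerate)
    ∃ β₁ β₂ : ℝ, c ≤ β₁ ∧ β₁ ≤ β₂ ∧ β₂ ≤ c + l ∧
      ∀ x ∈ Set.Ico c (c + l), ∀ r : ℕ, 1 ≤ r →
        (Tiet α₁ α₂ α₃)^[r] x ∈ Set.Ico c (c + l) →
        (∀ m : ℕ, 1 ≤ m → m < r → (Tiet α₁ α₂ α₃)^[m] x ∉ Set.Ico c (c + l)) →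
        ((x < β₁ → (Tiet α₁ α₂ α₃)^[r] x = x + (β₂ - β₁) + (c + l - β₂)) ∧
         (β₁ ≤ x → x < β₂ →
            (Tiet α₁ α₂ α₃)^[r] x = x - (β₁ - c) + (c + l - β₂)) ∧
         (β₂ ≤ x → (Tiet α₁ α₂ α₃)^[r] x = x - (β₁ - c) - (β₂ - β₁))) :=
  firstReturn_threeIet_general α₁ α₂ α₃ h₁.le h₂.le h₃.le c l hl hc hsub
end

section
/- Let u be a non-degenerate 3iet word with parameters ε, l, c. If u is a fixed point of some primitive substitution over {1,2,3}, then: (i) ε is a Sturm number, i.e., ε is a quadratic irrational in (0,1) whose conjugate ε′ satisfies ε′ ∉ (0,1); and (ii) there exist rationals p₁, q₁, p₂, q₂ with c = p₁ + q₁ε and l = p₂ + q₂ε (i.e., c, l ∈ ℚ(ε)). -/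
/-- The letter (1, 2 or 3, coded as 0, 1, 2 in `Fin 3`) coding the position of `x`. -/
noncomputable def letter3 (ε l c : ℝ) (x : ℝ) : Fin 3 :=
  if x < c + l - 1 + ε then 0 else if x < c + ε then 1 else 2

/-- `u : ℤ → Fin 3` is the 3iet word with parameters `ε, l, c`, coding the orbit of `0`. -/
def IsThreeIetWord (ε l c : ℝ) (u : ℤ → Fin 3) : Prop :=
  ∃ t : ℤ → ℝ, t 0 = 0 ∧ (∀ n, t n ∈ Set.Ico c (c + l)) ∧
    (∀ n, t (n + 1) = T3 ε l c (t n)) ∧ ∀ n, u n = letter3 ε l c (t n)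

/-- A substitution is primitive if some power of it maps every letter to a word
containing all letters. -/
def IsPrimitiveSubst {A : Type*} (φ : A → List A) : Prop :=
  ∃ n : ℕ, 1 ≤ n ∧ ∀ a b : A, b ∈ (substWord φ)^[n] [a]

/-- A pointed bidirectional word `u : ℤ → A` is a fixed point of the substitution `φ`. -/
def IsFixedPointSubstZ {A : Type*} (φ : A → List A) (u : ℤ → A) : Prop :=
  ∃ k : ℤ → ℤ, StrictMono k ∧ k 0 = 0 ∧
    (∀ n, k (n + 1) = k n + (φ (u n)).length) ∧
    ∀ n : ℤ, ∀ i : ℕ, (h : i < (φ (u n)).length) → u (k n + i) = (φ (u n)).get ⟨i, h⟩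
/-!
A letter weight with bounded Birkhoff sums along a non-degenerate 3iet word is a multiple of the
translation vector `(1 - ε, 1 - 2ε, -ε)` of the exchange. Indeed, by uniform recurrence such sums
nearly depend only on a long stretch of letters before or after the current one. Orbit points on the
two sides of a discontinuity read the same past; one of them moves by the middle letter, the other
by the two outer letters, after which both read the same future. Hence the weight of the middle
letter is the sum of the other two, and boundedness removes one more degree of freedom.

The sums of the translation vector are the orbit itself, so the incidence matrix of a substitution
fixing the word preserves the line of this vector. The eigenvalue `r ∈ ℤ[ε]` satisfies `0 < |r| < 1`
since the orbit is injective and bounded. Comparing the coordinates of the eigenvector equation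
gives a quadratic equation for `ε`; if the conjugate of `ε` were in `(0, 1)`, then `r` would be a
mean of positive integers.

The incidence matrix is injective, because a weight in its kernel has bounded sums. Therefore the
images of the middle letter and of the pair of outer letters have different letter counts, so they
cannot be read along one piece of the orbit, and multiplication by `r` must map each discontinuity
into a discontinuity plus `ℤ[ε]`. As there are two discontinuities, both lie in `ℚ(ε)` by the
pigeonhole principle.
-/

open Filter Topology Set Bornology IntermediateField

section BirkhoffSums

variable {A G : Type*} {u : ℤ → A}

/-- The factors of length `N` of `u` starting at `n` and at `m` coincide. -/
def SameFactor (u : ℤ → A) (n m : ℤ) (N : ℕ) : Prop :=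
  ∀ i : ℕ, i < N → u (n + i) = u (m + i)

/-- Every factor of `u` occurs in `u` with bounded gaps. -/
def IsUniformlyRecurrent (u : ℤ → A) : Prop :=
  ∀ (p : ℤ) (N : ℕ), ∃ R : ℕ, ∀ n : ℤ, ∃ i : ℕ, i ≤ R ∧ SameFactor u (n + i) p N

/-- `S` is a two-sided sequence of Birkhoff sums of the letter weights `v` along `u`. It is
normalised by its increments only, so that it is determined up to an additive constant. -/
def IsBirkhoffSum [Add G] (u : ℤ → A) (v : A → G) (S : ℤ → G) : Prop :=
  ∀ n, S (n + 1) = S n + v (u n)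

theorem exists_isBirkhoffSum [AddCommGroup G] (u : ℤ → A) (v : A → G) :
    ∃ S, S 0 = 0 ∧ IsBirkhoffSum u v S := by
  refine ⟨fun n ↦ ∑ i ∈ Finset.Ico 0 n, v (u i) - ∑ i ∈ Finset.Ico n 0, v (u i), by simp,
    fun n ↦ ?_⟩
  dsimp only
  rcases le_or_gt 0 n with hn | hn
  · rw [Finset.Ico_eq_empty (by omega : ¬n < 0), Finset.Ico_eq_empty (by omega : ¬n + 1 < 0),
      ← Finset.insert_Ico_right_eq_Ico_add_one hn, Finset.sum_insert (by simp)]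
    abel
  · rw [Finset.Ico_eq_empty (by omega : ¬0 < n), Finset.Ico_eq_empty (by omega : ¬0 < n + 1),
      ← Finset.insert_Ico_add_one_left_eq_Ico hn, Finset.sum_insert (by simp)]
    abel

namespace IsBirkhoffSum

section AddCommGroup

variable [AddCommGroup G] {v w : A → G} {S S' : ℤ → G}

theorem sub (hS : IsBirkhoffSum u v S) (hS' : IsBirkhoffSum u w S') :
    IsBirkhoffSum u (v - w) (S - S') := fun n ↦ by
  simp only [Pi.sub_apply, hS n, hS' n]; abel

theorem const_smul {R : Type*} [Ring R] [Module R G] (c : R) (hS : IsBirkhoffSum u v S) :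
    IsBirkhoffSum u (c • v) (c • S) := fun n ↦ by
  simp only [Pi.smul_apply, hS n, smul_add]

theorem eq_of_apply_zero_eq (hS : IsBirkhoffSum u v S) (hS' : IsBirkhoffSum u v S')
    (h : S 0 = S' 0) : S = S' := by
  funext n
  induction n with
  | zero => exact h
  | succ n ih => rw [hS, hS', ih]
  | pred n ih =>
    have hn := hS (-n - 1)
    have hn' := hS' (-n - 1)
    rw [sub_add_cancel] at hn hn'
    exact add_right_cancel (hn.symm.trans (ih.trans hn'))

theorem add_length (hS : IsBirkhoffSum u v S) {L : List A} {x : ℤ}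
    (hL : ∀ (i : ℕ) (hi : i < L.length), u (x + i) = L[i]) :
    S (x + L.length) = S x + (L.map v).sum := by
  induction L generalizing x with
  | nil => simp
  | cons a L ih =>
    have head : u x = a := by rw [← add_zero x]; exact hL 0 (by simp)
    have tail := ih (x := x + 1) fun i hi ↦ by
      have := hL (i + 1) (by simpa using hi)
      rw [List.getElem_cons_succ] at this
      rw [← this]; congr 1; push_cast; ring
    rw [List.length_cons, show x + ((L.length + 1 : ℕ) : ℤ) = x + 1 + L.length by push_cast; ring,
      tail, hS, head, List.map_cons, List.sum_cons, add_assoc]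

theorem sub_eq_sub_of_sameFactor (hS : IsBirkhoffSum u v S) {n m : ℤ} {N j : ℕ}
    (h : SameFactor u n m N) (hj : j ≤ N) : S (n + j) - S n = S (m + j) - S m := by
  induction j with
  | zero => simp
  | succ j ih =>
    have increments : S (n + j) - S n = S (m + j) - S m := ih (by omega)
    push_cast
    rw [← add_assoc, ← add_assoc, hS, hS, h j (by omega), add_sub_right_comm, increments]
    abel

end AddCommGroup

theorem strictMono [AddCommGroup G] [PartialOrder G] [IsOrderedAddMonoid G] {v : A → G}
    {S : ℤ → G} (hS : IsBirkhoffSum u v S) (hv : ∀ a, 0 < v a) : StrictMono S :=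
  strictMono_int_of_lt_succ fun n ↦ by rw [hS]; exact lt_add_of_pos_right _ (hv _)

variable {v : A → ℝ} {S : ℤ → ℝ}

theorem nat_mul_le_sub (hS : IsBirkhoffSum u v S) {δ : ℝ} (hv : ∀ a, δ ≤ v a) (n : ℕ) :
    n * δ ≤ S n - S 0 := by
  induction n with
  | zero => simp
  | succ n ih =>
    have := hS n
    have := hv (u n)
    push_cast
    linarith

theorem eq_zero_of_isBounded_smul {b : ℝ} (hS : IsBirkhoffSum u (b • v) S) {δ : ℝ} (hδ : 0 < δ)
    (hv : ∀ a, δ ≤ v a) (hb : IsBounded (range S)) : b = 0 := by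
  by_contra hb0
  obtain ⟨C, hC⟩ := isBounded_iff_forall_norm_le.1 hb
  simp only [forall_mem_range, Real.norm_eq_abs] at hC
  have hT : IsBirkhoffSum u v (b⁻¹ • S) := by simpa [smul_smul, hb0] using hS.const_smul b⁻¹
  obtain ⟨n, hn⟩ := exists_nat_gt (|b⁻¹| * (2 * C) / δ)
  have lower := hT.nat_mul_le_sub hv n
  have upper : b⁻¹ * (S n - S 0) ≤ |b⁻¹| * (2 * C) := by
    refine (le_abs_self _).trans ?_
    rw [abs_mul]
    gcongr
    linarith [abs_sub (S n) (S 0), hC n, hC 0]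
  rw [div_lt_iff₀ hδ] at hn
  simp only [Pi.smul_apply, smul_eq_mul, ← mul_sub] at lower
  linarith

-- A stretch of `u` joining a near-maximum of `S` to a near-minimum recurs just after `n` and `m`;
-- there it forces both `S n` and `S m` to be close to the same value.
theorem exists_abs_sub_le_of_sameFactor (hS : IsBirkhoffSum u v S) (hu : IsUniformlyRecurrent u)
    (hb : IsBounded (range S)) {η : ℝ} (hη : 0 < η) :
    ∃ R : ℕ, ∀ n m : ℤ, SameFactor u n m R → |S n - S m| ≤ η := by
  have le_sup (n : ℤ) : S n ≤ sSup (range S) := le_csSup hb.bddAbove ⟨n, rfl⟩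
  have inf_le (n : ℤ) : sInf (range S) ≤ S n := csInf_le hb.bddBelow ⟨n, rfl⟩
  obtain ⟨_, ⟨p, rfl⟩, hp⟩ := exists_lt_of_lt_csSup (range_nonempty S)
    (sub_lt_self (sSup (range S)) (half_pos hη))
  obtain ⟨_, ⟨q, rfl⟩, hq⟩ := exists_lt_of_csInf_lt (range_nonempty S)
    (lt_add_of_pos_right (sInf (range S)) (half_pos hη))
  obtain ⟨a, hap⟩ := Int.le.dest (min_le_left p q)
  obtain ⟨b, hbq⟩ := Int.le.dest (min_le_right p q)
  set o := min p q
  obtain ⟨R, hR⟩ := hu o (a + b)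
  refine ⟨R + (a + b), fun n m hnm ↦ ?_⟩
  obtain ⟨i, hi, hn⟩ := hR n
  have hm : SameFactor u (m + i) o (a + b) := fun j hj ↦ by
    have := hnm (i + j) (by omega)
    push_cast [← add_assoc] at this
    rw [← this, hn j hj]
  have n_max := hS.sub_eq_sub_of_sameFactor hn (show a ≤ a + b by omega)
  have n_min := hS.sub_eq_sub_of_sameFactor hn (show b ≤ a + b by omega)
  have m_max := hS.sub_eq_sub_of_sameFactor hm (show a ≤ a + b by omega)
  have m_min := hS.sub_eq_sub_of_sameFactor hm (show b ≤ a + b by omega)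
  have common := hS.sub_eq_sub_of_sameFactor hnm (show i ≤ R + (a + b) by omega)
  rw [hap] at n_max m_max
  rw [hbq] at n_min m_min
  rw [abs_le]
  constructor <;> linarith [le_sup (n + i + a), le_sup (m + i + a), inf_le (n + i + b),
    inf_le (m + i + b)]

end IsBirkhoffSum

end BirkhoffSums

section Substitutions

variable {A : Type*} {φ : A → List A} {u : ℤ → A} {k : ℤ → ℤ}

/-- The action of the incidence matrix of `φ` on letter weights: the new weight of a letter is the
total weight of its image. -/
def substMap (φ : A → List A) : (A → ℝ) →ₗ[ℝ] A → ℝ where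
  toFun v a := ((φ a).map v).sum
  map_add' v w := by ext a; exact List.sum_map_add
  map_smul' r v := by ext a; exact List.sum_map_mul_left _ _ _

theorem substMap_apply (φ : A → List A) (v : A → ℝ) (a : A) :
    substMap φ v a = ((φ a).map v).sum :=
  rfl

theorem substMap_intCast (φ : A → List A) (v : A → ℤ) (a : A) :
    substMap φ (fun b ↦ (v b : ℝ)) a = (((φ a).map v).sum : ℤ) := by
  rw [substMap_apply, Int.cast_list_sum, List.map_map]
  rfl

theorem IsPrimitiveSubst.ne_singleton [Nontrivial A] (hφ : IsPrimitiveSubst φ) :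
    φ ≠ fun a ↦ [a] := by
  rintro rfl
  obtain ⟨n, -, hn⟩ := hφ
  obtain ⟨a, b, hab⟩ := exists_pair_ne A
  have fixed : Function.IsFixedPt (substWord fun a : A ↦ [a]) [a] := rfl
  have := hn a b
  rw [fixed.iterate n, List.mem_singleton] at this
  exact hab this.symm

/-- `k` lists the starting positions in `u` of the images of the letters `u n` under `φ`, which
exhibits `u` as a fixed point of `φ`. -/
structure IsDesubstitution (φ : A → List A) (u : ℤ → A) (k : ℤ → ℤ) : Prop where
  strictMono : StrictMono k
  apply_zero : k 0 = 0
  apply_succ : ∀ n, k (n + 1) = k n + (φ (u n)).length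
  getElem : ∀ (n : ℤ) (i : ℕ) (hi : i < (φ (u n)).length), u (k n + i) = (φ (u n))[i]

namespace IsDesubstitution

variable {v : A → ℝ} {S : ℤ → ℝ}

theorem length_pos (hk : IsDesubstitution φ u k) (n : ℤ) : 0 < (φ (u n)).length := by
  have := hk.strictMono (lt_add_one n)
  rw [hk.apply_succ] at this
  omega

theorem eq_singleton (hk : IsDesubstitution φ u k) (hid : k = id) (hu : Function.Surjective u) :
    φ = fun a ↦ [a] := by
  funext a
  obtain ⟨n, rfl⟩ := hu a
  have succ_eq := hk.apply_succ n
  simp only [hid, id, add_right_inj] at succ_eq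
  obtain ⟨b, hb⟩ := List.length_eq_one_iff.1 (by exact_mod_cast succ_eq.symm)
  have := hk.getElem n 0 (hk.length_pos n)
  simp only [hid, id, hb, Nat.cast_zero, add_zero, List.getElem_cons_zero] at this
  rw [hb, this]

theorem exists_eq_add (hk : IsDesubstitution φ u k) (x : ℤ) :
    ∃ (n : ℤ) (i : ℕ), i < (φ (u n)).length ∧ x = k n + i := by
  induction x with
  | zero => exact ⟨0, 0, hk.length_pos 0, by simp [hk.apply_zero]⟩
  | succ x ih =>
    obtain ⟨n, i, hi, hx⟩ := ih
    rcases Nat.lt_or_ge (i + 1) (φ (u n)).length with h | h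
    · exact ⟨n, i + 1, h, by rw [hx]; push_cast; ring⟩
    · exact ⟨n + 1, 0, hk.length_pos _, by rw [hk.apply_succ]; omega⟩
  | pred x ih =>
    obtain ⟨n, i, hi, hx⟩ := ih
    rcases Nat.eq_zero_or_pos i with rfl | h
    · have := hk.length_pos (n - 1)
      have succ_eq := hk.apply_succ (n - 1)
      rw [sub_add_cancel] at succ_eq
      exact ⟨n - 1, (φ (u (n - 1))).length - 1, by omega, by omega⟩
    · exact ⟨n, i - 1, by omega, by omega⟩

theorem comp (hk : IsDesubstitution φ u k) (hS : IsBirkhoffSum u v S) :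
    IsBirkhoffSum u (substMap φ v) (S ∘ k) := fun n ↦ by
  rw [Function.comp_apply, hk.apply_succ, hS.add_length (hk.getElem n)]
  rfl

theorem apply_eq_mul (hk : IsDesubstitution φ u k) (hS : IsBirkhoffSum u v S) (h0 : S 0 = 0)
    {r : ℝ} (hr : substMap φ v = r • v) (n : ℤ) : S (k n) = r * S n := by
  have hSk : IsBirkhoffSum u (r • v) (S ∘ k) := hr ▸ hk.comp hS
  exact congrFun (hSk.eq_of_apply_zero_eq (hS.const_smul r) (by simp [hk.apply_zero, h0])) n

theorem isBounded_range [Finite A] (hk : IsDesubstitution φ u k) (hS : IsBirkhoffSum u v S)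
    (hv : substMap φ v = 0) : IsBounded (range S) := by
  have hSk : IsBirkhoffSum u 0 (S ∘ k) := hv ▸ hk.comp hS
  have const (n : ℤ) : S (k n) = S (k 0) :=
    congrFun (hSk.eq_of_apply_zero_eq (S' := fun _ ↦ S (k 0)) (fun _ ↦ by simp) rfl) n
  refine (finite_range fun p : Σ a, Fin (φ a).length ↦
    S (k 0) + (((φ p.1).take p.2).map v).sum).isBounded.subset ?_
  rintro _ ⟨x, rfl⟩
  obtain ⟨n, i, hi, rfl⟩ := hk.exists_eq_add x
  refine ⟨⟨u n, i, hi⟩, ?_⟩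
  have := hS.add_length (L := (φ (u n)).take i) (x := k n) fun j hj ↦ by
    rw [List.length_take] at hj
    rw [List.getElem_take, hk.getElem n j (by omega)]
  rw [List.length_take, min_eq_left hi.le, const] at this
  exact this.symm

end IsDesubstitution

theorem eq_id_of_strictMono_of_comp_self {α : Type*} [LinearOrder α] {f : α → α}
    (hf : StrictMono f) (h : ∀ x, f (f x) = x) : f = id := by
  funext x
  rcases lt_trichotomy (f x) x with hx | hx | hx
  · exact absurd (hf hx) (by rw [h]; exact hx.asymm)
  · exact hx
  · exact absurd (hf hx) (by rw [h]; exact hx.asymm)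

theorem abs_lt_one_of_apply_eq_mul {α : Type*} [LinearOrder α] [Nontrivial α] {t : α → ℝ}
    {f : α → α} {r : ℝ} (ht : Function.Injective t) (hb : IsBounded (range t)) (hf : StrictMono f)
    (hid : f ≠ id) (h : ∀ x, t (f x) = r * t x) : |r| < 1 := by
  have iterate (x : α) (j : ℕ) : t (f^[j] x) = r ^ j * t x := by
    induction j with
    | zero => simp
    | succ j ih => rw [Function.iterate_succ_apply', h, ih, pow_succ']; ring
  have abs_le : |r| ≤ 1 := by
    by_contra! hr
    obtain ⟨C, hC⟩ := isBounded_iff_forall_norm_le.1 hb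
    obtain ⟨x, hx⟩ : ∃ x, t x ≠ 0 := by
      obtain ⟨x, y, hxy⟩ := exists_pair_ne α
      by_contra! h0
      exact hxy (ht ((h0 x).trans (h0 y).symm))
    obtain ⟨j, hj⟩ := pow_unbounded_of_one_lt (C / |t x|) hr
    rw [div_lt_iff₀ (abs_pos.2 hx), ← abs_pow, ← abs_mul, ← iterate] at hj
    exact hj.not_ge (hC _ ⟨_, rfl⟩)
  refine abs_le.lt_of_ne fun hr ↦ hid (eq_id_of_strictMono_of_comp_self hf fun x ↦ ht ?_)
  rw [h, h, ← mul_assoc, ← abs_mul_abs_self, hr, one_mul, one_mul]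

end Substitutions

section PiecewiseTranslations

variable {A G : Type*} [AddCommGroup G] {code : G → A} {d : A → G} {u : ℤ → A} {t : ℤ → G}

/-- The map translating each point `x` by the vector attached to its letter `code x`. -/
def pieceTranslation (code : G → A) (d : A → G) (x : G) : G := x + d (code x)

/-- `t` is an orbit of `pieceTranslation code d`, and `u` is the word coding it. -/
structure IsCodedOrbit (code : G → A) (d : A → G) (u : ℤ → A) (t : ℤ → G) : Prop where
  eq_code : ∀ n, u n = code (t n)
  isBirkhoffSum : IsBirkhoffSum u d t

/-- The filter of times at which `t` is near `y`, the displacement `t n - y` being controlled by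
`F` (for instance `𝓝 0`, or `𝓝[>] 0` for visits from the right). -/
def visits (t : ℤ → G) (y : G) (F : Filter G) : Filter ℤ := comap (fun n ↦ t n - y) F

theorem eventually_visits_of_eventually_visits {P : ℤ → Prop} {F : Filter G} {y : G}
    (h : ∀ᶠ n in visits t y F, P n) (z : G) :
    ∀ᶠ n in visits t z F, ∀ m, t m - y = t n - z → P m :=
  tendsto_comap.eventually (eventually_comap.1 h)

theorem IsCodedOrbit.eventually_visits_eq (h : IsCodedOrbit code d u t) {F : Filter G} {y : G}
    (hF : ∀ i, ∀ᶠ δ in F, code ((pieceTranslation code d)^[i] y + δ) =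
      code ((pieceTranslation code d)^[i] y)) (N : ℕ) :
    ∀ᶠ n in visits t y F, ∀ i : ℕ, i < N →
      u (n + i) = code ((pieceTranslation code d)^[i] y) := by
  have letter (i : ℕ) (n : ℤ) (hn : t (n + i) = (pieceTranslation code d)^[i] y + (t n - y))
      (hc : code ((pieceTranslation code d)^[i] y + (t n - y)) =
        code ((pieceTranslation code d)^[i] y)) :
      u (n + i) = code ((pieceTranslation code d)^[i] y) := by rw [h.eq_code, hn, hc]
  have follow (i : ℕ) : ∀ᶠ n in visits t y F,
      t (n + i) = (pieceTranslation code d)^[i] y + (t n - y) := by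
    induction i with
    | zero => simp
    | succ i ih =>
      filter_upwards [ih, tendsto_comap.eventually (hF i)] with n hn hc
      rw [Nat.cast_succ, ← add_assoc, h.isBirkhoffSum, letter i n hn hc, hn,
        Function.iterate_succ_apply', pieceTranslation]
      abel
  refine (eventually_all_finite (finite_Iio N)).2 fun i _ ↦ ?_
  filter_upwards [follow i, tendsto_comap.eventually (hF i)] with n using letter i n

end PiecewiseTranslations

section Rotation

theorem exists_forall_exists_add_nsmul_mem {G : Type*} [AddGroup G] [TopologicalSpace G]
    [IsTopologicalAddGroup G] [CompactSpace G] {g : G} (hg : DenseRange fun m : ℕ ↦ m • g)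
    {U : Set G} (hU : IsOpen U) (hne : U.Nonempty) :
    ∃ M : ℕ, ∀ z, ∃ m ≤ M, z + m • g ∈ U := by
  have cover : univ ⊆ ⋃ m : ℕ, (fun z : G ↦ z + m • g) ⁻¹' U := fun z _ ↦ by
    obtain ⟨m, hm⟩ := hg.exists_mem_open (hU.preimage (continuous_const_add z))
      ((Equiv.addLeft z).surjective.nonempty_preimage.2 hne)
    exact mem_iUnion.2 ⟨m, hm⟩
  obtain ⟨I, hI⟩ := isCompact_univ.elim_finite_subcover _
    (fun m ↦ hU.preimage (continuous_add_const (m • g))) cover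
  refine ⟨I.sup id, fun z ↦ ?_⟩
  obtain ⟨m, hm, hz⟩ := mem_iUnion₂.1 (hI (mem_univ z))
  exact ⟨m, Finset.le_sup (f := id) hm, hz⟩

theorem exists_forall_exists_add_sub_mul_mem_Ioo {ε x y : ℝ} (hε : Irrational ε) (hxy : x < y) :
    ∃ M : ℕ, ∀ z : ℝ, ∃ m ≤ M, ∃ b : ℤ, z + b - m * ε ∈ Ioo x y := by
  have dense : DenseRange fun m : ℕ ↦ m • ((-ε : ℝ) : AddCircle (1 : ℝ)) := by
    rw [← denseRange_zsmul_iff_nsmul, AddCircle.denseRange_zsmul_coe_iff, div_one]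
    exact hε.neg
  obtain ⟨M, hM⟩ := exists_forall_exists_add_nsmul_mem dense
    (QuotientAddGroup.isOpenMap_coe _ isOpen_Ioo) ((nonempty_Ioo.2 hxy).image _)
  refine ⟨M, fun z ↦ ?_⟩
  obtain ⟨m, hm, w, hw, hwz⟩ := hM z
  have : ((w - (z - m * ε) : ℝ) : AddCircle (1 : ℝ)) = 0 := by
    rw [AddCircle.coe_sub, sub_eq_zero, hwz, ← AddCircle.coe_nsmul, ← AddCircle.coe_add]
    congr 1
    rw [nsmul_eq_mul]; ring
  obtain ⟨b, hb⟩ := AddCircle.coe_eq_zero_iff _ |>.1 this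
  rw [zsmul_eq_mul, mul_one] at hb
  refine ⟨m, hm, b, ?_⟩
  rwa [show z + b - m * ε = w by rw [hb]; ring]

end Rotation

section ThreeIntervalExchange

variable {ε l c : ℝ} {u : ℤ → Fin 3} {t : ℤ → ℝ}

/-- The integer part of the translations of the exchange: the letter `a` translates by
`ascent a - descent a * ε`. -/
def ascent : Fin 3 → ℤ := ![1, 1, 0]

/-- The coefficient of `-ε` in the translations of the exchange, see `ascent`. -/
def descent : Fin 3 → ℤ := ![1, 2, 1]

/-- The translation by which the exchange moves the points with letter `a`. -/
def jump (ε : ℝ) (a : Fin 3) : ℝ := ascent a - descent a * ε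

theorem jump_zero : jump ε 0 = 1 - ε := by simp [jump, ascent, descent]

theorem jump_one : jump ε 1 = 1 - 2 * ε := by simp [jump, ascent, descent]

theorem jump_two : jump ε 2 = -ε := by simp [jump, ascent, descent]

theorem one_le_descent (a : Fin 3) : 1 ≤ descent a := by fin_cases a <;> decide

/-- The two interior discontinuities of the exchange. -/
def cuts (ε l c : ℝ) : Set ℝ := {c + l - 1 + ε, c + ε}

theorem T3_eq_add_jump (x : ℝ) : T3 ε l c x = x + jump ε (letter3 ε l c x) := by
  unfold T3 letter3
  split_ifs
  · rw [jump_zero]; ring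
  · rw [jump_one]; ring
  · rw [jump_two]; ring

theorem letter3_eq_zero_iff {x : ℝ} : letter3 ε l c x = 0 ↔ x < c + l - 1 + ε := by
  unfold letter3
  split_ifs with h₀ h₁ <;> simp [h₀]

theorem letter3_eq_two_iff (hl : l < 1) {x : ℝ} : letter3 ε l c x = 2 ↔ c + ε ≤ x := by
  unfold letter3
  split_ifs with h₀ h₁
  · simpa using by linarith
  · simpa using h₁
  · simpa using h₁

theorem letter3_eq_one_iff {x : ℝ} :
    letter3 ε l c x = 1 ↔ c + l - 1 + ε ≤ x ∧ x < c + ε := by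
  unfold letter3
  split_ifs with h₀ h₁
  · simpa using fun h ↦ absurd h₀ h.not_gt
  · simpa using ⟨not_lt.1 h₀, h₁⟩
  · simpa using fun _ ↦ not_lt.1 h₁

theorem eventually_add_lt_iff_of_ne {x a : ℝ} (h : x ≠ a) : ∀ᶠ δ in 𝓝 0, (x + δ < a ↔ x < a) := by
  have tendsto : Tendsto (x + ·) (𝓝 0) (𝓝 x) := by
    simpa using (continuous_const_add x).tendsto 0
  rcases h.lt_or_gt with h | h
  · filter_upwards [tendsto.eventually_lt_const h] with δ hδ using iff_of_true hδ h
  · filter_upwards [tendsto.eventually_const_lt h] with δ hδ using iff_of_false hδ.not_gt h.not_gt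

theorem eventually_nhdsGE_add_lt_iff (x a : ℝ) : ∀ᶠ δ in 𝓝[≥] 0, (x + δ < a ↔ x < a) := by
  rcases eq_or_ne x a with rfl | h
  · filter_upwards [self_mem_nhdsWithin] with δ hδ
    simpa using hδ
  · exact nhdsWithin_le_nhds (eventually_add_lt_iff_of_ne h)

theorem eventually_letter3_add_eq {x : ℝ} (hx : x ∉ cuts ε l c) :
    ∀ᶠ δ in 𝓝 0, letter3 ε l c (x + δ) = letter3 ε l c x := by
  simp only [cuts, mem_insert_iff, mem_singleton_iff, not_or] at hx
  filter_upwards [eventually_add_lt_iff_of_ne hx.1, eventually_add_lt_iff_of_ne hx.2] with δ h₁ h₂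
  simp only [letter3, h₁, h₂]

theorem eventually_nhdsGE_letter3_add_eq (x : ℝ) :
    ∀ᶠ δ in 𝓝[≥] 0, letter3 ε l c (x + δ) = letter3 ε l c x := by
  filter_upwards [eventually_nhdsGE_add_lt_iff x (c + l - 1 + ε),
    eventually_nhdsGE_add_lt_iff x (c + ε)] with δ h₁ h₂
  simp only [letter3, h₁, h₂]

theorem exists_iterate_pieceTranslation_eq (code : ℝ → Fin 3) (y : ℝ) (i : ℕ) :
    ∃ a b : ℤ, 0 ≤ b ∧ (pieceTranslation code (jump ε))^[i] y = y + a - b * ε := by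
  induction i with
  | zero => exact ⟨0, 0, le_rfl, by simp⟩
  | succ i ih =>
    obtain ⟨a, b, hb, h⟩ := ih
    rw [Function.iterate_succ_apply', h]
    set letter := code (y + a - b * ε)
    refine ⟨a + ascent letter, b + descent letter, ?_, ?_⟩
    · linarith [one_le_descent letter]
    · simp only [pieceTranslation, jump]; push_cast; ring

/-- `t` is an orbit of the exchange of three intervals with admissible parameters `ε, l, c`, and
`u` is the word coding it. -/
structure IsThreeIetOrbit (ε l c : ℝ) (u : ℤ → Fin 3) (t : ℤ → ℝ) : Prop
    extends IsCodedOrbit (letter3 ε l c) (jump ε) u t where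
  irrational : Irrational ε
  lt_length : ε < l
  one_sub_lt_length : 1 - ε < l
  length_lt_one : l < 1
  mem_Ico : ∀ n, t n ∈ Ico c (c + l)

theorem jump_one_sub_rev (a : Fin 3) : jump (1 - ε) a.rev = -jump ε a := by
  fin_cases a <;> simp [jump, ascent, descent]
  ring

theorem letter3_one_sub_add_jump (hl : l < 1) {x : ℝ} (hx : x ∈ Ico c (c + l)) :
    letter3 (1 - ε) l c (x + jump ε (letter3 ε l c x)) = (letter3 ε l c x).rev := by
  obtain ⟨h₀, h₁⟩ := hx
  rcases lt_or_ge x (c + l - 1 + ε) with h | h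
  · rw [letter3_eq_zero_iff.2 h, jump_zero]
    exact (letter3_eq_two_iff hl).2 (by linarith)
  rcases lt_or_ge x (c + ε) with h' | h'
  · rw [letter3_eq_one_iff.2 ⟨h, h'⟩, jump_one]
    exact letter3_eq_one_iff.2 ⟨by linarith, by linarith⟩
  · rw [(letter3_eq_two_iff hl).2 h', jump_two]
    exact letter3_eq_zero_iff.2 (by linarith)

namespace IsThreeIetOrbit

-- The inverse of the exchange is the exchange with parameter `1 - ε` and letters reversed.
theorem reverse (h : IsThreeIetOrbit ε l c u t) :
    IsThreeIetOrbit (1 - ε) l c (fun n ↦ (u (-n - 1)).rev) (fun n ↦ t (-n)) where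
  eq_code n := by
    have step := h.isBirkhoffSum (-n - 1)
    rw [sub_add_cancel, h.eq_code] at step
    rw [step, letter3_one_sub_add_jump h.length_lt_one (h.mem_Ico _), h.eq_code]
  isBirkhoffSum n := by
    have step := h.isBirkhoffSum (-n - 1)
    rw [sub_add_cancel] at step
    dsimp only
    rw [jump_one_sub_rev, step, neg_add']; ring
  irrational := by simpa using h.irrational.ratCast_sub 1
  lt_length := h.one_sub_lt_length
  one_sub_lt_length := by linarith [h.lt_length]
  length_lt_one := h.length_lt_one
  mem_Ico n := h.mem_Ico (-n)

theorem injective (h : IsThreeIetOrbit ε l c u t) : Function.Injective t := by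
  obtain ⟨P, -, hP⟩ := exists_isBirkhoffSum u ascent
  obtain ⟨Q, -, hQ⟩ := exists_isBirkhoffSum u descent
  have eq : t = fun n ↦ (t 0 - P 0 + Q 0 * ε) + (P n - Q n * ε) :=
    h.isBirkhoffSum.eq_of_apply_zero_eq
      (fun n ↦ by simp only [hP n, hQ n, jump]; push_cast; ring) (by ring)
  intro n m hnm
  rw [eq] at hnm
  refine (hQ.strictMono fun a ↦ one_le_descent a).injective ?_
  by_contra hne
  refine ((h.irrational.intCast_mul (sub_ne_zero.2 hne)).intCast_add (P m - P n)).ne_zero ?_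
  push_cast
  linarith

theorem isBounded_range (h : IsThreeIetOrbit ε l c u t) : IsBounded (range t) :=
  (Metric.isBounded_Ico c (c + l)).subset (range_subset_iff.2 h.mem_Ico)

-- The rotation by `-ε` modulo `1` reaches `t n - s * ε` after `s` steps; the exchange jumps over
-- some of its points, but only over those outside `[c, c + l)`.
theorem exists_apply_add_eq_or (h : IsThreeIetOrbit ε l c u t) (n : ℤ) (s : ℕ) :
    ∃ i ≤ s, ∃ a : ℤ, t (n + i) = t n + a - s * ε ∨
      (t (n + i) = t n + a - (s + 1) * ε ∧ t n + a - s * ε ∈ Ico (c + l) (c + 1)) := by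
  induction s with
  | zero => exact ⟨0, le_rfl, 0, Or.inl (by simp)⟩
  | succ s ih =>
    obtain ⟨i, hi, a, hit | ⟨jumped, -⟩⟩ := ih
    · have step : t (n + (i + 1 : ℕ)) = t n + a - s * ε + jump ε (u (n + i)) := by
        rw [Nat.cast_succ, ← add_assoc, h.isBirkhoffSum, hit]
      have letter := h.eq_code (n + i)
      refine ⟨i + 1, by omega, ?_⟩
      match hu : u (n + i) with
      | 0 => exact ⟨a + 1, Or.inl (by rw [step, hu, jump_zero]; push_cast; ring)⟩
      | 1 =>
        have := letter3_eq_one_iff.1 (letter.symm.trans hu)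
        rw [hit] at this
        refine ⟨a + 1, Or.inr ⟨by rw [step, hu, jump_one]; push_cast; ring, ?_⟩⟩
        push_cast
        constructor <;> linarith
      | 2 => exact ⟨a, Or.inl (by rw [step, hu, jump_two]; push_cast; ring)⟩
    · exact ⟨i, by omega, a, Or.inl (by rw [jumped]; push_cast; ring)⟩

theorem exists_apply_add_eq (h : IsThreeIetOrbit ε l c u t) {n b : ℤ} {s : ℕ}
    (hb : t n + b - s * ε ∈ Ico c (c + l)) : ∃ i ≤ s, t (n + i) = t n + b - s * ε := by
  obtain ⟨i, hi, a, hit | ⟨-, jumped⟩⟩ := h.exists_apply_add_eq_or n s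
  · have mem := h.mem_Ico (n + i)
    rw [hit] at mem
    have lt : (a : ℝ) < b + 1 := by linarith [mem.2, hb.1, h.length_lt_one]
    have gt : (b : ℝ) < a + 1 := by linarith [mem.1, hb.2, h.length_lt_one]
    norm_cast at lt gt
    obtain rfl : a = b := by omega
    exact ⟨i, hi, hit⟩
  · have lt : (b : ℝ) < a := by linarith [jumped.1, hb.2]
    have gt : (a : ℝ) < b + 1 := by linarith [jumped.2, hb.1]
    norm_cast at lt gt
    omega

theorem exists_forall_exists_apply_mem_Ioo (h : IsThreeIetOrbit ε l c u t) {x y : ℝ} (hxy : x < y)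
    (hx : c ≤ x) (hy : y ≤ c + l) : ∃ R : ℕ, ∀ n : ℤ, ∃ i : ℕ, i ≤ R ∧ t (n + i) ∈ Ioo x y := by
  obtain ⟨R, hR⟩ := exists_forall_exists_add_sub_mul_mem_Ioo h.irrational hxy
  refine ⟨R, fun n ↦ ?_⟩
  obtain ⟨s, hs, b, hb⟩ := hR (t n)
  obtain ⟨i, hi, hit⟩ := h.exists_apply_add_eq ⟨hx.trans hb.1.le, hb.2.trans_le hy⟩
  exact ⟨i, hi.trans hs, hit ▸ hb⟩

theorem isUniformlyRecurrent (h : IsThreeIetOrbit ε l c u t) : IsUniformlyRecurrent u := by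
  intro p N
  have near := h.eventually_visits_eq (fun i ↦ eventually_nhdsGE_letter3_add_eq _) N (y := t p)
  rw [visits, eventually_comap] at near
  obtain ⟨δ, hδ, hnear⟩ := mem_nhdsGE_iff_exists_Ico_subset.1 near
  have word (n : ℤ) (hn : t n ∈ Ico (t p) (t p + δ)) :=
    hnear (show t n - t p ∈ Ico 0 δ from ⟨by linarith [hn.1], by linarith [hn.2]⟩) n rfl
  obtain ⟨R, hR⟩ := h.exists_forall_exists_apply_mem_Ioo
    (lt_min (lt_add_of_pos_right (t p) hδ) (h.mem_Ico p).2) (h.mem_Ico p).1 (min_le_right _ _)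
  refine ⟨R, fun n ↦ ?_⟩
  obtain ⟨i, hi, hit⟩ := hR n
  refine ⟨i, hi, fun j hj ↦ ?_⟩
  rw [word (n + i) ⟨hit.1.le, hit.2.trans_le (min_le_left _ _)⟩ j hj,
    word p ⟨le_rfl, lt_add_of_pos_right _ hδ⟩ j hj]

theorem neBot_visits_right (h : IsThreeIetOrbit ε l c u t) {y : ℝ} (hy : y ∈ Ico c (c + l)) :
    (visits t y (𝓝[>] 0)).NeBot := by
  rw [visits, comap_neBot_iff]
  intro s hs
  obtain ⟨δ, hδ, hs⟩ := mem_nhdsGT_iff_exists_Ioo_subset.1 hs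
  obtain ⟨R, hR⟩ := h.exists_forall_exists_apply_mem_Ioo
    (lt_min (lt_add_of_pos_right y hδ) hy.2) hy.1 (min_le_right _ _)
  obtain ⟨i, -, hi⟩ := hR 0
  have := hi.2.trans_le (min_le_left _ _)
  exact ⟨0 + i, hs ⟨by linarith [hi.1], by linarith⟩⟩

theorem neBot_visits_left (h : IsThreeIetOrbit ε l c u t) {y : ℝ} (hy : y ∈ Ioc c (c + l)) :
    (visits t y (𝓝[<] 0)).NeBot := by
  rw [visits, comap_neBot_iff]
  intro s hs
  obtain ⟨δ, hδ, hs⟩ := mem_nhdsLT_iff_exists_Ioo_subset.1 hs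
  obtain ⟨R, hR⟩ := h.exists_forall_exists_apply_mem_Ioo
    (max_lt (add_lt_of_neg_right y hδ) hy.1) (le_max_right _ _) hy.2
  obtain ⟨i, -, hi⟩ := hR 0
  have := (le_max_left _ _).trans_lt hi.1
  exact ⟨0 + i, hs ⟨by linarith, by linarith [hi.2]⟩⟩

end IsThreeIetOrbit

end ThreeIntervalExchange

section CutPoints

variable {ε l c : ℝ} {u : ℤ → Fin 3} {t : ℤ → ℝ}

/-- The letters `1` and `3` of the exchange (coded as `0` and `2`) occur next to each other, in one
of the two orders, at positions `n` and `n + 1`. Their translations add up to that of the middle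
letter. -/
def IsExchangeAt (u : ℤ → Fin 3) (n : ℤ) : Prop :=
  (u n = 0 ∧ u (n + 1) = 2) ∨ (u n = 2 ∧ u (n + 1) = 0)

theorem IsExchangeAt.birkhoffSum_apply_add_two {G : Type*} [AddCommGroup G] {v : Fin 3 → G}
    {S : ℤ → G} {n : ℤ} (h : IsExchangeAt u n) (hS : IsBirkhoffSum u v S) :
    S (n + 2) = S n + (v 0 + v 2) := by
  rw [show n + 2 = n + 1 + 1 by ring, hS, hS]
  obtain ⟨h₀, h₁⟩ | ⟨h₀, h₁⟩ := h <;> rw [h₀, h₁] <;> abel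

theorem IsCodedOrbit.exists_word_of_add_notMem_cuts
    (h : IsCodedOrbit (letter3 ε l c) (jump ε) u t) {y : ℝ}
    (hy : ∀ a b : ℤ, 0 ≤ b → y + a - b * ε ∉ cuts ε l c) :
    ∃ w : ℕ → Fin 3, ∀ N, ∀ᶠ n in visits t y (𝓝 0), ∀ i : ℕ, i < N → u (n + i) = w i :=
  ⟨_, h.eventually_visits_eq fun i ↦ by
    obtain ⟨a, b, hb, hab⟩ := exists_iterate_pieceTranslation_eq (letter3 ε l c) y i
    rw [hab]
    exact eventually_letter3_add_eq (hy a b hb)⟩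

namespace IsThreeIetOrbit

theorem exists_past_word_of_add_notMem_cuts (h : IsThreeIetOrbit ε l c u t) {y : ℝ}
    (hy : ∀ a b : ℤ, 0 ≤ b → y + a - b * (1 - ε) ∉ cuts (1 - ε) l c) :
    ∃ w : ℕ → Fin 3, ∀ N, ∀ᶠ n in visits t y (𝓝 0), ∀ i : ℕ, i < N → u (n - 1 - i) = w i := by
  obtain ⟨w, hw⟩ := h.reverse.exists_word_of_add_notMem_cuts hy
  refine ⟨fun i ↦ (w i).rev, fun N ↦ ?_⟩
  have := hw N
  rw [visits, eventually_comap] at this ⊢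
  filter_upwards [this] with δ hδ n hn i hi
  rw [← hδ (-n) (by rwa [neg_neg]) i hi, Fin.rev_rev]
  congr 1; ring

theorem frequently_visits_of_right (h : IsThreeIetOrbit ε l c u t) {y a : ℝ}
    (hy : y ∈ Ico c (c + l)) (ha : 0 < a) {P : ℤ → Prop} (hP : ∀ n, t n - y ∈ Ioo 0 a → P n) :
    ∃ᶠ n in visits t y (𝓝 0), P n := by
  have := h.neBot_visits_right hy
  have on_right : ∀ᶠ n in visits t y (𝓝[>] 0), P n :=
    (tendsto_comap.eventually (Ioo_mem_nhdsGT ha)).mono hP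
  exact on_right.frequently.filter_mono (comap_mono nhdsWithin_le_nhds)

theorem frequently_visits_of_left (h : IsThreeIetOrbit ε l c u t) {y a : ℝ}
    (hy : y ∈ Ioc c (c + l)) (ha : a < 0) {P : ℤ → Prop} (hP : ∀ n, t n - y ∈ Ioo a 0 → P n) :
    ∃ᶠ n in visits t y (𝓝 0), P n := by
  have := h.neBot_visits_left hy
  have on_left : ∀ᶠ n in visits t y (𝓝[<] 0), P n :=
    (tendsto_comap.eventually (Ioo_mem_nhdsLT ha)).mono hP
  exact on_left.frequently.filter_mono (comap_mono nhdsWithin_le_nhds)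

variable {y : ℝ}

theorem frequently_apply_eq_one (h : IsThreeIetOrbit ε l c u t) (hy : y ∈ cuts ε l c) :
    ∃ᶠ n in visits t y (𝓝 0), u n = 1 := by
  have := h.lt_length
  have := h.one_sub_lt_length
  have := h.length_lt_one
  obtain rfl | rfl := hy
  · refine h.frequently_visits_of_right ⟨by linarith, by linarith⟩ (sub_pos.2 h.length_lt_one)
      fun n hn ↦ ?_
    rw [h.eq_code, letter3_eq_one_iff]
    constructor <;> linarith [hn.1, hn.2]
  · refine h.frequently_visits_of_left ⟨by linarith, by linarith⟩ (sub_neg.2 h.length_lt_one)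
      fun n hn ↦ ?_
    rw [h.eq_code, letter3_eq_one_iff]
    constructor <;> linarith [hn.1, hn.2]

theorem frequently_isExchangeAt (h : IsThreeIetOrbit ε l c u t) (hy : y ∈ cuts ε l c) :
    ∃ᶠ n in visits t y (𝓝 0), IsExchangeAt u n := by
  have := h.lt_length
  have := h.one_sub_lt_length
  have := h.length_lt_one
  obtain rfl | rfl := hy
  · refine h.frequently_visits_of_left ⟨by linarith, by linarith⟩ (sub_neg.2 h.lt_length)
      fun n hn ↦ Or.inl ?_
    have first : u n = 0 := by rw [h.eq_code, letter3_eq_zero_iff]; linarith [hn.2]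
    have step := h.isBirkhoffSum n
    rw [first, jump_zero] at step
    exact ⟨first, by rw [h.eq_code, letter3_eq_two_iff h.length_lt_one]; linarith [hn.1]⟩
  · refine h.frequently_visits_of_right (a := l - 1 + ε) ⟨by linarith, by linarith⟩ (by linarith)
      fun n hn ↦ Or.inr ?_
    have first : u n = 2 := by
      rw [h.eq_code, letter3_eq_two_iff h.length_lt_one]; linarith [hn.1]
    have step := h.isBirkhoffSum n
    rw [first, jump_two] at step
    exact ⟨first, by rw [h.eq_code, letter3_eq_zero_iff]; linarith [hn.2]⟩

theorem surjective (h : IsThreeIetOrbit ε l c u t) : Function.Surjective u := by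
  obtain ⟨n, hn⟩ := (h.frequently_apply_eq_one (Or.inl rfl)).exists
  obtain ⟨m, hm⟩ := (h.frequently_isExchangeAt (Or.inl rfl)).exists
  intro a
  match a with
  | 0 => exact hm.elim (fun hm ↦ ⟨m, hm.1⟩) fun hm ↦ ⟨m + 1, hm.2⟩
  | 1 => exact ⟨n, hn⟩
  | 2 => exact hm.elim (fun hm ↦ ⟨m + 1, hm.2⟩) fun hm ↦ ⟨m, hm.1⟩

variable {v : Fin 3 → ℝ} {S : ℤ → ℝ}

theorem exists_past_word_right_cut (h : IsThreeIetOrbit ε l c u t) (hl : l ∉ Zbr ε) :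
    ∃ w : ℕ → Fin 3, ∀ N, ∀ᶠ n in visits t (c + ε) (𝓝 0),
      ∀ i : ℕ, i < N → u (n - 1 - i) = w i := by
  refine h.exists_past_word_of_add_notMem_cuts fun a b hb hab ↦ ?_
  obtain hab | hab := hab
  · exact hl ⟨a - b, b + 2, by push_cast; linarith⟩
  · refine ((h.irrational.intCast_mul (m := b + 2) (by omega)).intCast_add (a - b - 1)).ne_zero ?_
    push_cast
    linarith [eq_of_mem_singleton hab]

theorem exists_word_image_right_cut (h : IsThreeIetOrbit ε l c u t) (hl : l ∉ Zbr ε) :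
    ∃ w : ℕ → Fin 3, ∀ N, ∀ᶠ n in visits t (c + 1 - ε) (𝓝 0),
      ∀ i : ℕ, i < N → u (n + i) = w i := by
  refine h.exists_word_of_add_notMem_cuts fun a b hb hab ↦ ?_
  obtain hab | hab := hab
  · exact hl ⟨a + 2, -b - 2, by push_cast; linarith⟩
  · refine ((h.irrational.intCast_mul (m := -b - 2) (by omega)).intCast_add (a + 1)).ne_zero ?_
    push_cast
    linarith [eq_of_mem_singleton hab]

-- Points close to the cut `c + ε` on its two sides have the same past. The left one moves by
-- the middle letter and the right one by an exchange to two neighbours of `c + 1 - ε`, whose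
-- futures coincide. As `S` nearly depends on the word read before or after, only the weights of
-- these two paths can make a difference, which is hence arbitrarily small.
theorem apply_one_eq_of_isBounded (h : IsThreeIetOrbit ε l c u t) (hl : l ∉ Zbr ε)
    (hS : IsBirkhoffSum u v S) (hb : IsBounded (range S)) : v 1 = v 0 + v 2 := by
  refine eq_of_abs_sub_le_all fun η hη ↦ ?_
  obtain ⟨R, hR⟩ := hS.exists_abs_sub_le_of_sameFactor h.isUniformlyRecurrent hb (half_pos hη)
  obtain ⟨w, hw⟩ := h.exists_past_word_right_cut hl
  obtain ⟨w', hw'⟩ := h.exists_word_image_right_cut hl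
  have future := eventually_visits_of_eventually_visits (hw' R) (c + ε)
  have cut_mem : c + ε ∈ cuts ε l c := Or.inr rfl
  obtain ⟨n, hn, past_n, future_n⟩ :=
    ((h.frequently_apply_eq_one cut_mem).and_eventually ((hw R).and future)).exists
  obtain ⟨m, hm, past_m, future_m⟩ :=
    ((h.frequently_isExchangeAt cut_mem).and_eventually ((hw R).and future)).exists
  have past : |S n - S m| ≤ η / 2 := by
    have same : SameFactor u (n - R) (m - R) R := fun i hi ↦ by
      have (p : ℤ) : p - R + i = p - 1 - (R - 1 - i : ℕ) := by omega
      rw [this, this, past_n _ (by omega), past_m _ (by omega)]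
    have increments := hS.sub_eq_sub_of_sameFactor same le_rfl
    rw [sub_add_cancel, sub_add_cancel, sub_eq_sub_iff_sub_eq_sub] at increments
    rw [increments]
    exact hR _ _ same
  have image_n : t (n + 1) - (c + 1 - ε) = t n - (c + ε) := by
    rw [h.isBirkhoffSum, hn, jump_one]; ring
  have image_m : t (m + 2) - (c + 1 - ε) = t m - (c + ε) := by
    rw [hm.birkhoffSum_apply_add_two h.isBirkhoffSum, jump_zero, jump_two]; ring
  have next : |S (n + 1) - S (m + 2)| ≤ η / 2 := hR _ _ fun i hi ↦ by
    rw [future_n _ image_n i hi, future_m _ image_m i hi]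
  rw [hS, hn, hm.birkhoffSum_apply_add_two hS] at next
  rw [abs_le] at past next ⊢
  constructor <;> linarith [past.1, past.2, next.1, next.2]

theorem eq_smul_jump_of_isBounded (h : IsThreeIetOrbit ε l c u t) (hl : l ∉ Zbr ε)
    (hS : IsBirkhoffSum u v S) (hb : IsBounded (range S)) : v = (v 0 - v 2) • jump ε := by
  have hv := h.apply_one_eq_of_isBounded hl hS hb
  have weights : v - (v 0 - v 2) • jump ε =
      (v 0 * ε + v 2 * (1 - ε)) • fun a ↦ (descent a : ℝ) := by
    ext a
    fin_cases a <;> simp [jump, ascent, descent, hv] <;> ring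
  have drift := weights ▸ hS.sub (h.isBirkhoffSum.const_smul (v 0 - v 2))
  have bounded : IsBounded (range (S - (v 0 - v 2) • t)) :=
    (hb.sub (h.isBounded_range.smul₀ (v 0 - v 2))).subset <|
      range_subset_iff.2 fun n ↦ sub_mem_sub ⟨n, rfl⟩ (smul_mem_smul_set ⟨n, rfl⟩)
  have := drift.eq_zero_of_isBounded_smul one_pos (fun a ↦ by exact_mod_cast one_le_descent a)
    bounded
  rwa [this, zero_smul, sub_eq_zero] at weights

end IsThreeIetOrbit

end CutPoints

section FixedPoints

variable {ε l c r : ℝ} {u : ℤ → Fin 3} {t : ℤ → ℝ} {φ : Fin 3 → List (Fin 3)} {k : ℤ → ℤ}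

namespace IsThreeIetOrbit

theorem exists_substMap_jump_eq (h : IsThreeIetOrbit ε l c u t) (hl : l ∉ Zbr ε)
    (hk : IsDesubstitution φ u k) : ∃ r : ℝ, substMap φ (jump ε) = r • jump ε :=
  ⟨_, h.eq_smul_jump_of_isBounded hl (hk.comp h.isBirkhoffSum)
    (h.isBounded_range.subset (range_comp_subset_range k t))⟩

theorem eq_zero_of_substMap_eq_zero (h : IsThreeIetOrbit ε l c u t) (hl : l ∉ Zbr ε)
    (hk : IsDesubstitution φ u k) (hr : substMap φ (jump ε) = r • jump ε) (hr₀ : r ≠ 0)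
    {v : Fin 3 → ℝ} (hv : substMap φ v = 0) : v = 0 := by
  obtain ⟨S, -, hS⟩ := exists_isBirkhoffSum u v
  have proportional := h.eq_smul_jump_of_isBounded hl hS (hk.isBounded_range hS hv)
  have zero := congrFun hv 2
  rw [proportional, map_smul, hr] at zero
  simp only [Pi.smul_apply, jump_two, smul_eq_mul, Pi.zero_apply, mul_eq_zero, hr₀, neg_eq_zero,
    h.irrational.ne_zero, or_false] at zero
  rw [proportional, zero, zero_smul]

theorem exists_substMap_apply_one_ne (h : IsThreeIetOrbit ε l c u t) (hl : l ∉ Zbr ε)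
    (hk : IsDesubstitution φ u k) (hr : substMap φ (jump ε) = r • jump ε) (hr₀ : r ≠ 0) :
    ∃ v, substMap φ v 1 ≠ substMap φ v 0 + substMap φ v 2 := by
  by_contra! dependent
  have injective : Function.Injective (substMap φ) :=
    (injective_iff_map_eq_zero _).2 fun v ↦ h.eq_zero_of_substMap_eq_zero hl hk hr hr₀
  obtain ⟨v, hv⟩ := LinearMap.injective_iff_surjective.1 injective (Pi.single 1 1)
  simpa [hv] using dependent v

theorem eq_of_sameFactor (h : IsThreeIetOrbit ε l c u t) {n m : ℤ} {N i j : ℕ}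
    (hnm : SameFactor u n m N) (hi : i ≤ N) (hij : t (n + i) - t n = t (m + j) - t m) : i = j := by
  have := h.isBirkhoffSum.sub_eq_sub_of_sameFactor hnm hi
  rw [hij, sub_left_inj] at this
  have := h.injective this
  omega

theorem exists_sameFactor_of_forall_mul_sub_notMem_Zbr (h : IsThreeIetOrbit ε l c u t)
    (hkt : ∀ n, t (k n) = r * t n) {y : ℝ} (hy : y ∈ cuts ε l c)
    (avoid : ∀ z ∈ cuts ε l c, r * y - z ∉ Zbr ε) (N : ℕ) :
    ∃ n m, u n = 1 ∧ IsExchangeAt u m ∧ SameFactor u (k n) (k m) N := by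
  obtain ⟨w, hw⟩ := h.exists_word_of_add_notMem_cuts (y := r * y) fun a b _ hab ↦
    avoid _ hab ⟨-a, b, by push_cast; ring⟩
  have image : ∀ᶠ n in visits t y (𝓝 0), ∀ i : ℕ, i < N → u (k n + i) = w i := by
    have tendsto : Tendsto (r * ·) (𝓝 0) (𝓝 0) := by
      simpa using (continuous_const_mul r).tendsto 0
    filter_upwards [tendsto_comap.eventually (tendsto.eventually (eventually_comap.1 (hw N)))]
      with n hn
    exact hn (k n) (by rw [hkt]; ring)
  obtain ⟨n, hn, word_n⟩ := ((h.frequently_apply_eq_one hy).and_eventually image).exists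
  obtain ⟨m, hm, word_m⟩ := ((h.frequently_isExchangeAt hy).and_eventually image).exists
  exact ⟨n, m, hn, hm, fun i hi ↦ (word_n i hi).trans (word_m i hi).symm⟩

-- If the orbit of `r * y` hit no cut, then the images under `φ` of the middle letter and of an
-- exchange occurring near `y` would be prefixes of the same word, and of the same length.
theorem exists_mul_sub_mem_Zbr (h : IsThreeIetOrbit ε l c u t) (hl : l ∉ Zbr ε)
    (hk : IsDesubstitution φ u k) (hr : substMap φ (jump ε) = r • jump ε) (hr₀ : r ≠ 0)
    (hkt : ∀ n, t (k n) = r * t n) {y : ℝ} (hy : y ∈ cuts ε l c) :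
    ∃ z ∈ cuts ε l c, r * y - z ∈ Zbr ε := by
  by_contra! avoid
  obtain ⟨n, m, hn, hm, same⟩ := h.exists_sameFactor_of_forall_mul_sub_notMem_Zbr hkt hy avoid
    ((φ 0).length + (φ 1).length + (φ 2).length)
  have end_n : k (n + 1) = k n + (φ 1).length := by rw [hk.apply_succ, hn]
  have end_m : k (m + 2) = k m + ((φ 0).length + (φ 2).length : ℕ) := by
    rw [Nat.cast_add]
    exact hm.birkhoffSum_apply_add_two (v := fun a ↦ ((φ a).length : ℤ)) hk.apply_succ
  have displacement : t (k n + (φ 1).length) - t (k n) =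
      t (k m + ((φ 0).length + (φ 2).length : ℕ)) - t (k m) := by
    rw [← end_n, ← end_m, hkt, hkt, hkt, hkt, h.isBirkhoffSum, hn,
      hm.birkhoffSum_apply_add_two h.isBirkhoffSum, jump_zero, jump_one, jump_two]
    ring
  have length_eq := h.eq_of_sameFactor same (by omega) displacement
  obtain ⟨v, hv⟩ := h.exists_substMap_apply_one_ne hl hk hr hr₀
  obtain ⟨S, -, hS⟩ := exists_isBirkhoffSum u v
  have weight_eq := hS.sub_eq_sub_of_sameFactor same (j := (φ 1).length) (by omega)
  have weight_n := hk.comp hS n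
  have weight_m := hm.birkhoffSum_apply_add_two (hk.comp hS)
  simp only [Function.comp_apply] at weight_n weight_m
  rw [← end_n, length_eq, ← end_m, weight_n, weight_m, hn, add_sub_cancel_left,
    add_sub_cancel_left] at weight_eq
  exact hv weight_eq

end IsThreeIetOrbit

end FixedPoints

section SturmNumbers

variable {ε r : ℝ} {φ : Fin 3 → List (Fin 3)}

theorem substMap_jump (φ : Fin 3 → List (Fin 3)) (ε : ℝ) (a : Fin 3) :
    substMap φ (jump ε) a = ((φ a).map ascent).sum - ((φ a).map descent).sum * ε := by
  have split : jump ε = (fun b ↦ (ascent b : ℝ)) - ε • fun b ↦ (descent b : ℝ) := by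
    ext b
    simp [jump, mul_comm]
  rw [split, map_sub, map_smul, Pi.sub_apply, Pi.smul_apply, substMap_intCast, substMap_intCast,
    smul_eq_mul, mul_comm]

theorem eq_sub_mul_of_substMap_jump_eq (hr : substMap φ (jump ε) = r • jump ε) :
    r = (((φ 0).map ascent).sum - ((φ 2).map ascent).sum : ℤ) -
      (((φ 0).map descent).sum - ((φ 2).map descent).sum : ℤ) * ε := by
  have h₀ := congrFun hr 0
  have h₂ := congrFun hr 2
  simp only [substMap_jump, Pi.smul_apply, smul_eq_mul, jump_zero, jump_two] at h₀ h₂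
  simp only [Int.cast_sub]
  linarith

-- Vieta's formula gives `r = (1 - x) Q₂ + x Q₀` for the conjugate `x` of `ε`; if `x` lay in
-- `(0, 1)`, this would be a mean of positive integers.
theorem exists_quadratic_of_substMap_jump_eq (hφ : ∀ a, φ a ≠ [])
    (hr : substMap φ (jump ε) = r • jump ε) (hr₀ : r ≠ 0) (hr₁ : |r| < 1) :
    ∃ A B C : ℤ, A ≠ 0 ∧ (A : ℝ) * ε ^ 2 + (B : ℝ) * ε + (C : ℝ) = 0 ∧
      (-(B : ℝ) / (A : ℝ) - ε) ∉ Ioo (0 : ℝ) 1 := by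
  have one_le (a : Fin 3) : (1 : ℝ) ≤ ((φ a).map descent).sum := by
    have : 0 < ((φ a).map descent).sum := List.sum_pos _
      (by simpa using fun b _ ↦ zero_lt_one.trans_le (one_le_descent b)) (by simpa using hφ a)
    exact_mod_cast this
  have r_eq := eq_sub_mul_of_substMap_jump_eq hr
  have image_two := congrFun hr 2
  rw [substMap_jump, Pi.smul_apply, smul_eq_mul, jump_two] at image_two
  have one_le_zero := one_le 0
  have one_le_two := one_le 2
  set P₀ := ((φ 0).map ascent).sum
  set P₂ := ((φ 2).map ascent).sum
  set Q₀ := ((φ 0).map descent).sum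
  set Q₂ := ((φ 2).map descent).sum
  have leading_ne : Q₀ - Q₂ ≠ 0 := fun h ↦ by
    rw [h, Int.cast_zero, zero_mul, sub_zero] at r_eq
    rw [r_eq] at hr₀ hr₁
    exact hr₀ (by exact_mod_cast Int.abs_lt_one_iff.1 (by exact_mod_cast hr₁))
  refine ⟨Q₀ - Q₂, P₂ + Q₂ - P₀, -P₂, leading_ne, ?_, fun ⟨pos, lt_one⟩ ↦ ?_⟩
  · push_cast at r_eq ⊢
    linear_combination ε * r_eq - image_two
  · have vieta : ((Q₀ - Q₂ : ℤ) : ℝ) * (-((P₂ + Q₂ - P₀ : ℤ) : ℝ) / ((Q₀ - Q₂ : ℤ) : ℝ) - ε + ε) =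
        -((P₂ + Q₂ - P₀ : ℤ) : ℝ) := by
      rw [sub_add_cancel, mul_div_cancel₀ _ (Int.cast_ne_zero.2 leading_ne)]
    generalize -((P₂ + Q₂ - P₀ : ℤ) : ℝ) / ((Q₀ - Q₂ : ℤ) : ℝ) - ε = x at pos lt_one vieta
    have mean : r = (1 - x) * Q₂ + x * Q₀ := by
      push_cast at vieta r_eq
      linear_combination r_eq - vieta
    nlinarith [(abs_lt.1 hr₁).2]

theorem mem_of_forall_exists_mul_sub_mem {F S : Type*} [Field F] [SetLike S F] [SubfieldClass S F]
    {K : S} {X : Set F} (hX : X.Finite) {r : F} (hr : r ∈ K)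
    (hpow : Function.Injective fun n : ℕ ↦ r ^ n) (h : ∀ x ∈ X, ∃ y ∈ X, r * x - y ∈ K) {x : F}
    (hx : x ∈ X) : x ∈ K := by
  choose! f hfX hfK using h
  have iterate_mem (n : ℕ) : f^[n] x ∈ X := (show MapsTo f X X from hfX).iterate n hx
  have pow_mul_sub_mem (n : ℕ) : r ^ n * x - f^[n] x ∈ K := by
    induction n with
    | zero => simp [zero_mem]
    | succ n ih =>
      rw [Function.iterate_succ_apply']
      convert add_mem (mul_mem hr ih) (hfK _ (iterate_mem n)) using 1
      ring
  obtain ⟨i, j, hij, heq⟩ := hX.exists_lt_map_eq_of_forall_mem iterate_mem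
  have ne : r ^ i - r ^ j ≠ 0 := sub_ne_zero.2 (hpow.ne hij.ne)
  have mul_mem_K : (r ^ i - r ^ j) * x ∈ K := by
    convert sub_mem (pow_mul_sub_mem i) (pow_mul_sub_mem j) using 1
    rw [heq]; ring
  rw [← inv_mul_cancel_left₀ ne x]
  exact mul_mem (inv_mem (sub_mem (pow_mem hr i) (pow_mem hr j))) mul_mem_K

theorem exists_eq_add_mul_of_mem_adjoin {K L : Type*} [Field K] [Field L] [Algebra K L] {α : L}
    {a b : K} (hα : α ^ 2 = algebraMap K L a * α + algebraMap K L b) {x : L} (hx : x ∈ K⟮α⟯) :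
    ∃ p q : K, x = algebraMap K L p + algebraMap K L q * α := by
  open Polynomial in
  have integral : IsIntegral K α :=
    ⟨X ^ 2 - C a * X - C b, by monicity!, by simp [hα]⟩
  rw [← mem_toSubalgebra, adjoin_simple_toSubalgebra_of_isAlgebraic integral.isAlgebraic] at hx
  induction hx using Algebra.adjoin_induction with
  | mem x hx => exact ⟨0, 1, by simpa using hx⟩
  | algebraMap p => exact ⟨p, 0, by simp⟩
  | add x y _ _ hx hy =>
    obtain ⟨p, q, rfl⟩ := hx
    obtain ⟨p', q', rfl⟩ := hy
    exact ⟨p + p', q + q', by simp only [map_add]; ring⟩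
  | mul x y _ _ hx hy =>
    obtain ⟨p, q, rfl⟩ := hx
    obtain ⟨p', q', rfl⟩ := hy
    refine ⟨p * p' + q * q' * b, p * q' + q * p' + q * q' * a, ?_⟩
    simp only [map_add, map_mul]
    linear_combination (algebraMap K L q * algebraMap K L q') * hα

theorem mem_adjoin_of_mem_Zbr {x : ℝ} (hx : x ∈ Zbr ε) : x ∈ ℚ⟮ε⟯ := by
  obtain ⟨a, b, rfl⟩ := hx
  exact add_mem (intCast_mem _ a) (mul_mem (intCast_mem _ b) (mem_adjoin_simple_self ℚ ε))

end SturmNumbers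

theorem IsThreeIetOrbit.cuts_subset_adjoin {ε l c r : ℝ} {u : ℤ → Fin 3} {t : ℤ → ℝ}
    {φ : Fin 3 → List (Fin 3)} {k : ℤ → ℤ} (h : IsThreeIetOrbit ε l c u t) (hl : l ∉ Zbr ε)
    (hk : IsDesubstitution φ u k) (hr : substMap φ (jump ε) = r • jump ε) (hr₀ : r ≠ 0)
    (hr₁ : |r| < 1) (hkt : ∀ n, t (k n) = r * t n) : cuts ε l c ⊆ ℚ⟮ε⟯ := fun x hx ↦ by
  have r_mem : r ∈ Zbr ε := ⟨_, _, by
    rw [eq_sub_mul_of_substMap_jump_eq hr, sub_eq_add_neg, ← neg_mul, ← Int.cast_neg]⟩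
  have pow_injective : Function.Injective fun n : ℕ ↦ r ^ n := fun n m hnm ↦
    (pow_right_strictAnti₀ (abs_pos.2 hr₀) hr₁).injective <| by
      simpa only [abs_pow] using congrArg abs hnm
  refine mem_of_forall_exists_mul_sub_mem (toFinite {c + l - 1 + ε, c + ε})
    (mem_adjoin_of_mem_Zbr r_mem) pow_injective (fun y hy ↦ ?_) hx
  obtain ⟨z, hz, hyz⟩ := h.exists_mul_sub_mem_Zbr hl hk hr hr₀ hkt hy
  exact ⟨z, hz, mem_adjoin_of_mem_Zbr hyz⟩

theorem mem_adjoin_of_cuts_subset {ε l c : ℝ} (h : cuts ε l c ⊆ ℚ⟮ε⟯) : c ∈ ℚ⟮ε⟯ ∧ l ∈ ℚ⟮ε⟯ := by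
  have left_mem : c + l - 1 + ε ∈ ℚ⟮ε⟯ := h (Or.inl rfl)
  have right_mem : c + ε ∈ ℚ⟮ε⟯ := h (Or.inr rfl)
  constructor
  · simpa using sub_mem right_mem (mem_adjoin_simple_self ℚ ε)
  · convert add_mem (sub_mem left_mem right_mem) (one_mem ℚ⟮ε⟯) using 1
    ring

theorem IsThreeIetWord.exists_isThreeIetOrbit {ε l c : ℝ} {u : ℤ → Fin 3} (hε : Irrational ε)
    (hl₁ : max ε (1 - ε) < l) (hl₂ : l < 1) (hu : IsThreeIetWord ε l c u) :
    ∃ t, t 0 = 0 ∧ IsThreeIetOrbit ε l c u t := by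
  obtain ⟨t, ht, hmem, hsucc, hcode⟩ := hu
  exact ⟨t, ht, ⟨⟨hcode, fun n ↦ by rw [hsucc, T3_eq_add_jump, hcode]⟩, hε,
    (le_max_left _ _).trans_lt hl₁, (le_max_right _ _).trans_lt hl₁, hl₂, hmem⟩⟩

theorem threeIet_subst_invariant_necessary_general (ε l c : ℝ) (u : ℤ → Fin 3) (hε : Irrational ε)
    (hl₁ : max ε (1 - ε) < l) (hl₂ : l < 1) (hnd : l ∉ Zbr ε) (hu : IsThreeIetWord ε l c u)
    (φ : Fin 3 → List (Fin 3)) (hφ : φ ≠ fun a ↦ [a]) (hfix : IsFixedPointSubstZ φ u) :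
    (∃ A B C : ℤ, A ≠ 0 ∧ (A : ℝ) * ε ^ 2 + (B : ℝ) * ε + (C : ℝ) = 0 ∧
        (-(B : ℝ) / (A : ℝ) - ε) ∉ Set.Ioo (0 : ℝ) 1) ∧
    (∃ p₁ q₁ p₂ q₂ : ℚ, c = (p₁ : ℝ) + (q₁ : ℝ) * ε ∧ l = (p₂ : ℝ) + (q₂ : ℝ) * ε) := by
  obtain ⟨t, ht, orbit⟩ := hu.exists_isThreeIetOrbit hε hl₁ hl₂
  obtain ⟨k, hmono, hzero, hsucc, hget⟩ := hfix
  have hk : IsDesubstitution φ u k := ⟨hmono, hzero, hsucc, hget⟩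
  obtain ⟨r, hr⟩ := orbit.exists_substMap_jump_eq hnd hk
  have hkt := hk.apply_eq_mul orbit.isBirkhoffSum ht hr
  have hr₀ : r ≠ 0 := fun hr₀ ↦ zero_ne_one <|
    hmono.injective (orbit.injective (show t (k 0) = t (k 1) by simp [hkt, hr₀]))
  have hr₁ : |r| < 1 := abs_lt_one_of_apply_eq_mul orbit.injective orbit.isBounded_range hmono
    (fun hid ↦ hφ (hk.eq_singleton hid orbit.surjective)) hkt
  have nonempty : ∀ a, φ a ≠ [] :=
    orbit.surjective.forall.2 fun n ↦ List.ne_nil_of_length_pos (hk.length_pos n)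
  obtain ⟨A, B, C, hA, hε₂, conj⟩ := exists_quadratic_of_substMap_jump_eq nonempty hr hr₀ hr₁
  refine ⟨⟨A, B, C, hA, hε₂, conj⟩, ?_⟩
  obtain ⟨c_mem, l_mem⟩ :=
    mem_adjoin_of_cuts_subset (orbit.cuts_subset_adjoin hnd hk hr hr₀ hr₁ hkt)
  have sq_eq : ε ^ 2 = algebraMap ℚ ℝ (-B / A) * ε + algebraMap ℚ ℝ (-C / A) := by
    simp only [eq_ratCast]
    push_cast
    field_simp
    linarith
  obtain ⟨p₁, q₁, hc⟩ := exists_eq_add_mul_of_mem_adjoin sq_eq c_mem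
  obtain ⟨p₂, q₂, hl⟩ := exists_eq_add_mul_of_mem_adjoin sq_eq l_mem
  exact ⟨p₁, q₁, p₂, q₂, hc, hl⟩

theorem threeIet_subst_invariant_necessary (ε l c : ℝ) (u : ℤ → Fin 3)
    (hε : Irrational ε) (hεm : ε ∈ Set.Ioo (0 : ℝ) 1)
    (hl₁ : max ε (1 - ε) < l) (hl₂ : l < 1) (hc₁ : c ≤ 0) (hc₂ : 0 < c + l)
    (hnd : l ∉ Zbr ε) (hu : IsThreeIetWord ε l c u)
    (φ : Fin 3 → List (Fin 3)) (hne : ∀ a, φ a ≠ [])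
    (hprim : IsPrimitiveSubst φ) (hfix : IsFixedPointSubstZ φ u) :
    (∃ A B C : ℤ, A ≠ 0 ∧ (A : ℝ) * ε ^ 2 + (B : ℝ) * ε + (C : ℝ) = 0 ∧
        (-(B : ℝ) / (A : ℝ) - ε) ∉ Set.Ioo (0 : ℝ) 1) ∧
    (∃ p₁ q₁ p₂ q₂ : ℚ, c = (p₁ : ℝ) + (q₁ : ℝ) * ε ∧ l = (p₂ : ℝ) + (q₂ : ℝ) * ε) :=
  threeIet_subst_invariant_necessary_general ε l c u hε hl₁ hl₂ hnd hu φ hprim.ne_singleton hfix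
end
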